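/- arXiv:1602.06445 — 4 statements merged into one kernel-verified Lean document; each statement's English description precedes it below -/
import Mathlib

section
/- Let l ≥ 2 be an integer and let p_n/q_n (n ≥ 0) denote the convergents of the regular continued fraction expansion of e^{1/l}. Then ∑_{n=0}^∞ |q_n·e^{1/l} − p_n| = e^{1/l}·√(π/l)·erf(1/√l) = (2·e^{1/l}/√l)·∫_0^{1/√l} e^{−t²} dt. -/
open Real Filter

theorem es_stream (v : ℝ) (D : ℕ → ℝ) (hD0 : D 0 = 1) (hpos : ∀ n, 0 < D n)
    (h0 : ∃ a : ℤ, v = a + D 1)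
    (hrec : ∀ n, ∃ a : ℤ, 1 ≤ a ∧ D n = a * D (n+1) + D (n+2)) (n : ℕ) :
    ∃ b : ℤ, GenContFract.IntFractPair.stream v n = some ⟨b, D (n+1) / D n⟩ ∧
      ∀ m, n = m + 1 → D m = b * D (m+1) + D (m+2) := by
  have hlt : ∀ n, D (n+1) < D n := by
    intro n
    obtain ⟨a, ha, h⟩ := hrec n
    have h1 : (1:ℝ) ≤ a := by exact_mod_cast ha
    nlinarith [hpos (n+1), hpos (n+2)]
  induction n with
  | zero =>
    obtain ⟨a, ha⟩ := h0
    have h1 : D 1 < 1 := by simpa [hD0] using hlt 0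
    have h2 := hpos 1
    have hf : ⌊v⌋ = a := by
      rw [Int.floor_eq_iff]; constructor <;> linarith
    refine ⟨a, ?_, by simp⟩
    simp only [GenContFract.IntFractPair.stream, GenContFract.IntFractPair.of, hf, Int.fract, hD0]
    congr 2
    rw [ha]; simp
  | succ n ih =>
    obtain ⟨b, hb, -⟩ := ih
    obtain ⟨a, -, ha⟩ := hrec n
    have p0 := hpos n
    have p1 := hpos (n+1)
    have p2 := hpos (n+2)
    have e : (D (n+1) / D n)⁻¹ = a + D (n+2) / D (n+1) := by
      rw [inv_div, ha]; field_simp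
    have hlt1 : D (n+2) / D (n+1) < 1 := (div_lt_one p1).2 (hlt (n+1))
    have hp1 : 0 < D (n+2) / D (n+1) := by positivity
    have hf : ⌊(D (n+1) / D n)⁻¹⌋ = a := by
      rw [e, Int.floor_eq_iff]; constructor <;> linarith
    refine ⟨a, ?_, ?_⟩
    · rw [GenContFract.IntFractPair.stream_succ_of_some hb (by positivity)]
      simp only [GenContFract.IntFractPair.of, hf, Int.fract]
      congr 2
      rw [e]; ring
    · intro m hm
      obtain rfl : n = m := by omega
      exact ha

theorem es_err (v : ℝ) (D : ℕ → ℝ) (hD0 : D 0 = 1) (hpos : ∀ n, 0 < D n)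
    (h0 : ∃ a : ℤ, v = a + D 1)
    (hrec : ∀ n, ∃ a : ℤ, 1 ≤ a ∧ D n = a * D (n+1) + D (n+2)) (n : ℕ) :
    (GenContFract.of v).dens n * v - (GenContFract.of v).nums n = (-1)^n * D (n+1) := by
  have hs : ∀ n, ∃ b : ℤ, (GenContFract.of v).s.get? n = some ⟨1, b⟩ ∧
      D n = b * D (n+1) + D (n+2) := by
    intro n
    obtain ⟨b, hb, h⟩ := es_stream v D hD0 hpos h0 hrec (n+1)
    exact ⟨b, GenContFract.get?_of_eq_some_of_succ_get?_intFractPair_stream hb, h n rfl⟩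
  have hfl : v - (⌊v⌋ : ℝ) = D 1 := by
    obtain ⟨b, hb, -⟩ := es_stream v D hD0 hpos h0 hrec 0
    rw [GenContFract.IntFractPair.stream_zero, Option.some.injEq] at hb
    have := congrArg GenContFract.IntFractPair.fr hb
    rw [Int.self_sub_floor]
    simpa [GenContFract.IntFractPair.of, hD0] using this
  have key : ∀ n, (GenContFract.of v).dens n * v - (GenContFract.of v).nums n = (-1)^n * D (n+1) ∧
     (GenContFract.of v).dens (n+1) * v - (GenContFract.of v).nums (n+1) = (-1)^(n+1) * D (n+2) := by
    intro n
    induction n with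
    | zero =>
      obtain ⟨b, hb, h⟩ := hs 0
      constructor
      · simp [hfl]
      · rw [GenContFract.first_num_eq hb, GenContFract.first_den_eq hb]
        simp only [GenContFract.of_h_eq_floor]
        rw [hD0] at h
        simp only [zero_add] at h ⊢
        linear_combination -h + b * hfl
    | succ n ih =>
      obtain ⟨b, hb, h⟩ := hs (n+1)
      refine ⟨ih.2, ?_⟩
      rw [GenContFract.nums_recurrence hb rfl rfl, GenContFract.dens_recurrence hb rfl rfl]
      simp only
      linear_combination b * ih.2 + ih.1 + (-1)^n * h
  exact (key n).1

/-- The basic integral. -/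
noncomputable def esJ (l : ℕ) (i j : ℕ) : ℝ := ∫ x in (0:ℝ)..1, x^i * (1-x)^j * Real.exp (x / l)

/-- The normalizing constant. -/
noncomputable def esc (l n : ℕ) : ℝ := 1 / (n.factorial * (l:ℝ)^(n+1))

/-- The sequence of absolute errors. -/
noncomputable def esG (l k : ℕ) : ℝ :=
  if k % 3 = 0 then esc l (k/3) * esJ l (k/3) (k/3)
  else if k % 3 = 1 then esc l (k/3) * esJ l (k/3+1) (k/3)
  else esc l (k/3) * esJ l (k/3) (k/3+1)

theorem esG0 (l n : ℕ) : esG l (3*n) = esc l n * esJ l n n := by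
  have h1 : (3*n) % 3 = 0 := by omega
  have h2 : (3*n) / 3 = n := by omega
  simp [esG, h2]

theorem esG1 (l n : ℕ) : esG l (3*n+1) = esc l n * esJ l (n+1) n := by
  have h1 : (3*n+1) % 3 = 1 := by omega
  have h2 : (3*n+1) / 3 = n := by omega
  simp [esG, h1, h2]

theorem esG2 (l n : ℕ) : esG l (3*n+2) = esc l n * esJ l n (n+1) := by
  have h1 : (3*n+2) % 3 = 2 := by omega
  have h2 : (3*n+2) / 3 = n := by omega
  simp [esG, h1, h2]

theorem esc_pos (l n : ℕ) (hl : 2 ≤ l) : 0 < esc l n := by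
  unfold esc; positivity

theorem esJ_pos (l i j : ℕ) : 0 < esJ l i j := by
  unfold esJ
  apply intervalIntegral.intervalIntegral_pos_of_pos_on
  · apply Continuous.intervalIntegrable; fun_prop
  · intro x hx
    have h1 : 0 < x := hx.1
    have h2 : 0 < 1 - x := by linarith [hx.2]
    positivity
  · norm_num

theorem esG_pos (l k : ℕ) (hl : 2 ≤ l) : 0 < esG l k := by
  unfold esG
  split_ifs <;> exact mul_pos (esc_pos _ _ hl) (esJ_pos _ _ _)

theorem esJ_add (l i j : ℕ) : esJ l i j = esJ l (i+1) j + esJ l i (j+1) := by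
  unfold esJ
  rw [← intervalIntegral.integral_add]
  · congr 1; ext x; ring
  · apply Continuous.intervalIntegrable; fun_prop
  · apply Continuous.intervalIntegrable; fun_prop

/-- integration by parts -/
theorem esJ_parts (l i j : ℕ) :
    (i+1) * esJ l i (j+1) - (j+1) * esJ l (i+1) j + esJ l (i+1) (j+1) / l = 0 := by
  have hd : ∀ x : ℝ, HasDerivAt (fun x : ℝ => x^(i+1) * (1-x)^(j+1) * Real.exp (x / l))
      ((i+1) * (x^i * (1-x)^(j+1) * Real.exp (x / l)) - (j+1) * (x^(i+1) * (1-x)^j * Real.exp (x / l))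
        + (x^(i+1) * (1-x)^(j+1) * Real.exp (x / l)) / l) x := by
    intro x
    have h1 := hasDerivAt_pow (i+1) x
    have h2 := ((hasDerivAt_id x).const_sub 1).pow (j+1)
    have h3 := ((hasDerivAt_id x).div_const (l:ℝ)).exp
    refine HasDerivAt.congr_deriv (f := fun x : ℝ => x^(i+1) * (1-x)^(j+1) * Real.exp (x / l)) ((h1.mul h2).mul h3) ?_
    simp
    ring
  have := intervalIntegral.integral_eq_sub_of_hasDerivAt (a := 0) (b := 1) (fun x _ => hd x)
    (by apply Continuous.intervalIntegrable; fun_prop)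
  rw [intervalIntegral.integral_add, intervalIntegral.integral_sub,
    intervalIntegral.integral_const_mul, intervalIntegral.integral_const_mul,
    intervalIntegral.integral_div] at this
  · simpa [esJ] using this
  all_goals apply Continuous.intervalIntegrable; fun_prop

theorem esJ_parts0 (l : ℕ) : - esJ l 0 0 + esJ l 0 1 / l = -1 := by
  have hd : ∀ x : ℝ, HasDerivAt (fun x : ℝ => (1-x) * Real.exp (x / l))
      (- (x^0 * (1-x)^0 * Real.exp (x / l)) + (x^0 * (1-x)^1 * Real.exp (x / l)) / l) x := by
    intro x
    have h2 := ((hasDerivAt_id x).const_sub 1)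
    have h3 := ((hasDerivAt_id x).div_const (l:ℝ)).exp
    refine HasDerivAt.congr_deriv (f := fun x : ℝ => (1-x) * Real.exp (x / l)) (h2.mul h3) ?_
    simp
    ring
  have := intervalIntegral.integral_eq_sub_of_hasDerivAt (a := 0) (b := 1) (fun x _ => hd x)
    (by apply Continuous.intervalIntegrable; fun_prop)
  rw [intervalIntegral.integral_add, intervalIntegral.integral_neg,
    intervalIntegral.integral_div] at this
  · simpa [esJ] using this
  all_goals apply Continuous.intervalIntegrable; fun_prop

theorem esJ_00 (l : ℕ) (hl : 2 ≤ l) : esJ l 0 0 / l = Real.exp (1/l) - 1 := by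
  have hd : ∀ x : ℝ, HasDerivAt (fun x : ℝ => Real.exp (x / l))
      ((x^0 * (1-x)^0 * Real.exp (x / l)) / l) x := by
    intro x
    have h3 := ((hasDerivAt_id x).div_const (l:ℝ)).exp
    refine HasDerivAt.congr_deriv (f := fun x : ℝ => Real.exp (x / l)) h3 ?_
    simp
    ring
  have := intervalIntegral.integral_eq_sub_of_hasDerivAt (a := 0) (b := 1) (fun x _ => hd x)
    (by apply Continuous.intervalIntegrable; fun_prop)
  rw [intervalIntegral.integral_div] at this
  simpa [esJ] using this

theorem esc_succ (l n : ℕ) (hl : 2 ≤ l) : esc l n = (n+1) * l * esc l (n+1) := by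
  have : (l:ℝ) ≠ 0 := by positivity
  unfold esc
  rw [Nat.factorial_succ]
  push_cast
  field_simp
  ring

theorem esG_recA (l n : ℕ) : esG l (3*n) = esG l (3*n+1) + esG l (3*n+2) := by
  rw [esG0, esG1, esG2, esJ_add]; ring

theorem esG_recB (l n : ℕ) (hl : 2 ≤ l) : esG l (3*n+1) = esG l (3*n+2) + esG l (3*n+3) := by
  have h := esJ_parts l n n
  have hl0 : (l:ℝ) ≠ 0 := by positivity
  rw [show 3*n+3 = 3*(n+1) by ring, esG0, esG1, esG2, esc_succ l n hl]
  field_simp at h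
  linear_combination (-esc l (n+1)) * h

theorem esG_recC (l n : ℕ) (hl : 2 ≤ l) :
    esG l (3*n+2) = ((2*n+3)*l-1) * esG l (3*n+3) + esG l (3*n+4) := by
  have h := esJ_parts l n (n+1)
  have h1 := esJ_add l n (n+1)
  have h2 := esJ_add l (n+1) (n+1)
  have hl0 : (l:ℝ) ≠ 0 := by positivity
  rw [show 3*n+4 = 3*(n+1)+1 by ring, show 3*n+3 = 3*(n+1) by ring, esG0, esG1, esG2,
    esc_succ l n hl]
  push_cast at h
  field_simp at h
  linear_combination (esc l (n+1)) * (h + (n+1)*l*h1 + h2)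

/-- shifted sequence -/
noncomputable def esD (l : ℕ) : ℕ → ℝ
  | 0 => 1
  | k+1 => esG l k

theorem es_abs (l : ℕ) (hl : 2 ≤ l) (n : ℕ) :
    |(GenContFract.of (Real.exp (1/l))).dens n * Real.exp (1/l)
      - (GenContFract.of (Real.exp (1/l))).nums n| = esG l n := by
  have hl0 : (l:ℝ) ≠ 0 := by positivity
  have hG0 : esG l 0 = esJ l 0 0 / l := by
    have := esG0 l 0
    simp [esc] at this
    rw [this]; ring
  rw [es_err (Real.exp (1/l)) (esD l) rfl]
  · rw [abs_mul, abs_pow, abs_neg, abs_one, one_pow, one_mul]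
    exact abs_of_pos (esG_pos l n hl)
  · intro n
    cases n with
    | zero => simp [esD]
    | succ k => exact esG_pos l k hl
  · refine ⟨1, ?_⟩
    change _ = _ + esG l 0
    rw [hG0, esJ_00 l hl]; simp
  · intro n
    cases n with
    | zero =>
      refine ⟨l - 1, by omega, ?_⟩
      change 1 = _ * esG l 0 + esG l 1
      have h2 := esG_recA l 0
      have h3 := esG2 l 0
      have h4 := esJ_parts0 l
      simp [esc] at h2 h3
      rw [hG0] at *
      push_cast
      field_simp at *
      linarith
    | succ k =>
      change ∃ a : ℤ, 1 ≤ a ∧ esG l k = a * esG l (k+1) + esG l (k+2)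
      obtain ⟨m, hm⟩ : ∃ m, k = 3*m ∨ k = 3*m+1 ∨ k = 3*m+2 := ⟨k/3, by omega⟩
      rcases hm with rfl | rfl | rfl
      · exact ⟨1, le_rfl, by simpa using esG_recA l m⟩
      · exact ⟨1, le_rfl, by simpa using esG_recB l m hl⟩
      · refine ⟨(2*m+3)*l-1, ?_, by push_cast; exact esG_recC l m hl⟩
        have : (2:ℤ) ≤ l := by exact_mod_cast hl
        have : (0:ℤ) ≤ m := by positivity
        nlinarith

theorem es_hasSumA (l : ℕ) (hl : 2 ≤ l) :
    HasSum (fun n => esG l (3*n)) (∫ x in (0:ℝ)..1, Real.exp ((2*x-x^2)/l) / l) := by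
  have hl0 : (l:ℝ) ≠ 0 := by positivity
  have hl1 : (1:ℝ) ≤ l := by exact_mod_cast (by omega : 1 ≤ l)
  have e : ∀ n, esG l (3*n) =
      ∫ x in (0:ℝ)..1, (Real.exp (x/l) / l) * ((x*(1-x)/l)^n / n.factorial) := by
    intro n
    rw [esG0, esJ, ← intervalIntegral.integral_const_mul]
    congr 1; ext x
    unfold esc
    rw [div_pow, mul_pow]
    field_simp
    ring
  simp_rw [e]
  have hs : Summable fun n : ℕ => Real.exp 1 * ((1:ℝ)^n / n.factorial) :=
    (Real.summable_pow_div_factorial 1).mul_left _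
  apply intervalIntegral.hasSum_integral_of_dominated_convergence
    (fun n _ => Real.exp 1 * ((1:ℝ)^n / n.factorial))
  · intro n
    apply Continuous.aestronglyMeasurable
    fun_prop
  · intro n
    refine Eventually.of_forall fun x hx => ?_
    rw [Set.uIoc_of_le zero_le_one] at hx
    have h0 : 0 ≤ x := hx.1.le
    have h1 : 0 ≤ 1 - x := by linarith [hx.2]
    rw [Real.norm_of_nonneg (by positivity)]
    have h2 : Real.exp (x/l) / l ≤ Real.exp 1 := by
      refine (div_le_self (Real.exp_pos _).le hl1).trans (Real.exp_le_exp.2 ?_)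
      exact (div_le_self h0 hl1).trans hx.2
    have h3 : x*(1-x)/l ≤ 1 := by
      refine (div_le_self (by positivity) hl1).trans ?_
      nlinarith
    gcongr
  · exact Eventually.of_forall fun x hx => hs
  · simp
  · refine Eventually.of_forall fun x hx => ?_
    have := (NormedSpace.expSeries_div_hasSum_exp (x*(1-x)/l)).mul_left (Real.exp (x/l) / l)
    rw [← Real.exp_eq_exp_ℝ] at this
    refine (congrArg (HasSum _) ?_).mpr this
    rw [div_mul_eq_mul_div, ← Real.exp_add]
    congr 2
    ring

theorem es_int (l : ℕ) (hl : 2 ≤ l) :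
    2 * (∫ x in (0:ℝ)..1, Real.exp ((2*x-x^2)/l) / l) =
    (2 * Real.exp (1/l) / Real.sqrt l) * ∫ t in (0:ℝ)..(1 / Real.sqrt l), Real.exp (-t ^ 2) := by
  have hl0 : (0:ℝ) < l := by positivity
  have hs : (0:ℝ) < √l := by positivity
  have hsq : √(l:ℝ) ^ 2 = l := Real.sq_sqrt hl0.le
  have h1 : ∀ x : ℝ, Real.exp ((2*x-x^2)/l) / l =
      (Real.exp (1/l) / l) * (fun y => Real.exp (-(y/√l)^2)) (1 - x) := by
    intro x
    simp only
    rw [div_mul_eq_mul_div, ← Real.exp_add, div_pow, hsq]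
    congr 2
    field_simp
    ring
  simp_rw [h1]
  rw [intervalIntegral.integral_const_mul, intervalIntegral.integral_comp_sub_left
    (fun y => Real.exp (-(y/√l)^2)),
    intervalIntegral.integral_comp_div (fun y => Real.exp (-y^2)) hs.ne']
  simp only [sub_self, sub_zero, zero_div, smul_eq_mul]
  have : Real.exp (1/l) / l * √l = Real.exp (1/l) / √l := by
    nth_rewrite 2 [← hsq]
    field_simp
  linear_combination 2 * (∫ t in (0:ℝ)..(1 / Real.sqrt l), Real.exp (-t ^ 2)) * this

theorem es_hasSumG (l : ℕ) (hl : 2 ≤ l) (S : ℝ) (h : HasSum (fun n => esG l (3*n)) S) :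
    HasSum (esG l) (2 * S) := by
  rw [hasSum_iff_tendsto_nat_of_nonneg (fun k => (esG_pos l k hl).le)]
  have hm : Monotone fun n => ∑ i ∈ Finset.range n, esG l i := by
    refine monotone_nat_of_le_succ fun n => ?_
    rw [Finset.sum_range_succ]
    linarith [esG_pos l n hl]
  have ht : Tendsto (fun n : ℕ => 3 * n) atTop atTop :=
    tendsto_id.const_mul_atTop' (by norm_num)
  rw [tendsto_iff_tendsto_subseq_of_monotone hm ht]
  have e : (fun n => ∑ i ∈ Finset.range n, esG l i) ∘ (fun n : ℕ => 3 * n) =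
      fun n => 2 * ∑ i ∈ Finset.range n, esG l (3*i) := by
    ext n
    simp only [Function.comp]
    induction n with
    | zero => simp
    | succ n ih =>
      rw [show 3*(n+1) = 3*n+1+1+1 by ring, Finset.sum_range_succ, Finset.sum_range_succ,
        Finset.sum_range_succ, ih, Finset.sum_range_succ]
      linarith [esG_recA l n]
  rw [e]
  exact h.tendsto_sum_nat.const_mul 2

/-- **Error sum of `e^(1/l)` as an error-function integral.**
For an integer `l ≥ 2`, with `pₙ/qₙ` the convergents of the regular continued fraction
of `e^(1/l)`, the error sum `∑ₙ |qₙ e^(1/l) − pₙ|` equals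
`e^(1/l) √(π/l) erf(1/√l) = (2 e^(1/l)/√l) ∫_0^{1/√l} e^{-t²} dt`,
where `erf z = (2/√π) ∫_0^z e^{-t²} dt`. -/
theorem error_sum_exp_recip
    (l : ℕ) (hl : 2 ≤ l)
    (α : ℝ) (hα : α = Real.exp (1 / l))
    (p q : ℕ → ℝ)
    (hp : ∀ n, p n = (GenContFract.of α).nums n)
    (hq : ∀ n, q n = (GenContFract.of α).dens n)
    (erf : ℝ → ℝ)
    (herf : ∀ z : ℝ, erf z = (2 / Real.sqrt π) * ∫ t in (0:ℝ)..z, Real.exp (-t ^ 2)) :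
    (∑' n : ℕ, |q n * α - p n|)
        = α * Real.sqrt (π / l) * erf (1 / Real.sqrt l) ∧
    (∑' n : ℕ, |q n * α - p n|)
        = (2 * α / Real.sqrt l) * ∫ t in (0:ℝ)..(1 / Real.sqrt l), Real.exp (-t ^ 2) := by
  have h2 : (∑' n : ℕ, |q n * α - p n|)
        = (2 * α / Real.sqrt l) * ∫ t in (0:ℝ)..(1 / Real.sqrt l), Real.exp (-t ^ 2) := by
    subst hα
    simp_rw [hp, hq, es_abs l hl]
    rw [← es_int l hl]
    exact (es_hasSumG l hl _ (es_hasSumA l hl)).tsum_eq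
  refine ⟨?_, h2⟩
  rw [h2, herf, Real.sqrt_div pi_pos.le]
  have : √π ≠ 0 := by positivity
  have : √(l:ℝ) ≠ 0 := by positivity
  field_simp
end

section
/- For every real number z, one has z·e^{z²}·∫_0^z e^{−t²} dt = ∑_{k=0}^∞ z^{2k+2}/(3/2)_k = ∑_{k=0}^∞ 4^k · k! · z^{2k+2} / (2k+1)!, i.e. this function equals z²·₁F₁(1, 3/2; z²). -/
open Real

noncomputable def coefA (k : ℕ) : ℝ := (4 : ℝ) ^ k * (Nat.factorial k) / (Nat.factorial (2 * k + 1))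

lemma coefA_succ (k : ℕ) : coefA (k + 1) * (2 * k + 3) = coefA k * 2 := by
  unfold coefA
  have e : 2 * (k + 1) + 1 = (2 * k + 1) + 1 + 1 := by ring
  rw [e, Nat.factorial_succ (2 * k + 1 + 1), Nat.factorial_succ (2 * k + 1), Nat.factorial_succ k]
  have h : ((Nat.factorial (2 * k + 1) : ℕ) : ℝ) ≠ 0 := by positivity
  push_cast
  field_simp
  ring

lemma coefA_pos (k : ℕ) : 0 < coefA k := by
  unfold coefA; positivity

lemma coefA_le (k : ℕ) : coefA k ≤ 1 / (Nat.factorial k) := by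
  induction k with
  | zero => simp [coefA]
  | succ k ih =>
    have h := coefA_succ k
    have h1 : coefA (k + 1) = coefA k * (2 / (2 * k + 3)) := by
      field_simp; linarith
    rw [h1, Nat.factorial_succ]
    have h2 : (2 : ℝ) / (2 * k + 3) ≤ 1 / (k + 1) := by
      rw [div_le_div_iff₀ (by positivity) (by positivity)]; linarith
    calc coefA k * (2 / (2 * k + 3)) ≤ 1 / (Nat.factorial k) * (1 / (k + 1)) := by
          gcongr
      _ = _ := by push_cast; field_simp

lemma coefA_poch (k : ℕ) : (ascPochhammer ℝ k).eval (3 / 2 : ℝ) * coefA k = 1 := by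
  induction k with
  | zero => simp [coefA]
  | succ k ih =>
    rw [ascPochhammer_succ_eval]
    have h := coefA_succ k
    have e : coefA (k + 1) * (3 / 2 + k) = coefA k := by linarith
    calc _ = (ascPochhammer ℝ k).eval (3 / 2 : ℝ) * (coefA (k + 1) * (3 / 2 + k)) := by ring
      _ = 1 := by rw [e, ih]

lemma moment_step (z : ℝ) (n : ℕ) :
    (2 * n + 1) * (∫ t in (0:ℝ)..z, t ^ (2 * n) * Real.exp (-t ^ 2))
      - 2 * (∫ t in (0:ℝ)..z, t ^ (2 * (n + 1)) * Real.exp (-t ^ 2))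
      = z ^ (2 * n + 1) * Real.exp (-z ^ 2) := by
  have hd : ∀ x ∈ Set.uIcc 0 z, HasDerivAt (fun t : ℝ => t ^ (2 * n + 1) * Real.exp (-t ^ 2))
      ((2 * n + 1) * (x ^ (2 * n) * Real.exp (-x ^ 2))
        - 2 * (x ^ (2 * (n + 1)) * Real.exp (-x ^ 2))) x := by
    intro x _
    have h := (hasDerivAt_pow (2 * n + 1) x).mul ((hasDerivAt_pow 2 x).neg.exp)
    refine h.congr_deriv ?_
    simp
    ring
  have hc : ∀ m : ℕ, Continuous (fun t : ℝ => t ^ m * Real.exp (-t ^ 2)) := by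
    intro m; fun_prop
  have := intervalIntegral.integral_eq_sub_of_hasDerivAt hd
    (Continuous.intervalIntegrable (by fun_prop) _ _)
  rw [intervalIntegral.integral_sub (Continuous.intervalIntegrable (by fun_prop) _ _)
    (Continuous.intervalIntegrable (by fun_prop) _ _),
    intervalIntegral.integral_const_mul, intervalIntegral.integral_const_mul] at this
  rw [this]; simp

lemma partial_sum (z : ℝ) (n : ℕ) :
    (∑ k ∈ Finset.range (n + 1), coefA k * z ^ (2 * k + 1)) * Real.exp (-z ^ 2)
      = (∫ t in (0:ℝ)..z, Real.exp (-t ^ 2))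
        - 2 * coefA n * ∫ t in (0:ℝ)..z, t ^ (2 * (n + 1)) * Real.exp (-t ^ 2) := by
  induction n with
  | zero =>
    have := moment_step z 0
    simp [coefA] at this ⊢
    linarith
  | succ n ih =>
    rw [Finset.sum_range_succ, add_mul, ih]
    have := moment_step z (n + 1)
    have h := coefA_succ n
    rw [mul_assoc (coefA (n + 1)), ← this]
    push_cast
    generalize (∫ t in (0:ℝ)..z, t ^ (2 * (n + 1)) * Real.exp (-t ^ 2)) = J
    linear_combination J * h

lemma moment_bound (z : ℝ) (n : ℕ) :
    |∫ t in (0:ℝ)..z, t ^ (2 * (n + 1)) * Real.exp (-t ^ 2)| ≤ (z ^ 2) ^ (n + 1) * |z| := by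
  have := intervalIntegral.norm_integral_le_of_norm_le_const (a := 0) (b := z)
    (C := (z ^ 2) ^ (n + 1)) (f := fun t : ℝ => t ^ (2 * (n + 1)) * Real.exp (-t ^ 2)) ?_
  · simpa using this
  · intro x hx
    have hx1 : |x| ≤ |z| := by
      rcases Set.mem_uIoc.1 hx with h | h
      · rw [abs_of_pos h.1, abs_of_pos (h.1.trans_le h.2)]; exact h.2
      · rw [abs_of_nonpos h.2, abs_of_neg (h.1.trans_le h.2)]; linarith [h.1]
    have h2 : x ^ 2 ≤ z ^ 2 := sq_le_sq.2 hx1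
    have h3 : Real.exp (-x ^ 2) ≤ 1 := Real.exp_le_one_iff.2 (by nlinarith [sq_nonneg x])
    rw [Real.norm_eq_abs, pow_mul, abs_of_nonneg (by positivity)]
    calc (x ^ 2) ^ (n + 1) * Real.exp (-x ^ 2) ≤ (z ^ 2) ^ (n + 1) * 1 := by gcongr
      _ = _ := mul_one _

lemma summable_aux (z : ℝ) : Summable (fun k : ℕ => coefA k * (z ^ 2) ^ k) := by
  refine Summable.of_nonneg_of_le (fun k => ?_) (fun k => ?_) (Real.summable_pow_div_factorial (z ^ 2))
  · have := coefA_pos k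
    positivity
  · rw [div_eq_mul_one_div, mul_comm]
    have := coefA_le k
    gcongr

lemma hasSum_main (z : ℝ) : HasSum (fun k : ℕ => coefA k * z ^ (2 * k + 1))
    (Real.exp (z ^ 2) * ∫ t in (0:ℝ)..z, Real.exp (-t ^ 2)) := by
  have hs : Summable (fun k : ℕ => coefA k * z ^ (2 * k + 1)) := by
    refine ((summable_aux z).mul_right z).congr (fun k => ?_)
    rw [pow_succ z (2 * k), pow_mul]; ring
  rw [hs.hasSum_iff_tendsto_nat, ← Filter.tendsto_add_atTop_iff_nat 1]
  have hp : ∀ n : ℕ, ∑ k ∈ Finset.range (n + 1), coefA k * z ^ (2 * k + 1)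
      = Real.exp (z ^ 2) * ((∫ t in (0:ℝ)..z, Real.exp (-t ^ 2))
        - 2 * (coefA n * ∫ t in (0:ℝ)..z, t ^ (2 * (n + 1)) * Real.exp (-t ^ 2))) := by
    intro n
    rw [← mul_assoc 2, ← partial_sum, mul_comm, mul_assoc, ← Real.exp_add]
    simp
  simp_rw [hp]
  have h0 : Filter.Tendsto (fun n : ℕ => coefA n *
      ∫ t in (0:ℝ)..z, t ^ (2 * (n + 1)) * Real.exp (-t ^ 2)) Filter.atTop (nhds 0) := by
    have h1 := (summable_aux z).tendsto_atTop_zero.mul_const (z ^ 2 * |z|)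
    rw [zero_mul] at h1
    refine squeeze_zero_norm (fun n => ?_) h1
    rw [norm_mul, Real.norm_eq_abs, Real.norm_eq_abs, abs_of_pos (coefA_pos n)]
    have := mul_le_mul_of_nonneg_left (moment_bound z n) (coefA_pos n).le
    refine this.trans (le_of_eq ?_)
    ring
  have h2 := ((h0.const_mul 2).const_sub (∫ t in (0:ℝ)..z, Real.exp (-t ^ 2))).const_mul
    (Real.exp (z ^ 2))
  simpa using h2

/-- **A hypergeometric expansion of `z e^{z²} ∫_0^z e^{-t²} dt`.**
For every real `z`,
`z e^{z²} ∫_0^z e^{-t²} dt = ∑ₖ z^{2k+2}/(3/2)ₖ = ∑ₖ 4^k k! z^{2k+2}/(2k+1)!`,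
i.e. this function equals `z² ·₁F₁(1, 3/2; z²)`. -/
theorem mul_exp_sq_integral_eq_tsum (z : ℝ) :
    (z * Real.exp (z ^ 2) * ∫ t in (0:ℝ)..z, Real.exp (-t ^ 2))
        = ∑' k : ℕ, z ^ (2 * k + 2) / (ascPochhammer ℝ k).eval (3 / 2 : ℝ) ∧
    (z * Real.exp (z ^ 2) * ∫ t in (0:ℝ)..z, Real.exp (-t ^ 2))
        = ∑' k : ℕ, (4 : ℝ) ^ k * (Nat.factorial k) * z ^ (2 * k + 2)
            / (Nat.factorial (2 * k + 1)) := by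
  have h := (hasSum_main z).mul_left z
  rw [← mul_assoc] at h
  constructor
  · rw [← h.tsum_eq]
    congr 1
    ext k
    have hk := coefA_poch k
    have hne : (ascPochhammer ℝ k).eval (3 / 2 : ℝ) ≠ 0 := left_ne_zero_of_mul_eq_one hk
    rw [eq_div_iff hne]
    linear_combination z ^ (2 * k + 2) * hk
  · rw [← h.tsum_eq]
    congr 1
    ext k
    unfold coefA
    ring
end

section
/- For every integer l ≥ 2, the real number (2·e^{1/l}/√l)·∫_0^{1/√l} e^{−t²} dt is transcendental (over ℚ); moreover, the real number e·∫_0^1 e^{−t²} dt is transcendental. -/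
open Real

open Polynomial in
lemma noRat_coprime (p q : ℝ[X]) (hp : p ≠ 0) (hpq : IsCoprime p q) (m : ℕ) (hm : 0 < m) :
    2 * X * (p * derivative q - derivative p * q) - (2 * X - 1) * p * q + (m : ℝ[X]) * p ^ 2 ≠ 0 := by
  intro h
  have h1 : p ∣ (2 * X * derivative p) * q := by
    refine ⟨2 * X * derivative q - (2 * X - 1) * q + (m : ℝ[X]) * p, ?_⟩
    linear_combination -h
  have h2 : p ∣ 2 * X * derivative p := hpq.dvd_of_dvd_mul_right h1
  have h3 : p ∣ X * derivative p := by
    obtain ⟨r, hr⟩ := h2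
    refine ⟨C (1/2) * r, ?_⟩
    have : (C (1/2 : ℝ)) * 2 = (1 : ℝ[X]) := by
      rw [show (2 : ℝ[X]) = C 2 from rfl, ← C_mul]; norm_num
    linear_combination C (1/2) * hr - X * derivative p * this
  obtain ⟨r, hr⟩ := h3
  have hrdeg : r.natDegree = 0 := by
    by_cases hr0 : r = 0
    · simp [hr0]
    have e1 : (X * derivative p).natDegree ≤ p.natDegree := by
      by_cases hz : p.natDegree = 0
      · rw [Polynomial.natDegree_eq_zero] at hz
        obtain ⟨c, rfl⟩ := hz
        simp
      · refine (natDegree_mul_le).trans ?_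
        have := natDegree_derivative_lt hz
        rw [natDegree_X]; omega
    rw [hr, natDegree_mul hp hr0] at e1
    omega
  obtain ⟨c, rfl⟩ := Polynomial.natDegree_eq_zero.mp hrdeg
  have hco : ∀ i : ℕ, (i : ℝ) * p.coeff i = p.coeff i * c := by
    intro i
    have := congrArg (fun f => coeff f i) hr
    simp only [coeff_mul_C] at this
    rw [← this]
    cases i with
    | zero => simp
    | succ i => rw [coeff_X_mul, coeff_derivative]; push_cast; ring
  set a := p.natDegree with ha
  have hca : (a : ℝ) = c := by
    have := hco a
    have hl : p.coeff a ≠ 0 := by simpa [ha] using hp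
    rw [mul_comm] at this
    exact mul_left_cancel₀ hl this
  have hpX : p = C (p.coeff a) * X ^ a := by
    ext i
    rw [coeff_C_mul, coeff_X_pow]
    split_ifs with hi
    · simp [hi]
    · have := hco i
      rw [← hca, mul_comm] at this
      have h' : p.coeff i * ((i : ℝ) - a) = 0 := by linear_combination this
      rcases mul_eq_zero.mp h' with h' | h'
      · simp [h']
      · exact absurd (by exact_mod_cast sub_eq_zero.mp h') hi
  set γ := p.coeff a with hγ
  have hγ0 : γ ≠ 0 := by simpa [hγ, ha] using hp
  have hXd : X * derivative p = (a : ℝ[X]) * p := by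
    rw [hr, ← hca]; simp [mul_comm]
  have hE : 2 * X * derivative q - (2 * (a : ℝ[X])) * q - (2 * X - 1) * q + (m : ℝ[X]) * p = 0 := by
    apply mul_left_cancel₀ hp
    linear_combination h + 2 * q * hXd
  by_cases haz : a = 0
  · rw [haz] at hpX
    by_cases hq : q = 0
    · rw [hq] at hE
      simp at hE
      rcases hE with hE | hE
      · omega
      · exact hp hE
    · have := congrArg (fun f => coeff f (q.natDegree + 1)) hE
      rw [hpX, haz] at this
      simp only [sub_mul, mul_assoc, coeff_add, coeff_sub, one_mul, pow_zero, mul_one] at this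
      rw [show (2 : ℝ[X]) = C 2 from rfl, ← C_eq_natCast] at this
      simp only [coeff_C_mul, coeff_X_mul, coeff_derivative, ← C_eq_natCast, ← C_mul, coeff_C] at this
      simp [coeff_eq_zero_of_natDegree_lt] at this
      exact hq this
  · have h0 := congrArg (fun f => eval 0 f) hE
    rw [hpX] at h0
    simp [haz] at h0
    have hq0 : eval 0 q = 0 := by
      have h0' : eval 0 q * (1 - 2 * (a : ℝ)) = 0 := by linear_combination h0
      rcases mul_eq_zero.mp h0' with h' | h'
      · exact h'
      · exfalso
        have : (2 * (a : ℝ)) = 1 := by linarith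
        have : 2 * a = 1 := by exact_mod_cast this
        omega
    have hp0 : eval 0 p = 0 := by rw [hpX]; simp [haz]
    obtain ⟨u, v, huv⟩ := hpq
    have := congrArg (eval 0) huv
    simp [hq0, hp0] at this

open Polynomial in
lemma noRat (p q : ℝ[X]) (hp : p ≠ 0) (m : ℕ) (hm : 0 < m) :
    2 * X * (p * derivative q - derivative p * q) - (2 * X - 1) * p * q + (m : ℝ[X]) * p ^ 2 ≠ 0 := by
  classical
  have hg : EuclideanDomain.gcd p q ≠ 0 := fun h => hp (EuclideanDomain.gcd_eq_zero_iff.mp h).1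
  obtain ⟨p1, h1⟩ := EuclideanDomain.gcd_dvd_left p q
  obtain ⟨q1, h2⟩ := EuclideanDomain.gcd_dvd_right p q
  set g := EuclideanDomain.gcd p q with hgdef
  have hcop : IsCoprime p1 q1 := by
    refine ⟨EuclideanDomain.gcdA p q, EuclideanDomain.gcdB p q, ?_⟩
    have := EuclideanDomain.gcd_eq_gcd_ab p q
    rw [← hgdef] at this
    apply mul_left_cancel₀ hg
    linear_combination -this - EuclideanDomain.gcdA p q * h1 - EuclideanDomain.gcdB p q * h2
  have hp1 : p1 ≠ 0 := by rintro rfl; simp at h1; exact hp h1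
  have := noRat_coprime p1 q1 hp1 hcop m hm
  intro h
  apply this
  apply mul_left_cancel₀ (pow_ne_zero 2 hg)
  rw [h1, h2, derivative_mul, derivative_mul] at h
  linear_combination h

open Polynomial in
/-- The derivation on sequences of coefficients. -/
noncomputable def Dop {A : Type} [CommRing A] (P : ℕ → A[X]) (k : ℕ) : A[X] :=
  2 * X * derivative (P k) + (k : A[X]) * (2 * X - 1) * P k + ((k : A[X]) + 1) * P (k + 1)

open Polynomial in
lemma Dop_zero_of {A : Type} [CommRing A] (P : ℕ → A[X]) (d : ℕ) (h : ∀ k, d < k → P k = 0) (s : ℕ) :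
    ∀ k, d < k → Dop^[s] P k = 0 := by
  induction s with
  | zero => simpa using h
  | succ s ih =>
    intro k hk
    rw [Function.iterate_succ_apply', Dop, ih k hk, ih (k+1) (by omega)]
    simp

open Polynomial in
lemma Dop_smul {A : Type} [CommRing A] (c : A[X]) (P : ℕ → A[X]) :
    Dop (c • P) = (2 * X * derivative c) • P + c • Dop P := by
  funext k
  simp only [Dop, Pi.smul_apply, Pi.add_apply, smul_eq_mul, derivative_mul]
  ring

open Polynomial in
lemma Dop_add {A : Type} [CommRing A] (P Q : ℕ → A[X]) :
    Dop (P + Q) = Dop P + Dop Q := by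
  funext k
  simp only [Dop, Pi.add_apply, derivative_add]
  ring

open Polynomial in
lemma Dop_mem (P : ℕ → ℝ[X]) (j : ℕ) (T : ℕ → ℝ[X])
    (h : T ∈ Submodule.span ℝ[X] (Set.image (fun s => Dop^[s] P) (Set.Iic j))) :
    Dop T ∈ Submodule.span ℝ[X] (Set.image (fun s => Dop^[s] P) (Set.Iic (j+1))) := by
  have mono : Submodule.span ℝ[X] (Set.image (fun s => Dop^[s] P) (Set.Iic j)) ≤
      Submodule.span ℝ[X] (Set.image (fun s => Dop^[s] P) (Set.Iic (j+1))) :=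
    Submodule.span_mono (Set.image_mono (Set.Iic_subset_Iic.mpr (by omega)))
  induction h using Submodule.span_induction with
  | mem x hx =>
    obtain ⟨s, hs, rfl⟩ := hx
    apply Submodule.subset_span
    refine ⟨s+1, by simpa using hs, ?_⟩
    simp only [Function.iterate_succ_apply']
  | zero =>
    have : Dop (0 : ℕ → ℝ[X]) = 0 := by funext k; simp [Dop]
    rw [this]; exact Submodule.zero_mem _
  | add x y _ _ hx hy => rw [Dop_add]; exact Submodule.add_mem _ hx hy
  | smul c x hx' hx =>
    rw [Dop_smul]
    exact Submodule.add_mem _ (Submodule.smul_mem _ _ (mono hx')) (Submodule.smul_mem _ _ hx)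

open Polynomial in
lemma triang (P : ℕ → ℝ[X]) (m : ℕ) (hP : ∀ k, m < k → P k = 0) (hm : P m ≠ 0) (j : ℕ) (hj : j ≤ m) :
    ∃ T ∈ Submodule.span ℝ[X] (Set.image (fun s => Dop^[s] P) (Set.Iic j)),
      (∀ k, m - j < k → T k = 0) ∧ T (m - j) ≠ 0 := by
  induction j with
  | zero =>
    refine ⟨P, Submodule.subset_span ⟨0, by simp, rfl⟩, by simpa using hP, by simpa using hm⟩
  | succ j ih =>
    obtain ⟨T, hT, h1, h2⟩ := ih (by omega)
    obtain ⟨μ, hμ⟩ : ∃ μ, m - j = μ + 1 := ⟨m - j - 1, by omega⟩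
    have hμ' : m - (j+1) = μ := by omega
    rw [hμ] at h1 h2
    rw [hμ']
    have mono : Submodule.span ℝ[X] (Set.image (fun s => Dop^[s] P) (Set.Iic j)) ≤
      Submodule.span ℝ[X] (Set.image (fun s => Dop^[s] P) (Set.Iic (j+1))) :=
      Submodule.span_mono (Set.image_mono (Set.Iic_subset_Iic.mpr (by omega)))
    refine ⟨(T (μ+1)) • Dop T - (2 * X * derivative (T (μ+1)) +
      ((μ + 1 : ℕ) : ℝ[X]) * (2 * X - 1) * T (μ+1)) • T,
      Submodule.sub_mem _ (Submodule.smul_mem _ _ (Dop_mem _ _ _ hT))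
        (Submodule.smul_mem _ _ (mono hT)), ?_, ?_⟩
    · intro k hk
      rcases Nat.lt_or_ge (μ+1) k with hk' | hk'
      · simp [Dop, h1 k hk', h1 (k+1) (by omega)]
      · obtain rfl : k = μ + 1 := by omega
        simp only [Dop, Pi.sub_apply, Pi.smul_apply, smul_eq_mul, h1 (μ+1+1) (by omega)]
        ring
    · have := noRat (T (μ+1)) (T μ) h2 (μ+1) (by omega)
      intro h
      apply this
      rw [← h]
      simp only [Dop, Pi.sub_apply, Pi.smul_apply, smul_eq_mul]
      push_cast
      ring

open Polynomial in
noncomputable def Mmat (P : ℕ → ℝ[X]) (m : ℕ) : Matrix (Fin (m+1)) (Fin (m+1)) ℝ[X] :=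
  Matrix.of fun i j => Dop^[(i : ℕ)] P (j : ℕ)

open Polynomial in
lemma Mmat_det_ne_zero (P : ℕ → ℝ[X]) (m : ℕ) (hP : ∀ k, m < k → P k = 0) (hm : P m ≠ 0) :
    (Mmat P m).det ≠ 0 := by
  intro hdet
  obtain ⟨v, hv0, hv⟩ := Matrix.exists_mulVec_eq_zero_iff.mpr hdet
  have key : ∀ T ∈ Submodule.span ℝ[X] (Set.image (fun s => Dop^[s] P) (Set.Iic m)),
      ∑ i : Fin (m+1), T (i : ℕ) * v i = 0 := by
    intro T hT
    induction hT using Submodule.span_induction with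
    | mem x hx =>
      obtain ⟨s, hs, rfl⟩ := hx
      have := congrFun hv ⟨s, Nat.lt_succ_of_le hs⟩
      simpa [Matrix.mulVec, dotProduct, Mmat] using this
    | zero => simp
    | add x y _ _ hx hy => simp [add_mul, Finset.sum_add_distrib, hx, hy]
    | smul c x _ hx =>
      simp only [Pi.smul_apply, smul_eq_mul, mul_assoc]
      rw [← Finset.mul_sum, hx, mul_zero]
  apply hv0
  have : ∀ n : ℕ, ∀ h : n < m + 1, v ⟨n, h⟩ = 0 := by
    intro n
    induction n using Nat.strong_induction_on with
    | _ n ih =>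
      intro h
      obtain ⟨T, hT, h1, h2⟩ := triang P m hP hm (m - n) (by omega)
      have hn : m - (m - n) = n := by omega
      rw [hn] at h1 h2
      have mono : Submodule.span ℝ[X] (Set.image (fun s => Dop^[s] P) (Set.Iic (m-n))) ≤
        Submodule.span ℝ[X] (Set.image (fun s => Dop^[s] P) (Set.Iic m)) :=
        Submodule.span_mono (Set.image_mono (Set.Iic_subset_Iic.mpr (by omega)))
      have := key T (mono hT)
      rw [Finset.sum_eq_single ⟨n, h⟩] at this
      · exact (mul_eq_zero.mp this).resolve_left h2
      · intro b _ hb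
        rcases Nat.lt_trichotomy (b : ℕ) n with hlt | heq | hgt
        · have := ih b hlt b.2
          rw [show v b = 0 from this, mul_zero]
        · exact absurd (Fin.ext heq) hb
        · rw [h1 _ hgt, zero_mul]
      · simp
  funext i
  exact this i i.2


/-- Substitution `z ↦ c + w` into power series. -/
noncomputable def iot (c : ℝ) : Polynomial ℝ →ₐ[ℝ] PowerSeries ℝ :=
  Polynomial.aeval (PowerSeries.C c + PowerSeries.X)

noncomputable def tht (c : ℝ) (F : PowerSeries ℝ) : PowerSeries ℝ :=
  2 * (PowerSeries.C c + PowerSeries.X) * PowerSeries.derivative ℝ F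

lemma tht_iot (c : ℝ) (p : Polynomial ℝ) :
    tht c (iot c p) = iot c (2 * Polynomial.X * Polynomial.derivative p) := by
  unfold tht iot
  rw [Derivation.map_aeval]
  rw [map_mul, map_mul, map_ofNat, Polynomial.aeval_X]
  simp [PowerSeries.derivative_X, PowerSeries.derivative_C]

lemma tht_add (c : ℝ) (F G : PowerSeries ℝ) : tht c (F + G) = tht c F + tht c G := by
  simp [tht, mul_add]

lemma tht_sum (c : ℝ) {ι : Type} (s : Finset ι) (F : ι → PowerSeries ℝ) :
    tht c (∑ i ∈ s, F i) = ∑ i ∈ s, tht c (F i) := by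
  simp [tht, Finset.mul_sum]

lemma tht_mul (c : ℝ) (F G : PowerSeries ℝ) : tht c (F * G) = tht c F * G + F * tht c G := by
  simp only [tht, Derivation.leibniz, smul_eq_mul]; ring

lemma tht_pow (c : ℝ) (F : PowerSeries ℝ) (k : ℕ) :
    tht c (F ^ k) = (k : PowerSeries ℝ) * F ^ (k - 1) * tht c F := by
  simp only [tht, Derivation.leibniz_pow, smul_eq_mul, nsmul_eq_mul]; ring

noncomputable def Ssum (c : ℝ) (φ : PowerSeries ℝ) (d : ℕ) (P : ℕ → Polynomial ℝ) : PowerSeries ℝ :=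
  ∑ k ∈ Finset.range (d+1), iot c (P k) * φ ^ k

def IsSol (c : ℝ) (φ : PowerSeries ℝ) : Prop :=
  tht c φ = (2 * (PowerSeries.C c + PowerSeries.X) - 1) * φ + 1

lemma tht_Ssum (c : ℝ) (φ : PowerSeries ℝ) (hφ : IsSol c φ) (d : ℕ) (P : ℕ → Polynomial ℝ)
    (hP : P (d+1) = 0) : tht c (Ssum c φ d P) = Ssum c φ d (Dop P) := by
  unfold Ssum
  rw [tht_sum]
  have h1 : ∀ k ∈ Finset.range (d+1), tht c (iot c (P k) * φ ^ k) =
      iot c (2 * Polynomial.X * Polynomial.derivative (P k) + (k : Polynomial ℝ) * (2 * Polynomial.X - 1) * P k) * φ ^ k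
      + (k : PowerSeries ℝ) * iot c (P k) * φ ^ (k-1) := by
    intro k _
    rw [tht_mul, tht_iot, tht_pow, hφ]
    have hX : iot c Polynomial.X = PowerSeries.C c + PowerSeries.X := by simp [iot]
    have hk : iot c (k : Polynomial ℝ) = (k : PowerSeries ℝ) := by simp
    rw [map_add, map_mul (iot c) (_ * _) (P k), map_mul (iot c) (k : Polynomial ℝ), map_sub, map_mul (iot c) 2 Polynomial.X, hX, hk, map_one, map_ofNat]
    cases k with
    | zero => simp
    | succ k => simp only [Nat.add_sub_cancel]; ring
  rw [Finset.sum_congr rfl h1, Finset.sum_add_distrib]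
  have h2 : ∑ k ∈ Finset.range (d+1), (k : PowerSeries ℝ) * iot c (P k) * φ ^ (k-1) =
      ∑ k ∈ Finset.range (d+1), iot c (((k : Polynomial ℝ) + 1) * P (k+1)) * φ ^ k := by
    rw [Finset.sum_range_succ', Finset.sum_range_succ, hP]
    simp
  rw [h2, ← Finset.sum_add_distrib]
  refine Finset.sum_congr rfl fun k _ => ?_
  rw [Dop, map_add _ (_ + _) (_ * P (k+1))]
  ring

lemma tht_iter_Ssum (c : ℝ) (φ : PowerSeries ℝ) (hφ : IsSol c φ) (d : ℕ) (P : ℕ → Polynomial ℝ)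
    (hP : ∀ k, d < k → P k = 0) (s : ℕ) : (tht c)^[s] (Ssum c φ d P) = Ssum c φ d (Dop^[s] P) := by
  induction s with
  | zero => rfl
  | succ s ih =>
    rw [Function.iterate_succ_apply', ih, tht_Ssum c φ hφ d _ (Dop_zero_of P d hP s _ (by omega)),
      Function.iterate_succ_apply']

open PowerSeries in
lemma X_dvd_tht (c : ℝ) (F : PowerSeries ℝ) (s : ℕ) (h : X ^ (s+1) ∣ F) : X ^ s ∣ tht c F := by
  obtain ⟨G, rfl⟩ := h
  rw [tht_mul]
  refine dvd_add ?_ ?_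
  · rw [tht_pow]
    simp only [Nat.add_sub_cancel]
    refine Dvd.dvd.mul_right (Dvd.dvd.mul_right (Dvd.dvd.mul_left dvd_rfl _) _) _
  · exact Dvd.dvd.mul_right (pow_dvd_pow _ (by omega)) _

open PowerSeries in
lemma X_dvd_tht_iter (c : ℝ) (s i : ℕ) (F : PowerSeries ℝ) (h : X ^ (s+i) ∣ F) :
    X ^ s ∣ (tht c)^[i] F := by
  induction i generalizing s with
  | zero => simpa using h
  | succ i ih =>
    rw [Function.iterate_succ_apply']
    exact X_dvd_tht _ _ _ (ih (s+1) (by convert h using 2; omega))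

open PowerSeries in
lemma X_dvd_tht_zero (F : PowerSeries ℝ) (s : ℕ) (h : X ^ s ∣ F) : X ^ s ∣ tht 0 F := by
  cases s with
  | zero => simp
  | succ s =>
  obtain ⟨G, rfl⟩ := h
  rw [tht_mul]
  refine dvd_add ?_ ?_
  · rw [tht_pow]
    refine Dvd.dvd.mul_right ?_ _
    simp only [Nat.add_sub_cancel, tht, derivative_X, map_zero, zero_add, mul_one]
    exact ⟨(↑(s+1)) * 2, by ring⟩
  · exact Dvd.dvd.mul_right dvd_rfl _

open PowerSeries in
lemma X_dvd_tht_zero_iter (F : PowerSeries ℝ) (s : ℕ) (h : X ^ s ∣ F) (i : ℕ) :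
    X ^ s ∣ (tht 0)^[i] F := by
  induction i with
  | zero => simpa using h
  | succ i ih => rw [Function.iterate_succ_apply']; exact X_dvd_tht_zero _ _ ih

open PowerSeries in
lemma const_tht_iter (c : ℝ) (s : ℕ) (G : PowerSeries ℝ) :
    constantCoeff ((tht c)^[s] (X ^ s * G)) = (2 * c) ^ s * s.factorial * constantCoeff G := by
  induction s generalizing G with
  | zero => simp
  | succ s ih =>
    rw [Function.iterate_succ_apply]
    have : tht c (X ^ (s+1) * G) = X ^ s * (2 * (C c + X) * (((s + 1 : ℕ) : PowerSeries ℝ) * G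
        + X * PowerSeries.derivative ℝ G)) := by
      simp only [tht, Derivation.leibniz, smul_eq_mul, Derivation.leibniz_pow, derivative_X,
        Nat.add_sub_cancel, nsmul_eq_mul]
      ring
    rw [this, ih]
    have c2 : constantCoeff (2 : PowerSeries ℝ) = 2 := map_ofNat _ 2
    simp [c2, Nat.factorial_succ]
    ring

open PowerSeries in
lemma X_dvd_of_const (c : ℝ) (hc : c ≠ 0) (F : PowerSeries ℝ) (t : ℕ)
    (h : ∀ s < t, constantCoeff ((tht c)^[s] F) = 0) : X ^ t ∣ F := by
  induction t with
  | zero => simp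
  | succ t ih =>
    obtain ⟨G, rfl⟩ := ih fun s hs => h s (by omega)
    have := h t (by omega)
    rw [const_tht_iter] at this
    have h0 : constantCoeff G = 0 := by
      refine (mul_eq_zero.mp this).resolve_left ?_
      exact mul_ne_zero (pow_ne_zero _ (by simpa using hc)) (by exact_mod_cast t.factorial_ne_zero)
    rw [pow_succ]
    exact mul_dvd_mul dvd_rfl (X_dvd_iff.mpr h0)

open Polynomial in
lemma dvd_of_iot (c : ℝ) (p : ℝ[X]) (a : ℕ) (h : PowerSeries.X ^ a ∣ iot c p) :
    (X - C c) ^ a ∣ p := by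
  have e : iot c p = ((p.comp (X + C c) : ℝ[X]) : PowerSeries ℝ) := by
    have : (Polynomial.coeToPowerSeries.algHom ℝ).comp (Polynomial.aeval (X + C c)) = iot c := by
      apply Polynomial.algHom_ext
      simp [iot, add_comm]
    rw [← this]
    simp [Polynomial.comp, Polynomial.aeval_def]
  rw [e] at h
  have h2 : X ^ a ∣ p.comp (X + C c) := by
    rw [Polynomial.X_pow_dvd_iff]
    rw [PowerSeries.X_pow_dvd_iff] at h
    intro i hi
    simpa using h i hi
  obtain ⟨q, hq⟩ := h2
  refine ⟨q.comp (X - C c), ?_⟩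
  have := congrArg (fun f => f.comp (X - C c)) hq
  simp only [mul_comp, pow_comp, X_comp] at this
  rw [← this, comp_assoc]
  simp

open Polynomial in
lemma dvd_det (c : ℝ) (φ : PowerSeries ℝ) (P : ℕ → ℝ[X]) (m a : ℕ)
    (h : ∀ i ≤ m, PowerSeries.X ^ a ∣ Ssum c φ m (Dop^[i] P)) :
    (X - C c) ^ a ∣ (Mmat P m).det := by
  apply dvd_of_iot
  set M := (Mmat P m).map (iot c) with hM
  have h1 : iot c (Mmat P m).det = M.det := by
    rw [AlgHom.map_det]; rfl
  rw [h1]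
  set v : Fin (m+1) → PowerSeries ℝ := fun j => φ ^ (j : ℕ) with hv
  have h2 : ∀ i, (M.mulVec v) i = Ssum c φ m (Dop^[(i : ℕ)] P) := by
    intro i
    simp only [Matrix.mulVec, dotProduct, Ssum, hM, hv, Mmat, Matrix.map_apply, Matrix.of_apply]
    rw [Finset.sum_range (fun k => iot c (Dop^[(i:ℕ)] P k) * φ ^ k)]
  have h3 : M.adjugate.mulVec (M.mulVec v) = M.det • v := by
    rw [Matrix.mulVec_mulVec, Matrix.adjugate_mul, Matrix.smul_mulVec, Matrix.one_mulVec]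
  have h4 := congrFun h3 0
  have h5 : (M.det • v) 0 = M.det := by simp [hv]
  rw [← h5, ← h4]
  simp only [Matrix.mulVec, dotProduct] at h2 ⊢
  refine Finset.dvd_sum fun i _ => ?_
  apply Dvd.dvd.mul_left
  rw [h2]
  exact h i (by omega)

open Polynomial in
lemma Dop_natDegree {A : Type} [CommRing A] (P : ℕ → A[X]) (n : ℕ) (h : ∀ k, (P k).natDegree ≤ n) (s : ℕ) :
    ∀ k, (Dop^[s] P k).natDegree ≤ n + s := by
  induction s with
  | zero => simpa using h
  | succ s ih =>
    intro k
    rw [Function.iterate_succ_apply', Dop]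
    have h2X : (2 * X : A[X]).natDegree ≤ 1 := by
      rw [show (2 : A[X]) = C 2 from rfl]; exact (natDegree_C_mul_le 2 X).trans natDegree_X_le
    have hk : ((k : A[X])).natDegree = 0 := natDegree_natCast k
    refine natDegree_add_le_of_degree_le (natDegree_add_le_of_degree_le ?_ ?_) ?_
    · refine natDegree_mul_le.trans ?_
      have := natDegree_derivative_le (Dop^[s] P k)
      have := ih k
      omega
    · refine natDegree_mul_le.trans ?_
      have h1 : ((k : A[X]) * (2 * X - 1)).natDegree ≤ 1 := by
        refine natDegree_mul_le.trans ?_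
        have : (2 * X - 1 : A[X]).natDegree ≤ 1 := by
          refine (natDegree_sub_le _ _).trans ?_
          simpa using h2X
        omega
      have := ih k
      omega
    · refine natDegree_mul_le.trans ?_
      have : ((k : A[X]) + 1).natDegree = 0 := by exact_mod_cast natDegree_natCast (k+1)
      have := ih (k+1)
      omega

open Polynomial in
lemma det_natDegree (P : ℕ → ℝ[X]) (m n : ℕ) (h : ∀ k, (P k).natDegree ≤ n) :
    (Mmat P m).det.natDegree ≤ (m+1) * (n + m) := by
  rw [Matrix.det_apply]
  refine natDegree_sum_le_of_forall_le _ _ fun σ _ => ?_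
  refine (natDegree_smul_le _ _).trans ?_
  refine (natDegree_prod_le _ _).trans ?_
  calc ∑ i, (Mmat P m (σ i) i).natDegree ≤ ∑ i : Fin (m+1), (n + m) := by
        refine Finset.sum_le_sum fun i _ => ?_
        refine (Dop_natDegree P n h _ _).trans ?_
        have := (σ i).2
        omega
    _ = (m+1) * (n+m) := by simp

noncomputable def solc (c ξ : ℝ) : ℕ → ℝ
  | 0 => ξ
  | 1 => ((2 * c - 1) * ξ + 1) / (2 * c)
  | (n+2) => ((2 * c - 1 - 2 * (n+1)) * solc c ξ (n+1) + 2 * solc c ξ n) / (2 * c * (n + 2))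

lemma solc_rec (c ξ : ℝ) (n : ℕ) : solc c ξ (n+2) =
    ((2 * c - 1 - 2 * (n+1)) * solc c ξ (n+1) + 2 * solc c ξ n) / (2 * c * (n + 2)) := by
  rw [solc]

open PowerSeries in
lemma exists_sol (c ξ : ℝ) (hc : c ≠ 0) : ∃ φ, IsSol c φ ∧ constantCoeff φ = ξ := by
  refine ⟨PowerSeries.mk (solc c ξ), ?_, ?_⟩
  · unfold IsSol tht
    have e1 : 2 * (C c + X) * PowerSeries.derivative ℝ (PowerSeries.mk (solc c ξ)) =
      C (2 * c) * PowerSeries.derivative ℝ (PowerSeries.mk (solc c ξ)) + C 2 * (X * PowerSeries.derivative ℝ (PowerSeries.mk (solc c ξ))) := by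
      rw [map_mul, show (C (2:ℝ)) = 2 from rfl]; ring
    have e2 : (2 * (C c + X) - 1) * PowerSeries.mk (solc c ξ) + 1 =
      C (2 * c - 1) * PowerSeries.mk (solc c ξ) + C 2 * (X * PowerSeries.mk (solc c ξ)) + 1 := by
      rw [map_sub, map_mul, show (C (2:ℝ)) = 2 from rfl, map_one]; ring
    rw [e1, e2]
    ext n
    match n with
    | 0 =>
      simp only [map_add, coeff_C_mul, coeff_derivative, coeff_mk, coeff_one, coeff_zero_X_mul]
      simp [solc]; field_simp
    | 1 =>
      simp only [map_add, coeff_C_mul, coeff_derivative, coeff_mk, coeff_one, coeff_succ_X_mul]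
      have : solc c ξ 2 = ((2 * c - 1 - 2 * ((0:ℕ)+1)) * solc c ξ (0+1) + 2 * solc c ξ 0) / (2 * c * ((0:ℕ) + 2)) := by
        exact solc_rec c ξ 0
      norm_num [this]
      simp [solc]
      field_simp
      ring
    | (n+2) =>
      simp only [map_add, coeff_C_mul, coeff_derivative, coeff_mk, coeff_one, coeff_succ_X_mul]
      have : solc c ξ (n+2+1) = ((2 * c - 1 - 2 * ((n+1:ℕ)+1)) * solc c ξ (n+1+1) + 2 * solc c ξ (n+1)) / (2 * c * ((n+1:ℕ) + 2)) := by
        exact solc_rec c ξ (n+1)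
      rw [this]
      have : (n : ℝ) + 3 ≠ 0 := by positivity
      push_cast
      simp
      field_simp
      ring
  · simp [← coeff_zero_eq_constantCoeff_apply, solc]

open Polynomial in
lemma Ssum_ext (c : ℝ) (φ : PowerSeries ℝ) (m d : ℕ) (hmd : m ≤ d) (P : ℕ → ℝ[X])
    (hP : ∀ k, m < k → P k = 0) : Ssum c φ d P = Ssum c φ m P := by
  unfold Ssum
  symm
  apply Finset.sum_subset
  · intro x; simp; omega
  · intro x _ hx
    rw [hP x (by simpa using hx)]; simp

open Polynomial in
theorem zero_estimate (α ξ : ℝ) (hα : α ≠ 0) (f : PowerSeries ℝ) (hf : IsSol 0 f)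
    (P : ℕ → ℝ[X]) (d n E t : ℕ) (hd : ∀ k, d < k → P k = 0) (hne : P ≠ 0)
    (hn : ∀ k, (P k).natDegree ≤ n)
    (h0 : PowerSeries.X ^ E ∣ Ssum 0 f d P)
    (h1 : ∀ s < t, ∑ k ∈ Finset.range (d+1), (Dop^[s] P k).eval α * ξ ^ k = 0) :
    E + t ≤ (d+1) * (n + d) + d := by
  classical
  -- exact degree
  obtain ⟨m, hmd, hm0, hm⟩ : ∃ m ≤ d, P m ≠ 0 ∧ ∀ k, m < k → P k = 0 := by
    have hex : ∃ k, P k ≠ 0 := by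
      by_contra hcon; push Not at hcon; exact hne (funext hcon)
    obtain ⟨k0, hk0⟩ := hex
    have hk0d : k0 ≤ d := by by_contra hh; exact hk0 (hd k0 (by omega))
    refine ⟨Nat.findGreatest (fun k => P k ≠ 0) d, Nat.findGreatest_le d, ?_, ?_⟩
    · exact Nat.findGreatest_spec (P := fun k => P k ≠ 0) hk0d hk0
    · intro k hk
      by_cases hkd : k ≤ d
      · have := Nat.findGreatest_is_greatest hk hkd
        simpa using this
      · exact hd k (by omega)
  obtain ⟨φ, hφ, hφ0⟩ := exists_sol α ξ hα
  have hDm := fun s => Dop_zero_of P m hm s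
  have A0 : (X - C 0) ^ E ∣ (Mmat P m).det := by
    apply dvd_det 0 f
    intro i _
    rw [← tht_iter_Ssum 0 f hf m P hm, ← Ssum_ext 0 f m d hmd P hm]
    exact X_dvd_tht_zero_iter _ _ h0 i
  have A1 : PowerSeries.X ^ t ∣ Ssum α φ m P := by
    apply X_dvd_of_const α hα
    intro s hs
    rw [tht_iter_Ssum α φ hφ m P hm, ← Ssum_ext α φ m d hmd _ (hDm s), ← h1 s hs, Ssum, map_sum]
    refine Finset.sum_congr rfl fun k _ => ?_
    rw [map_mul, map_pow, hφ0]
    congr 1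
    rw [iot, ← Polynomial.coe_aeval_eq_eval]
    have : ((PowerSeries.constantCoeff (R := ℝ)) (Polynomial.aeval (PowerSeries.C α + PowerSeries.X) (Dop^[s] P k))) =
      Polynomial.eval (PowerSeries.constantCoeff (PowerSeries.C α + PowerSeries.X)) (Dop^[s] P k) := by
      rw [Polynomial.aeval_def, Polynomial.hom_eval₂, Polynomial.eval, ]
      congr 1
    rw [this]; simp
  have A2 : (X - C α) ^ (t - m) ∣ (Mmat P m).det := by
    by_cases htm : t ≤ m
    · rw [Nat.sub_eq_zero_of_le htm]; simp
    apply dvd_det α φ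
    intro i hi
    rw [← tht_iter_Ssum α φ hφ m P hm]
    apply X_dvd_tht_iter
    exact (pow_dvd_pow _ (by omega)).trans A1
  have hcop : IsCoprime ((X - C 0 : ℝ[X]) ^ E) ((X - C α) ^ (t - m)) := by
    apply IsCoprime.pow
    exact Polynomial.isCoprime_X_sub_C_of_isUnit_sub (by simpa using hα)
  have hdvd := hcop.mul_dvd A0 A2
  have hdet := Mmat_det_ne_zero P m hm hm0
  have := natDegree_le_of_dvd hdvd hdet
  rw [natDegree_mul (pow_ne_zero _ (X_sub_C_ne_zero 0)) (pow_ne_zero _ (X_sub_C_ne_zero α)),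
    natDegree_pow, natDegree_pow, natDegree_X_sub_C, natDegree_X_sub_C] at this
  have h3 := det_natDegree P m n hn
  have h4 : (m+1) * (n+m) ≤ (d+1) * (n+d) := Nat.mul_le_mul (by omega) (by omega)
  omega


noncomputable def ac (i : ℕ) : ℝ := 4 ^ i * (i.factorial : ℝ) ^ 2 / ((2 * i + 1).factorial : ℝ)

noncomputable def fser : PowerSeries ℝ := PowerSeries.mk fun i => ac i / (i.factorial : ℝ)

lemma ac_zero : ac 0 = 1 := by simp [ac]

lemma ac_pos (i : ℕ) : 0 < ac i := by unfold ac; positivity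

lemma ac_succ (i : ℕ) : (2 * i + 3) * ac (i+1) = 2 * (i + 1) * ac i := by
  unfold ac
  rw [show 2 * (i+1) + 1 = (2 * i + 1) + 1 + 1 by ring, Nat.factorial_succ (2*i+1+1), Nat.factorial_succ (2*i+1), Nat.factorial_succ i]
  have h1 : ((2 * i + 1).factorial : ℝ) ≠ 0 := by positivity
  push_cast
  field_simp
  ring

lemma ac_le_one (i : ℕ) : ac i ≤ 1 := by
  induction i with
  | zero => simp [ac_zero]
  | succ i ih =>
    have := ac_succ i
    have h := ac_pos (i+1)
    have h2 : (0:ℝ) ≤ i := by positivity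
    by_contra hc
    push Not at hc
    nlinarith

lemma fser_isSol : IsSol 0 fser := by
  unfold IsSol tht
  rw [map_zero, zero_add]
  have e1 : 2 * PowerSeries.X * PowerSeries.derivative ℝ fser = PowerSeries.C 2 * (PowerSeries.X * PowerSeries.derivative ℝ fser) := by
    rw [show (PowerSeries.C (2:ℝ)) = 2 from rfl]; ring
  have e2 : (2 * PowerSeries.X - 1) * fser + 1 = PowerSeries.C 2 * (PowerSeries.X * fser) - fser + 1 := by
    rw [show (PowerSeries.C (2:ℝ)) = 2 from rfl]; ring
  rw [e1, e2]
  ext i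
  cases i with
  | zero =>
    simp only [map_add, map_sub, PowerSeries.coeff_C_mul, PowerSeries.coeff_zero_X_mul]
    simp [fser, ac_zero]
  | succ i =>
    simp only [map_add, map_sub, PowerSeries.coeff_C_mul, PowerSeries.coeff_succ_X_mul, PowerSeries.coeff_derivative, PowerSeries.coeff_one]
    simp only [fser, PowerSeries.coeff_mk]
    have h := ac_succ i
    rw [Nat.factorial_succ]
    have h1 : ((i).factorial : ℝ) ≠ 0 := by positivity
    have h2 : (i : ℝ) + 1 ≠ 0 := by positivity
    push_cast
    simp
    field_simp
    linear_combination h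

/-- scaled coefficients of powers -/
noncomputable def acp (k i : ℕ) : ℝ := (i.factorial : ℝ) * PowerSeries.coeff i (fser ^ k)

lemma acp_zero (i : ℕ) : acp 0 i = if i = 0 then 1 else 0 := by
  simp only [acp, pow_zero, PowerSeries.coeff_one]
  split_ifs with h
  · simp [h]
  · simp

lemma acp_succ (k i : ℕ) : acp (k+1) i =
    ∑ x ∈ Finset.HasAntidiagonal.antidiagonal i, (i.choose x.1 : ℝ) * (acp k x.1 * ac x.2) := by
  unfold acp
  rw [pow_succ, PowerSeries.coeff_mul, Finset.mul_sum]
  refine Finset.sum_congr rfl fun x hx => ?_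
  rw [Finset.HasAntidiagonal.mem_antidiagonal] at hx
  have := Nat.choose_mul_factorial_mul_factorial (n := i) (k := x.1) (by omega)
  rw [show i - x.1 = x.2 by omega] at this
  have h1 : ((i).factorial : ℝ) = i.choose x.1 * x.1.factorial * x.2.factorial := by exact_mod_cast this.symm
  have h2 : (x.2.factorial : ℝ) ≠ 0 := by positivity
  rw [h1]
  simp only [fser, PowerSeries.coeff_mk]
  field_simp

lemma acp_bounds (k i : ℕ) : 0 ≤ acp k i ∧ acp k i ≤ (k : ℝ) ^ i := by
  induction k generalizing i with
  | zero =>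
    rw [acp_zero]
    split_ifs with h
    · simp [h]
    · simp [h]
  | succ k ih =>
    rw [acp_succ]
    constructor
    · refine Finset.sum_nonneg fun x _ => ?_
      have := (ih x.1).1
      have := (ac_pos x.2).le
      positivity
    · push_cast
      rw [(Commute.all (k : ℝ) 1).add_pow']
      refine Finset.sum_le_sum fun x _ => ?_
      rw [nsmul_eq_mul, one_pow]
      refine mul_le_mul_of_nonneg_left ?_ (by positivity)
      exact mul_le_mul (ih x.1).2 (ac_le_one _) (ac_pos _).le (by positivity)

lemma acp_int (D : ℕ) (E : ℕ) (hD : ∀ i ≤ E, ∃ z : ℤ, (D : ℝ) * ac i = z) (k i : ℕ) (hi : i ≤ E) :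
    ∃ z : ℤ, (D : ℝ) ^ k * acp k i = z := by
  induction k generalizing i with
  | zero =>
    rw [acp_zero]
    split_ifs with h
    · exact ⟨1, by simp⟩
    · exact ⟨0, by simp⟩
  | succ k ih =>
    rw [acp_succ, Finset.mul_sum]
    have : ∀ x : ℕ × ℕ, ∃ z : ℤ, x ∈ Finset.HasAntidiagonal.antidiagonal i →
        (D : ℝ) ^ (k+1) * ((i.choose x.1 : ℝ) * (acp k x.1 * ac x.2)) = z := by
      intro x
      by_cases hx : x ∈ Finset.HasAntidiagonal.antidiagonal i
      · rw [Finset.HasAntidiagonal.mem_antidiagonal] at hx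
        obtain ⟨z1, h1⟩ := ih x.1 (by omega)
        obtain ⟨z2, h2⟩ := hD x.2 (by omega)
        refine ⟨i.choose x.1 * (z1 * z2), fun _ => ?_⟩
        push_cast
        rw [← h1, ← h2]; ring
      · exact ⟨0, fun h => absurd h hx⟩
    choose z hz using this
    refine ⟨∑ x ∈ Finset.HasAntidiagonal.antidiagonal i, z x, ?_⟩
    push_cast
    exact Finset.sum_congr rfl fun x hx => hz x hx

lemma den_exists (E : ℕ) : ∃ D : ℕ, 0 < D ∧ (D : ℝ) ≤ (Real.exp ((Real.log 4 + 4) * (2 * E + 1))) ^ 2 ∧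
    ∀ i ≤ E, ∃ z : ℤ, (D : ℝ) * ac i = z := by
  refine ⟨(Nat.lcmUpto (2 * E + 1)) ^ 2, pow_pos (Nat.lcmUpto_pos _) 2, ?_, ?_⟩
  · push_cast
    refine pow_le_pow_left₀ (by positivity) ?_ 2
    have h1 := Chebyshev.psi_eq_log_lcmUpto (2 * E + 1)
    have h2 := Chebyshev.psi_le_const_mul_self (x := ((2 * E + 1 : ℕ) : ℝ)) (by positivity)
    rw [h1] at h2
    have h3 : (0:ℝ) < Nat.lcmUpto (2 * E + 1) := by exact_mod_cast Nat.lcmUpto_pos _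
    rw [← Real.log_le_iff_le_exp h3]
    push_cast at h2
    exact h2
  · intro i hi
    have d1 : (2 * i + 1) ∣ Nat.lcmUpto (2 * E + 1) := by
      unfold Nat.lcmUpto
      exact Finset.dvd_lcm (f := id) (by simp; omega)
    have d2 : (2 * i).choose i ∣ Nat.lcmUpto (2 * E + 1) := by
      refine (Chebyshev.choose_dvd_lcmUpto (by omega)).trans ?_
      unfold Nat.lcmUpto
      refine Finset.lcm_dvd fun b hb => Finset.dvd_lcm (f := id) ?_
      simp at hb ⊢; omega
    obtain ⟨z1, h1⟩ := d1
    obtain ⟨z2, h2⟩ := d2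
    refine ⟨(4 ^ i * z1 * z2 : ℕ), ?_⟩
    rw [sq]
    nth_rewrite 1 [h1]
    rw [h2]
    unfold ac
    have h3 := Nat.add_choose_mul_factorial_mul_factorial i i
    rw [← two_mul] at h3
    rw [Nat.factorial_succ, ← h3]
    have h4 : (((2 * i).choose i : ℕ) : ℝ) ≠ 0 := by
      have : 0 < (2 * i).choose i := Nat.choose_pos (by omega)
      positivity
    push_cast
    field_simp

open scoped Matrix.Norms.Elementwise in
lemma siegel_aux (d : ℕ) (hd : 1 ≤ d) : ∃ K : ℝ, 1 ≤ K ∧ ∀ u : ℕ, 1 ≤ u → ∀ n E : ℕ,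
    n = (d+2) * u → E + u = (d+1) * n →
    ∃ t : ℕ → ℕ → ℤ, (∃ k ≤ d, ∃ j < n, t k j ≠ 0) ∧ (∀ k j, |(t k j : ℝ)| ≤ K ^ n) ∧
      (∀ i < E, ∑ k ∈ Finset.range (d+1), ∑ j ∈ Finset.range n,
        (t k j : ℝ) * ((i.choose j : ℝ) * acp k (i-j)) = 0) := by
  set K1 : ℝ := (Real.exp ((Real.log 4 + 4) * (2 * d + 3))) ^ 2 with hK1
  set e : ℕ := (d+1) * (d+2) - 1 with he
  have hlog : (0:ℝ) ≤ Real.log 4 := Real.log_nonneg (by norm_num)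
  have hK1' : 1 ≤ K1 := one_le_pow₀ (Real.one_le_exp (by positivity))
  set K2 : ℝ := K1 ^ d * (2 * d) ^ (d+1) with hK2
  have hd' : (1:ℝ) ≤ d := by exact_mod_cast hd
  have hK2' : 1 ≤ K2 := one_le_mul_of_one_le_of_one_le (one_le_pow₀ hK1') (one_le_pow₀ (by linarith))
  have hb1 : 1 ≤ 2 * ((d:ℝ)+1) * K2 := by nlinarith
  refine ⟨(2 * ((d:ℝ)+1) * K2) ^ e, one_le_pow₀ hb1, ?_⟩
  intro u hu n E hn hE
  have hn1 : 1 ≤ n := by rw [hn]; nlinarith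
  have hn1' : (1:ℝ) ≤ n := by exact_mod_cast hn1
  have hun : u ≤ n := by rw [hn]; nlinarith
  have hEn : E ≤ (d+1) * n := by omega
  have hEn' : (E:ℝ) ≤ (d+1) * n := by exact_mod_cast hEn
  have hE0 : 0 < E := by
    have : 2 * n ≤ (d+1) * n := Nat.mul_le_mul_right _ (by omega)
    omega
  obtain ⟨D, hD0, hDle, hDint⟩ := den_exists E
  have hD1 : (1:ℝ) ≤ D := by exact_mod_cast hD0
  have hDK : (D:ℝ) ≤ K1 ^ n := by
    refine hDle.trans ?_
    rw [hK1, ← pow_mul, mul_comm 2 n, pow_mul, ← Real.exp_nat_mul _ n]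
    refine pow_le_pow_left₀ (by positivity) (Real.exp_le_exp.mpr ?_) 2
    have : (2 * (E:ℝ) + 1) ≤ n * (2 * d + 3) := by nlinarith
    calc (Real.log 4 + 4) * (2 * (E:ℝ) + 1) ≤ (Real.log 4 + 4) * (n * (2 * d + 3)) := by gcongr
      _ = _ := by ring
  have hz : ∀ k i : ℕ, ∃ z : ℤ, k ≤ d → i ≤ E → (D : ℝ) ^ d * acp k i = z := by
    intro k i
    by_cases h : k ≤ d ∧ i ≤ E
    · obtain ⟨z, hz⟩ := acp_int D E hDint k i h.2
      refine ⟨D ^ (d - k) * z, fun _ _ => ?_⟩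
      push_cast
      rw [← hz, ← mul_assoc, ← pow_add]
      congr 2; omega
    · exact ⟨0, fun h1 h2 => absurd ⟨h1, h2⟩ h⟩
  choose z hz using hz
  set A : Matrix (Fin E) (Fin (d+1) × Fin n) ℤ :=
    Matrix.of fun i b => ((i:ℕ).choose (b.2:ℕ) : ℤ) * z b.1 ((i:ℕ) - (b.2:ℕ)) with hA
  have hcard : Fintype.card (Fin (d+1) × Fin n) = (d+1) * n := by simp
  have hcard' : Fintype.card (Fin E) = E := by simp
  obtain ⟨t, ht0, hAt, htn⟩ := Int.Matrix.exists_ne_zero_int_vec_norm_le A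
    (by rw [hcard, hcard']; omega) (by rw [hcard']; exact hE0)
  rw [hcard, hcard'] at htn
  have hAnorm : max 1 ‖A‖ ≤ K2 ^ n := by
    refine max_le (one_le_pow₀ hK2') ?_
    rw [Matrix.norm_le_iff (by positivity)]
    intro i b
    have hi : (i:ℕ) < E := i.2
    have hb : (b.1:ℕ) ≤ d := by have := b.1.2; omega
    have hzz := hz b.1 ((i:ℕ) - b.2) hb (by omega)
    obtain ⟨q1, q2⟩ := acp_bounds b.1 ((i:ℕ) - b.2)
    rw [hA, Matrix.of_apply, Int.norm_eq_abs]
    push_cast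
    rw [← hzz, abs_of_nonneg (by positivity)]
    have hdn : (b.1 : ℝ) ^ ((i:ℕ) - (b.2:ℕ)) ≤ (d:ℝ) ^ ((d+1) * n) := by
      calc (b.1 : ℝ) ^ ((i:ℕ) - (b.2:ℕ)) ≤ (d : ℝ) ^ ((i:ℕ) - (b.2:ℕ)) :=
            pow_le_pow_left₀ (by positivity) (by exact_mod_cast hb) _
        _ ≤ _ := pow_le_pow_right₀ hd' (by omega)
    have hch : (((i:ℕ).choose (b.2:ℕ) : ℕ) : ℝ) ≤ 2 ^ ((d+1) * n) := by
      calc (((i:ℕ).choose (b.2:ℕ) : ℕ) : ℝ) ≤ 2 ^ (i:ℕ) := by exact_mod_cast Nat.choose_le_two_pow _ _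
        _ ≤ _ := pow_le_pow_right₀ (by norm_num) (by omega)
    calc (((i:ℕ).choose (b.2:ℕ) : ℕ) : ℝ) * ((D:ℝ) ^ d * acp b.1 ((i:ℕ) - b.2))
        ≤ 2 ^ ((d+1) * n) * ((K1 ^ n) ^ d * (d:ℝ) ^ ((d+1) * n)) := by
          have := q2.trans hdn
          gcongr
      _ = K2 ^ n := by
          rw [hK2, mul_pow, ← pow_mul, ← pow_mul, ← pow_mul, mul_pow, mul_comm n d]; ring
  have hexp : (E:ℝ) / (((d+1) * n : ℕ) - E) = (e : ℕ) := by
    have h1 : (((d+1) * n : ℕ) : ℝ) - E = u := by rw [← hE]; push_cast; ring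
    have h2 : E = e * u := by
      have : (d+1) * n = (e+1) * u := by
        rw [hn, ← mul_assoc]; congr 1
      have h3 : E + u = e * u + u := by rw [hE, this]; ring
      omega
    rw [h1, h2]
    have : (u:ℝ) ≠ 0 := by positivity
    push_cast
    field_simp
  rw [hexp, Real.rpow_natCast] at htn
  have htn' : ‖t‖ ≤ ((2 * ((d:ℝ)+1) * K2) ^ e) ^ n := by
    refine htn.trans ?_
    rw [← pow_mul, mul_comm e n, pow_mul]
    refine pow_le_pow_left₀ (by positivity) ?_ e
    have h2n : (n:ℝ) ≤ 2 ^ n := by exact_mod_cast Nat.lt_two_pow_self.le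
    have hdd : (d:ℝ) + 1 ≤ ((d:ℝ)+1) ^ n := le_self_pow₀ (by linarith) (by omega)
    push_cast
    calc ((d:ℝ)+1) * n * max 1 ‖A‖ ≤ ((d:ℝ)+1) ^ n * 2 ^ n * K2 ^ n := by gcongr
      _ = _ := by rw [← mul_pow, ← mul_pow]; ring
  refine ⟨fun k j => if h : k < d+1 ∧ j < n then t (⟨k, h.1⟩, ⟨j, h.2⟩) else 0, ?_, ?_, ?_⟩
  · obtain ⟨b, hb⟩ : ∃ b, t b ≠ 0 := by
      by_contra hcon; push Not at hcon; exact ht0 (funext hcon)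
    refine ⟨b.1, by have := b.1.2; omega, b.2, b.2.2, ?_⟩
    have := b.1.2
    simpa using ⟨by omega, hb⟩
  · intro k j
    dsimp only
    split_ifs with h
    · have := (norm_le_pi_norm t (⟨k, h.1⟩, ⟨j, h.2⟩)).trans htn'
      rwa [Int.norm_eq_abs] at this
    · simp only [Int.cast_zero, abs_zero]
      positivity
  · intro i hi
    have h1 := congrFun hAt ⟨i, hi⟩
    simp only [Matrix.mulVec, dotProduct, hA, Matrix.of_apply, Pi.zero_apply, Fintype.sum_prod_type] at h1
    have h2 : ((D:ℝ) ^ d) * ∑ k ∈ Finset.range (d+1), ∑ j ∈ Finset.range n,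
        (((if h : k < d+1 ∧ j < n then t (⟨k, h.1⟩, ⟨j, h.2⟩) else 0 : ℤ) : ℝ)) * ((i.choose j : ℝ) * acp k (i-j)) = 0 := by
      have h3 := congrArg (fun x : ℤ => (x : ℝ)) h1
      simp only [Int.cast_zero] at h3
      rw [← h3, Finset.mul_sum, Finset.sum_range]
      push_cast
      refine Finset.sum_congr rfl fun k _ => ?_
      rw [Finset.mul_sum, Finset.sum_range]
      refine Finset.sum_congr rfl fun j _ => ?_
      rw [dif_pos ⟨k.2, j.2⟩, ← hz k (i - j) (by have := k.2; omega) (by omega)]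
      ring
    exact (mul_eq_zero.mp h2).resolve_left (by positivity)


noncomputable def Jint (x : ℝ) (i : ℕ) : ℝ := ∫ t in (0:ℝ)..x, t ^ (2 * i) * Real.exp (-t ^ 2)

lemma Jint_rec (x : ℝ) (i : ℕ) :
    (2 * i + 1) * Jint x i = x ^ (2 * i + 1) * Real.exp (-x ^ 2) + 2 * Jint x (i+1) := by
  have hd : ∀ t ∈ Set.uIcc 0 x, HasDerivAt (fun t : ℝ => t ^ (2 * i + 1) * Real.exp (-t ^ 2))
      ((2 * i + 1) * (t ^ (2 * i) * Real.exp (-t ^ 2)) - 2 * (t ^ (2 * (i + 1)) * Real.exp (-t ^ 2))) t := by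
    intro t _
    have h1 := (hasDerivAt_pow (2 * i + 1) t)
    have h2 : HasDerivAt (fun t : ℝ => Real.exp (-t ^ 2)) (Real.exp (-t ^ 2) * (-(2 * t))) t := by
      have := ((hasDerivAt_pow 2 t).neg).exp
      simpa using this
    refine (h1.fun_mul h2).congr_deriv ?_
    rw [Nat.add_sub_cancel]; push_cast
    ring
  have hc : ∀ j : ℕ, IntervalIntegrable (fun t : ℝ => t ^ (2 * j) * Real.exp (-t ^ 2)) MeasureTheory.volume 0 x :=
    fun j => (by fun_prop : Continuous (fun t : ℝ => t ^ (2 * j) * Real.exp (-t ^ 2))).intervalIntegrable _ _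
  have := intervalIntegral.integral_eq_sub_of_hasDerivAt hd
    (((hc i).const_mul _).sub ((hc (i+1)).const_mul _))
  rw [intervalIntegral.integral_sub ((hc i).const_mul _) ((hc (i+1)).const_mul _),
    intervalIntegral.integral_const_mul, intervalIntegral.integral_const_mul] at this
  unfold Jint
  simp only [ne_eq, Nat.add_eq_zero_iff, one_ne_zero, and_false, not_false_eq_true, zero_pow, zero_mul, sub_zero] at this
  linarith

noncomputable def bc (i : ℕ) : ℝ := ac i / (i.factorial : ℝ)

lemma bc_rec (i : ℕ) : (2 * i + 3) * bc (i+1) = 2 * bc i := by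
  have := ac_succ i
  unfold bc
  rw [Nat.factorial_succ]
  push_cast
  field_simp
  linarith

lemma bc_nonneg (i : ℕ) : 0 ≤ bc i := by
  have := ac_pos i
  unfold bc; positivity

lemma bc_le (i : ℕ) : bc i ≤ 1 / (i.factorial : ℝ) := by
  unfold bc
  have := ac_le_one i
  gcongr

lemma bc_summable (y : ℝ) (hy : 0 ≤ y) : Summable fun i => bc i * y ^ i := by
  refine Summable.of_nonneg_of_le (fun i => mul_nonneg (bc_nonneg i) (by positivity)) (fun i => ?_)
    (Real.summable_pow_div_factorial y)
  rw [div_eq_mul_one_div, mul_comm]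
  exact mul_le_mul_of_nonneg_left (bc_le i) (by positivity)

lemma J_partial (x : ℝ) (m : ℕ) : Real.exp (x ^ 2) * Jint x 0 =
    ∑ i ∈ Finset.range m, x * (bc i * (x ^ 2) ^ i) + (2 * m + 1) * bc m * (Real.exp (x ^ 2) * Jint x m) := by
  induction m with
  | zero => simp [bc, ac_zero]
  | succ m ih =>
    rw [ih, Finset.sum_range_succ]
    have h1 := Jint_rec x m
    have h2 := bc_rec m
    have h3 : Real.exp (x ^ 2) * Real.exp (-x ^ 2) = 1 := by rw [← Real.exp_add]; simp
    push_cast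
    linear_combination (bc m * Real.exp (x ^ 2)) * h1 - Real.exp (x^2) * Jint x (m+1) * h2 + bc m * x ^ (2 * m + 1) * h3

lemma Jint_bound (x : ℝ) (hx : 0 ≤ x) (m : ℕ) : 0 ≤ Jint x m ∧ Jint x m ≤ x * (x ^ 2) ^ m := by
  unfold Jint
  constructor
  · refine intervalIntegral.integral_nonneg hx fun t _ => ?_
    rw [pow_mul]; positivity
  · have h1 : ∫ t in (0:ℝ)..x, t ^ (2 * m) * Real.exp (-t ^ 2) ≤ ∫ t in (0:ℝ)..x, (x ^ 2) ^ m := by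
      refine intervalIntegral.integral_mono_on hx ?_ ?_ ?_
      · exact (by fun_prop : Continuous (fun t : ℝ => t ^ (2 * m) * Real.exp (-t ^ 2))).intervalIntegrable _ _
      · exact continuous_const.intervalIntegrable _ _
      · intro t ht
        have e1 : Real.exp (-t ^ 2) ≤ 1 := Real.exp_le_one_iff.mpr (by nlinarith [sq_nonneg t])
        have e2 : t ^ (2 * m) ≤ (x ^ 2) ^ m := by
          rw [← pow_mul]; exact pow_le_pow_left₀ ht.1 ht.2 _
        calc t ^ (2 * m) * Real.exp (-t ^ 2) ≤ (x^2)^m * 1 := mul_le_mul e2 e1 (Real.exp_pos _).le (by positivity)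
          _ = _ := mul_one _
    refine h1.trans ?_
    simp

lemma fval (x : ℝ) (hx : 0 ≤ x) :
    x * ∑' i, bc i * (x ^ 2) ^ i = Real.exp (x ^ 2) * ∫ t in (0:ℝ)..x, Real.exp (-t ^ 2) := by
  have h0 : ∫ t in (0:ℝ)..x, Real.exp (-t ^ 2) = Jint x 0 := by simp [Jint]
  rw [h0]
  have hs := ((bc_summable (x^2) (by positivity)).hasSum.mul_left x).tendsto_sum_nat
  have hlim : Filter.Tendsto (fun m : ℕ => (2 * (m+1 : ℕ) + 1) * bc (m+1) * (Real.exp (x ^ 2) * Jint x (m+1)))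
      Filter.atTop (nhds 0) := by
    have hg : Filter.Tendsto (fun m : ℕ => 2 * Real.exp (x^2) * x * x^2 * ((x^2)^m / (m.factorial : ℝ))) Filter.atTop (nhds 0) := by
      have := (FloorSemiring.tendsto_pow_div_factorial_atTop (x^2)).const_mul (2 * Real.exp (x^2) * x * x^2)
      simpa using this
    refine squeeze_zero (fun m => ?_) (fun m => ?_) hg
    · have := (Jint_bound x hx (m+1)).1
      have := bc_nonneg (m+1)
      positivity
    · have h1 : (2 * ((m+1 : ℕ) : ℝ) + 1) * bc (m+1) = 2 * bc m := by
        rw [← bc_rec]; push_cast; ring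
      rw [h1]
      have h2 := (Jint_bound x hx (m+1)).2
      have h3 := bc_le m
      have h4 := bc_nonneg m
      have h5 := (Jint_bound x hx (m+1)).1
      calc 2 * bc m * (Real.exp (x^2) * Jint x (m+1)) ≤ 2 * (1 / (m.factorial:ℝ)) * (Real.exp (x^2) * (x * (x^2)^(m+1))) := by gcongr
        _ = _ := by ring
  have h1 := hs.comp (Filter.tendsto_add_atTop_nat 1)
  have h2 := h1.add hlim
  rw [add_zero] at h2
  refine tendsto_nhds_unique h2 ?_
  refine tendsto_const_nhds.congr fun m => ?_
  exact J_partial x (m+1)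

open IntermediateField in
lemma liouville_lower (ξ : ℝ) (hξ : IsAlgebraic ℚ ξ) (d : ℕ) (hd : (minpoly ℚ ξ).natDegree = d) :
    ∃ c : ℝ, 0 < c ∧ ∀ (q : ℕ → ℤ) (H : ℝ), 1 ≤ H → (∀ k ≤ d, |(q k : ℝ)| ≤ H) →
      ∑ k ∈ Finset.range (d+1), (q k : ℝ) * ξ ^ k ≠ 0 →
      c ≤ |∑ k ∈ Finset.range (d+1), (q k : ℝ) * ξ ^ k| * H ^ (d - 1) := by
  classical
  have hint_egral : IsIntegral ℚ ξ := hξ.isIntegral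
  have : FiniteDimensional ℚ ℚ⟮ξ⟯ := adjoin.finiteDimensional hint_egral
  have : NumberField ℚ⟮ξ⟯ := ⟨⟩
  set x : ℚ⟮ξ⟯ := AdjoinSimple.gen ℚ ξ with hx
  have hxξ : algebraMap ℚ⟮ξ⟯ ℝ x = ξ := AdjoinSimple.algebraMap_gen ℚ ξ
  have hxalg : IsAlgebraic ℤ x := by
    have : IsAlgebraic ℚ x := Algebra.IsAlgebraic.isAlgebraic x
    exact (IsFractionRing.isAlgebraic_iff ℤ ℚ ℚ⟮ξ⟯).mpr this
  obtain ⟨a, ha0, ha⟩ := hxalg.exists_integral_multiple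
  let σ0 : ℚ⟮ξ⟯ →ₐ[ℚ] ℂ := (Complex.ofRealAm.restrictScalars ℚ).comp (IsScalarTower.toAlgHom ℚ ℚ⟮ξ⟯ ℝ)
  have hσ0 : ∀ y, σ0 y = ((algebraMap ℚ⟮ξ⟯ ℝ y : ℝ) : ℂ) := fun y => rfl
  have hcard : Fintype.card (ℚ⟮ξ⟯ →ₐ[ℚ] ℂ) = d := by
    rw [AlgHom.card, adjoin.finrank hint_egral, hd]
  -- bound
  obtain ⟨B, hB1, hB⟩ : ∃ B : ℝ, 1 ≤ B ∧ ∀ σ : ℚ⟮ξ⟯ →ₐ[ℚ] ℂ, ‖σ x‖ ≤ B := by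
    refine ⟨1 + ∑ σ : ℚ⟮ξ⟯ →ₐ[ℚ] ℂ, ‖σ x‖, ?_, ?_⟩
    · have : 0 ≤ ∑ σ : ℚ⟮ξ⟯ →ₐ[ℚ] ℂ, ‖σ x‖ := Finset.sum_nonneg fun _ _ => norm_nonneg _
      linarith
    · intro σ
      have := Finset.single_le_sum (f := fun σ : ℚ⟮ξ⟯ →ₐ[ℚ] ℂ => ‖σ x‖) (fun _ _ => norm_nonneg _) (Finset.mem_univ σ)
      linarith
  have ha1 : (1:ℝ) ≤ |(a:ℝ)| := by exact_mod_cast Int.one_le_abs ha0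
  set C0 : ℝ := |(a:ℝ)| ^ d * ((d+1) * B ^ d) with hC0
  have hC0pos : 0 < C0 := by positivity
  refine ⟨1 / (|(a:ℝ)| ^ d * C0 ^ (d-1)), by positivity, ?_⟩
  intro q H hH hq hne
  set y : ℚ⟮ξ⟯ := ∑ k ∈ Finset.range (d+1), (q k : ℚ⟮ξ⟯) * x ^ k with hy
  have hyξ : algebraMap ℚ⟮ξ⟯ ℝ y = ∑ k ∈ Finset.range (d+1), (q k : ℝ) * ξ ^ k := by
    rw [hy, map_sum]
    simp only [map_mul, map_pow, hxξ, map_intCast]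
  have hy0 : y ≠ 0 := by
    rintro h
    rw [h, map_zero] at hyξ
    exact hne hyξ.symm
  set w : ℚ⟮ξ⟯ := (a : ℚ⟮ξ⟯) ^ d * y with hw
  have hw0 : w ≠ 0 := mul_ne_zero (pow_ne_zero _ (by exact_mod_cast ha0)) hy0
  have hwint : IsIntegral ℤ w := by
    rw [hw, hy, Finset.mul_sum]
    refine IsIntegral.sum _ fun k hk => ?_
    have hk' : k ≤ d := by simpa [Nat.lt_succ_iff] using hk
    have : (a : ℚ⟮ξ⟯) ^ d * ((q k : ℚ⟮ξ⟯) * x ^ k) = ((a ^ (d-k) * q k : ℤ) : ℚ⟮ξ⟯) * (a • x) ^ k := by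
      rw [zsmul_eq_mul, mul_pow]
      push_cast
      have : (a : ℚ⟮ξ⟯) ^ d = (a : ℚ⟮ξ⟯) ^ (d - k) * (a : ℚ⟮ξ⟯) ^ k := by rw [← pow_add]; congr 1; omega
      rw [this]; ring
    rw [this]
    exact (isIntegral_algebraMap (R := ℤ) (x := (a ^ (d-k) * q k : ℤ))).mul (ha.pow k)
  have hnorm : IsIntegral ℤ (Algebra.norm ℚ w) := Algebra.isIntegral_norm ℚ hwint
  obtain ⟨N, hN⟩ := IsIntegrallyClosed.isIntegral_iff.mp hnorm
  have hN0 : N ≠ 0 := by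
    rintro rfl
    rw [map_zero] at hN
    exact hw0 (Algebra.norm_eq_zero_iff.mp hN.symm)
  have hprod := Algebra.norm_eq_prod_embeddings ℚ ℂ w
  have h1 : (1:ℝ) ≤ ∏ σ : ℚ⟮ξ⟯ →ₐ[ℚ] ℂ, ‖σ w‖ := by
    rw [← norm_prod, ← hprod, ← hN]
    have : (algebraMap ℚ ℂ) ((algebraMap ℤ ℚ) N) = (N : ℂ) := by simp
    rw [this, Complex.norm_intCast]
    exact_mod_cast Int.one_le_abs hN0
  rw [← Finset.mul_prod_erase _ _ (Finset.mem_univ σ0)] at h1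
  have hbound : ∀ σ : ℚ⟮ξ⟯ →ₐ[ℚ] ℂ, ‖σ w‖ ≤ C0 * H := by
    intro σ
    rw [hw, hy, map_mul, map_pow, map_intCast, norm_mul, norm_pow, Complex.norm_intCast, hC0, mul_assoc]
    refine mul_le_mul_of_nonneg_left ?_ (by positivity)
    rw [map_sum]
    refine (norm_sum_le _ _).trans ?_
    have : ∀ k ∈ Finset.range (d+1), ‖σ ((q k : ℚ⟮ξ⟯) * x ^ k)‖ ≤ H * B ^ d := by
      intro k hk
      have hk' : k ≤ d := by simpa [Nat.lt_succ_iff] using hk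
      rw [map_mul, map_pow, map_intCast, norm_mul, norm_pow, Complex.norm_intCast]
      refine mul_le_mul (hq k hk') ?_ (by positivity) (by positivity)
      calc ‖σ x‖ ^ k ≤ B ^ k := pow_le_pow_left₀ (norm_nonneg _) (hB σ) k
        _ ≤ B ^ d := pow_le_pow_right₀ hB1 hk'
    refine (Finset.sum_le_sum this).trans ?_
    simp
    apply le_of_eq; ring
  have h2 : ∏ σ ∈ Finset.univ.erase σ0, ‖σ w‖ ≤ (C0 * H) ^ (d-1) := by
    refine (Finset.prod_le_prod (fun _ _ => norm_nonneg _) fun σ _ => hbound σ).trans ?_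
    rw [Finset.prod_const, Finset.card_erase_of_mem (Finset.mem_univ _), Finset.card_univ, hcard]
  have h3 : ‖σ0 w‖ = |(a:ℝ)| ^ d * |∑ k ∈ Finset.range (d+1), (q k : ℝ) * ξ ^ k| := by
    rw [hσ0, hw, map_mul, hyξ, map_pow, map_intCast, Complex.norm_real, norm_mul, norm_pow]
    rfl
  have h4 : 1 ≤ ‖σ0 w‖ * (C0 * H) ^ (d-1) := h1.trans (mul_le_mul_of_nonneg_left h2 (norm_nonneg _))
  rw [h3, mul_pow] at h4
  rw [div_le_iff₀ (by positivity)]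
  linarith


lemma iot_zero_coeff (p : Polynomial ℝ) (i : ℕ) : PowerSeries.coeff i (iot 0 p) = p.coeff i := by
  have : iot 0 p = (p : PowerSeries ℝ) := by
    induction p using Polynomial.induction_on' with
    | add p q hp hq => simp [hp, hq]
    | monomial n a =>
      unfold iot
      rw [Polynomial.aeval_monomial, Polynomial.coe_monomial]
      simp only [map_zero, zero_add]
      rw [PowerSeries.monomial_eq_mk, PowerSeries.X_pow_eq]
      ext j
      simp [PowerSeries.coeff_mk, PowerSeries.coeff_monomial]
  rw [this, Polynomial.coeff_coe]

def Ev (α : ℝ) (F : PowerSeries ℝ) (v : ℝ) : Prop :=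
  Summable (fun i => ‖PowerSeries.coeff i F * α ^ i‖) ∧ ∑' i, PowerSeries.coeff i F * α ^ i = v

lemma Ev_mul {α : ℝ} {F G : PowerSeries ℝ} {v w : ℝ} (hF : Ev α F v) (hG : Ev α G w) : Ev α (F * G) (v * w) := by
  have key : ∀ i, PowerSeries.coeff i (F * G) * α ^ i =
      ∑ kl ∈ Finset.HasAntidiagonal.antidiagonal i, (PowerSeries.coeff kl.1 F * α ^ kl.1) * (PowerSeries.coeff kl.2 G * α ^ kl.2) := by
    intro i
    rw [PowerSeries.coeff_mul, Finset.sum_mul]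
    refine Finset.sum_congr rfl fun kl hkl => ?_
    rw [← Finset.HasAntidiagonal.mem_antidiagonal.mp hkl, pow_add]
    ring
  have h1 := summable_norm_sum_mul_antidiagonal_of_summable_norm
    (f := fun i => PowerSeries.coeff i F * α ^ i) (g := fun i => PowerSeries.coeff i G * α ^ i) hF.1 hG.1
  have h2 := tsum_mul_tsum_eq_tsum_sum_antidiagonal_of_summable_norm
    (f := fun i => PowerSeries.coeff i F * α ^ i) (g := fun i => PowerSeries.coeff i G * α ^ i) hF.1 hG.1
  refine ⟨?_, ?_⟩
  · rw [funext fun i => congrArg norm (key i)]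
    exact h1
  · rw [tsum_congr key, ← h2, hF.2, hG.2]

lemma Ev_add {α : ℝ} {F G : PowerSeries ℝ} {v w : ℝ} (hF : Ev α F v) (hG : Ev α G w) : Ev α (F + G) (v + w) := by
  refine ⟨?_, ?_⟩
  · refine Summable.of_nonneg_of_le (fun _ => norm_nonneg _) (fun i => ?_) (hF.1.add hG.1)
    rw [map_add, add_mul]
    exact norm_add_le _ _
  · simp only [map_add, add_mul]
    rw [Summable.tsum_add hF.1.of_norm hG.1.of_norm, hF.2, hG.2]

lemma Ev_poly (α : ℝ) (p : Polynomial ℝ) : Ev α (iot 0 p) (p.eval α) := by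
  have h0 : ∀ i ∉ Finset.range (p.natDegree + 1), p.coeff i * α ^ i = 0 := by
    intro i hi
    rw [Polynomial.coeff_eq_zero_of_natDegree_lt (by simpa using hi), zero_mul]
  refine ⟨?_, ?_⟩
  · simp only [iot_zero_coeff]
    exact summable_of_ne_finset_zero (s := Finset.range (p.natDegree + 1)) (fun i hi => by rw [h0 i hi, norm_zero])
  · simp only [iot_zero_coeff]
    rw [tsum_eq_sum h0, Polynomial.eval_eq_sum_range]

lemma Ev_pow {α : ℝ} {F : PowerSeries ℝ} {v : ℝ} (hF : Ev α F v) (k : ℕ) : Ev α (F ^ k) (v ^ k) := by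
  induction k with
  | zero =>
    have := Ev_poly α 1
    simpa using this
  | succ k ih => rw [pow_succ, pow_succ]; exact Ev_mul ih hF

lemma Ev_sum {α : ℝ} (s : Finset ℕ) (F : ℕ → PowerSeries ℝ) (v : ℕ → ℝ) (h : ∀ k, Ev α (F k) (v k)) :
    Ev α (∑ k ∈ s, F k) (∑ k ∈ s, v k) := by
  classical
  induction s using Finset.induction_on with
  | empty =>
    have := Ev_poly α 0
    simpa using this
  | insert a s ha ih => rw [Finset.sum_insert ha, Finset.sum_insert ha]; exact Ev_add (h a) ih

lemma Ev_fser (α : ℝ) (hα : 0 ≤ α) : Ev α fser (∑' i, bc i * α ^ i) := by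
  have : ∀ i, PowerSeries.coeff i fser = bc i := fun i => by simp [fser, bc]
  refine ⟨?_, ?_⟩
  · simp only [this]
    exact (bc_summable α hα).norm
  · simp only [this]

lemma Ev_Ssum (α : ℝ) (hα : 0 ≤ α) (d : ℕ) (Q : ℕ → Polynomial ℝ) :
    Ev α (Ssum 0 fser d Q) (∑ k ∈ Finset.range (d+1), (Q k).eval α * (∑' i, bc i * α ^ i) ^ k) :=
  Ev_sum _ _ _ fun k => Ev_mul (Ev_poly α (Q k)) (Ev_pow (Ev_fser α hα) k)

lemma coeff_tht_iter (F : PowerSeries ℝ) (s i : ℕ) :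
    PowerSeries.coeff i ((tht 0)^[s] F) = (2 * (i:ℝ)) ^ s * PowerSeries.coeff i F := by
  induction s with
  | zero => simp
  | succ s ih =>
    rw [Function.iterate_succ_apply']
    have : ∀ G : PowerSeries ℝ, PowerSeries.coeff i (tht 0 G) = 2 * (i:ℝ) * PowerSeries.coeff i G := by
      intro G
      have : tht 0 G = PowerSeries.C (2:ℝ) * (PowerSeries.X * PowerSeries.derivative ℝ G) := by
        unfold tht
        rw [map_zero, zero_add, mul_assoc, map_ofNat]
      rw [this, PowerSeries.coeff_C_mul]
      cases i with
      | zero => simp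
      | succ i =>
        rw [PowerSeries.coeff_succ_X_mul]
        rw [PowerSeries.coeff_derivative]
        push_cast
        ring
    rw [this, ih, pow_succ]
    ring

/-- integer polynomials -/
noncomputable def Pint (n d : ℕ) (t : ℕ → ℕ → ℤ) (k : ℕ) : Polynomial ℤ :=
  if k ≤ d then ∑ j ∈ Finset.range n, Polynomial.monomial j (((n.factorial / j.factorial : ℕ) : ℤ) * t k j) else 0

lemma Pint_coeff (n d : ℕ) (t : ℕ → ℕ → ℤ) (k i : ℕ) : (Pint n d t k).coeff i =
    if k ≤ d ∧ i < n then ((n.factorial / i.factorial : ℕ) : ℤ) * t k i else 0 := by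
  unfold Pint
  by_cases hk : k ≤ d
  · simp [hk, Polynomial.finsetSum_coeff, Polynomial.coeff_monomial]
  · simp [hk]

lemma Pint_natDegree (n d : ℕ) (t : ℕ → ℕ → ℤ) (k : ℕ) : (Pint n d t k).natDegree ≤ n := by
  rw [Polynomial.natDegree_le_iff_coeff_eq_zero]
  intro i hi
  rw [Pint_coeff, if_neg (by omega)]

noncomputable def Preal (n d : ℕ) (t : ℕ → ℕ → ℤ) (k : ℕ) : Polynomial ℝ :=
  (Pint n d t k).map (Int.castRingHom ℝ)

lemma Dop_map (P : ℕ → Polynomial ℤ) (s : ℕ) :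
    Dop^[s] (fun k => (P k).map (Int.castRingHom ℝ)) = fun k => (Dop^[s] P k).map (Int.castRingHom ℝ) := by
  induction s with
  | zero => rfl
  | succ s ih =>
    rw [Function.iterate_succ_apply', ih, Function.iterate_succ_apply']
    funext k
    simp [Dop, Polynomial.derivative_map]

lemma coeff_Ssum_Preal (n d : ℕ) (t : ℕ → ℕ → ℤ) (i : ℕ) :
    PowerSeries.coeff i (Ssum 0 fser d (Preal n d t)) = (n.factorial : ℝ) / i.factorial *
      ∑ k ∈ Finset.range (d+1), ∑ j ∈ Finset.range n, (t k j : ℝ) * ((i.choose j : ℝ) * acp k (i-j)) := by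
  unfold Ssum
  rw [map_sum, Finset.mul_sum]
  refine Finset.sum_congr rfl fun k hk => ?_
  have hk' : k ≤ d := by simpa [Nat.lt_succ_iff] using hk
  have hP : iot 0 (Preal n d t k) = ∑ j ∈ Finset.range n,
      PowerSeries.C ((n.factorial : ℝ) / j.factorial * t k j) * PowerSeries.X ^ j := by
    ext m
    rw [iot_zero_coeff, Preal, Polynomial.coeff_map, Pint_coeff, map_sum]
    simp only [PowerSeries.coeff_C_mul, PowerSeries.coeff_X_pow, mul_ite, mul_one, mul_zero, Finset.sum_ite_eq,
      Finset.mem_range, hk', true_and]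
    split_ifs with h
    · rw [eq_intCast, Int.cast_mul, Int.cast_natCast, Nat.cast_div (Nat.factorial_dvd_factorial h.le) (by positivity)]
    · simp
  rw [hP, Finset.sum_mul, map_sum, Finset.mul_sum]
  refine Finset.sum_congr rfl fun j hj => ?_
  rw [mul_assoc, PowerSeries.coeff_C_mul, PowerSeries.coeff_X_pow_mul']
  split_ifs with h
  · unfold acp
    rw [Nat.cast_choose ℝ h]
    field_simp
  · rw [Nat.choose_eq_zero_of_lt (by omega)]
    simp


lemma G_bound (d : ℕ) (hd : 1 ≤ d) (n : ℕ) (K : ℝ) (hK : 1 ≤ K) (t : ℕ → ℕ → ℤ)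
    (ht : ∀ k j, |(t k j : ℝ)| ≤ K ^ n) (i : ℕ) :
    |∑ k ∈ Finset.range (d+1), ∑ j ∈ Finset.range n, (t k j : ℝ) * ((i.choose j : ℝ) * acp k (i-j))| ≤
      (d+1) * n * K ^ n * (2 * d) ^ i := by
  have hd' : (1:ℝ) ≤ d := by exact_mod_cast hd
  calc _ ≤ ∑ k ∈ Finset.range (d+1), ∑ j ∈ Finset.range n, K ^ n * (2 ^ i * (d:ℝ) ^ i) := by
        refine (Finset.abs_sum_le_sum_abs _ _).trans (Finset.sum_le_sum fun k hk => ?_)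
        refine (Finset.abs_sum_le_sum_abs _ _).trans (Finset.sum_le_sum fun j hj => ?_)
        rw [abs_mul]
        have hk' : (k:ℝ) ≤ d := by
          have : k ≤ d := by simpa [Nat.lt_succ_iff] using hk
          exact_mod_cast this
        have h1 := acp_bounds k (i-j)
        have h2 : acp k (i-j) ≤ (d:ℝ) ^ i :=
          h1.2.trans ((pow_le_pow_left₀ (by positivity) hk' _).trans (pow_le_pow_right₀ hd' (by omega)))
        have h3 : (i.choose j : ℝ) ≤ 2 ^ i := by exact_mod_cast Nat.choose_le_two_pow i j
        rw [abs_of_nonneg (mul_nonneg (by positivity) h1.1)]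
        exact mul_le_mul (ht k j) (mul_le_mul h3 h2 h1.1 (by positivity)) (mul_nonneg (by positivity) h1.1) (by positivity)
    _ = _ := by
        simp only [Finset.sum_const, Finset.card_range, nsmul_eq_mul]
        push_cast
        rw [mul_pow]; ring

lemma two_i_pow (i s : ℕ) : (2 * (i:ℝ)) ^ s ≤ s.factorial * (Real.exp 2) ^ i := by
  have := Real.pow_div_factorial_le_exp (2 * (i:ℝ)) (by positivity) s
  rw [div_le_iff₀ (by positivity)] at this
  rw [← Real.exp_nat_mul, mul_comm (i:ℝ) 2]
  linarith

lemma tail_bound (x : ℝ) (hx : 0 ≤ x) (E : ℕ) (f : ℕ → ℝ) (A : ℝ) (hA : 0 ≤ A)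
    (h0 : ∀ i < E, f i = 0) (hf : Summable fun i => ‖f i‖) (hb : ∀ i, |f i| ≤ A * (x ^ i / i.factorial)) :
    |∑' i, f i| ≤ A * (x ^ E / E.factorial) * Real.exp x := by
  have h1 : ∑' i, f i = ∑' i, f (i + E) := by
    rw [← hf.of_norm.sum_add_tsum_nat_add E, Finset.sum_eq_zero, zero_add]
    intro i hi
    exact h0 i (by simpa using hi)
  rw [h1]
  have hs : HasSum (fun i : ℕ => A * (x ^ E / E.factorial) * (x ^ i / i.factorial)) (A * (x ^ E / E.factorial) * Real.exp x) := by
    have := NormedSpace.expSeries_div_hasSum_exp (𝔸 := ℝ) x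
    rw [← Real.exp_eq_exp_ℝ] at this
    exact this.mul_left _
  refine tsum_of_norm_bounded (f := fun i => f (i + E)) hs (fun i => ?_)
  refine (hb _).trans ?_
  rw [mul_assoc]
  refine mul_le_mul_of_nonneg_left ?_ hA
  have h2 : (E.factorial : ℝ) * i.factorial ≤ (i + E).factorial := by
    have := Nat.le_of_dvd (Nat.factorial_pos _) (Nat.factorial_mul_factorial_dvd_factorial_add i E)
    rw [mul_comm]
    exact_mod_cast this
  rw [div_mul_div_comm, ← pow_add, add_comm E i]
  gcongr

lemma upper (d : ℕ) (hd : 1 ≤ d) (n E s : ℕ) (K : ℝ) (hK : 1 ≤ K) (t : ℕ → ℕ → ℤ)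
    (ht : ∀ k j, |(t k j : ℝ)| ≤ K ^ n)
    (hE : ∀ i < E, ∑ k ∈ Finset.range (d+1), ∑ j ∈ Finset.range n, (t k j : ℝ) * ((i.choose j : ℝ) * acp k (i-j)) = 0)
    (α : ℝ) (hα : 0 ≤ α) (hα1 : α ≤ 1) :
    |∑ k ∈ Finset.range (d+1), (Dop^[s] (Preal n d t) k).eval α * (∑' i, bc i * α ^ i) ^ k| ≤
      n.factorial * s.factorial * ((d+1) * n * K ^ n) * ((2 * d * Real.exp 2) ^ E / E.factorial) * Real.exp (2 * d * Real.exp 2) := by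
  have hev := Ev_Ssum α hα d (Dop^[s] (Preal n d t))
  have hz : ∀ k, d < k → Preal n d t k = 0 := by
    intro k hk
    simp [Preal, Pint, show ¬ k ≤ d by omega]
  rw [← tht_iter_Ssum 0 fser fser_isSol d (Preal n d t) hz s] at hev
  rw [← hev.2]
  refine tail_bound _ (by positivity) E _ _ (by positivity) ?_ hev.1 ?_
  · intro i hi
    rw [coeff_tht_iter, coeff_Ssum_Preal, hE i hi]
    simp
  · intro i
    rw [coeff_tht_iter, coeff_Ssum_Preal]
    have h1 := G_bound d hd n K hK t ht i
    have h2 := two_i_pow i s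
    have h3 : |α ^ i| ≤ 1 := by
      rw [abs_of_nonneg (by positivity)]
      exact pow_le_one₀ hα hα1
    rw [abs_mul, abs_mul, abs_mul, abs_of_nonneg (by positivity : 0 ≤ (2 * (i:ℝ)) ^ s),
      abs_of_nonneg (by positivity : (0:ℝ) ≤ (n.factorial:ℝ) / i.factorial)]
    set G := |∑ k ∈ Finset.range (d+1), ∑ j ∈ Finset.range n, (t k j : ℝ) * ((i.choose j : ℝ) * acp k (i-j))| with hG
    have hG0 : 0 ≤ G := abs_nonneg _
    calc (2 * (i:ℝ)) ^ s * ((n.factorial:ℝ) / i.factorial * G) * |α ^ i|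
        ≤ (s.factorial * (Real.exp 2) ^ i) * ((n.factorial:ℝ) / i.factorial * ((d+1) * n * K ^ n * (2 * d) ^ i)) * 1 := by
          gcongr
      _ = _ := by
          rw [mul_pow (2 * (d:ℝ)) (Real.exp 2) i]
          ring

lemma coeff_Dop (P : ℕ → Polynomial ℤ) (k i : ℕ) : (Dop P k).coeff i =
    2 * i * (P k).coeff i + k * (2 * (if i = 0 then 0 else (P k).coeff (i-1)) - (P k).coeff i) + (k+1) * (P (k+1)).coeff i := by
  have : Dop P k = Polynomial.C 2 * (Polynomial.X * Polynomial.derivative (P k)) +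
      Polynomial.C (k:ℤ) * (Polynomial.C 2 * (Polynomial.X * P k) - P k) + Polynomial.C ((k:ℤ)+1) * P (k+1) := by
    unfold Dop
    simp
    ring
  rw [this]
  simp only [Polynomial.coeff_add, Polynomial.coeff_C_mul, Polynomial.coeff_sub]
  cases i with
  | zero => simp
  | succ i =>
    simp only [Polynomial.coeff_X_mul, Polynomial.coeff_derivative]
    simp
    ring

lemma height_step (P : ℕ → Polynomial ℤ) (d N : ℕ) (h : ℝ) (hN : ∀ k, (P k).natDegree ≤ N)
    (hz : ∀ k, d < k → P k = 0) (hh : ∀ k i, |((P k).coeff i : ℝ)| ≤ h) (k i : ℕ) :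
    |((Dop P k).coeff i : ℝ)| ≤ (2 * N + 4 * d + 1) * h := by
  have hh0 : 0 ≤ h := (abs_nonneg _).trans (hh 0 0)
  by_cases hk : k ≤ d
  · rw [coeff_Dop]
    have hk' : (k:ℝ) ≤ d := by exact_mod_cast hk
    push_cast
    have e1 : |2 * (i:ℝ) * ((P k).coeff i : ℝ)| ≤ 2 * N * h := by
      by_cases hi : i ≤ N
      · have hi' : (i:ℝ) ≤ N := by exact_mod_cast hi
        rw [abs_mul, abs_of_nonneg (by positivity)]
        have := hh k i
        gcongr
      · rw [Polynomial.coeff_eq_zero_of_natDegree_lt ((hN k).trans_lt (by omega))]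
        simp; positivity
    have e2 : |((if i = 0 then (0:ℤ) else (P k).coeff (i-1) : ℤ) : ℝ)| ≤ h := by
      split_ifs
      · simpa using hh0
      · exact hh _ _
    have e3 := hh k i
    have e4 := hh (k+1) i
    have e5 : |(k:ℝ) * (2 * ((if i = 0 then (0:ℤ) else (P k).coeff (i-1) : ℤ) : ℝ) - ((P k).coeff i : ℝ))| ≤ d * (3 * h) := by
      rw [abs_mul, abs_of_nonneg (by positivity)]
      refine mul_le_mul hk' ?_ (abs_nonneg _) (by positivity)
      rw [abs_le] at e2 e3 ⊢
      constructor <;> linarith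
    have e6 : |((k:ℝ) + 1) * ((P (k+1)).coeff i : ℝ)| ≤ (d + 1) * h := by
      rw [abs_mul, abs_of_nonneg (by positivity)]
      gcongr
    push_cast at e5
    refine (abs_add_three _ _ _).trans ?_
    linarith
  · have := Dop_zero_of P d hz 1 k (by omega)
    simp at this
    rw [this]
    simp; positivity

lemma height (P : ℕ → Polynomial ℤ) (d n m : ℕ) (h : ℝ) (hN : ∀ k, (P k).natDegree ≤ n)
    (hz : ∀ k, d < k → P k = 0) (hh : ∀ k i, |((P k).coeff i : ℝ)| ≤ h) (s : ℕ) (hs : s ≤ m) : ∀ k i,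
    |((Dop^[s] P k).coeff i : ℝ)| ≤ (2 * (n + m) + 4 * d + 1) ^ s * h := by
  have hh0 : 0 ≤ h := (abs_nonneg _).trans (hh 0 0)
  induction s with
  | zero => simpa using hh
  | succ s ih =>
    intro k i
    rw [Function.iterate_succ_apply']
    refine (height_step _ d (n+s) _ (Dop_natDegree P n hN s) (Dop_zero_of P d hz s) (ih (by omega)) k i).trans ?_
    rw [pow_succ', mul_assoc]
    have : (s:ℝ) ≤ m := by exact_mod_cast (by omega : s ≤ m)
    push_cast
    gcongr

lemma Pint_height (n d : ℕ) (t : ℕ → ℕ → ℤ) (K : ℝ) (hK : 1 ≤ K) (ht : ∀ k j, |(t k j : ℝ)| ≤ K ^ n) (k i : ℕ) :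
    |((Pint n d t k).coeff i : ℝ)| ≤ n.factorial * K ^ n := by
  rw [Pint_coeff]
  split_ifs
  · rw [Int.cast_mul, Int.cast_natCast, abs_mul, abs_of_nonneg (by positivity)]
    have h1 : ((n.factorial / i.factorial : ℕ) : ℝ) ≤ n.factorial := by exact_mod_cast Nat.div_le_self _ _
    exact mul_le_mul h1 (ht k i) (abs_nonneg _) (by positivity)
  · simp; positivity

/-- clearing denominators -/
lemma clear_den (p : Polynomial ℤ) (N l : ℕ) (hl : 1 ≤ l) (hp : p.natDegree ≤ N) (h : ℝ)
    (hh : ∀ i, |(p.coeff i : ℝ)| ≤ h) :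
    ∃ q : ℤ, (q : ℝ) = l ^ N * (p.map (Int.castRingHom ℝ)).eval (1 / (l:ℝ)) ∧ |(q:ℝ)| ≤ (N+1) * (h * l ^ N) := by
  have hl' : (1:ℝ) ≤ l := by exact_mod_cast hl
  have hh0 : 0 ≤ h := (abs_nonneg _).trans (hh 0)
  refine ⟨∑ i ∈ Finset.range (N+1), p.coeff i * (l:ℤ) ^ (N - i), ?_, ?_⟩
  · rw [Polynomial.eval_map, Polynomial.eval₂_eq_sum_range' _ (Nat.lt_succ_of_le hp), Finset.mul_sum]
    push_cast
    refine Finset.sum_congr rfl fun i hi => ?_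
    have hi' : i ≤ N := by simpa [Nat.lt_succ_iff] using hi
    rw [eq_intCast, div_pow, one_pow]
    obtain ⟨m, rfl⟩ := Nat.exists_eq_add_of_le hi'
    rw [Nat.add_sub_cancel_left, pow_add]
    field_simp
  · push_cast
    refine (Finset.abs_sum_le_sum_abs _ _).trans ?_
    refine (Finset.sum_le_card_nsmul _ _ (h * l ^ N) ?_).trans (by simp)
    intro i hi
    rw [abs_mul, abs_of_nonneg (by positivity : (0:ℝ) ≤ (l:ℝ) ^ (N - i))]
    have : (l:ℝ) ^ (N-i) ≤ l ^ N := pow_le_pow_right₀ hl' (by omega)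
    have := hh i
    gcongr

lemma asym (c A C : ℝ) (hc : 0 < c) (hC : 1 ≤ C) (U : ℕ) : ∃ u : ℕ, U ≤ u ∧ A * C ^ u < c * (u:ℝ) ^ u := by
  obtain ⟨m, hm⟩ := pow_unbounded_of_one_lt (A / c) (one_lt_two : (1:ℝ) < 2)
  obtain ⟨k, hk⟩ := exists_nat_ge (2 * C)
  refine ⟨U + m + k, by omega, ?_⟩
  set u := U + m + k
  have h1 : 2 * C ≤ u := hk.trans (by exact_mod_cast (by omega : k ≤ u))
  have h2 : A / c < 2 ^ u := hm.trans_le (pow_le_pow_right₀ (by norm_num) (by omega))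
  rw [div_lt_iff₀ hc] at h2
  calc A * C ^ u < 2 ^ u * c * C ^ u := by gcongr
    _ = c * (2 * C) ^ u := by rw [mul_pow]; ring
    _ ≤ _ := by gcongr


lemma pow_shuffle (a b c x : ℝ) (m n d : ℕ) (hd : 1 ≤ d) :
    (a * b ^ n * x ^ m) * (c ^ n * x ^ m) ^ (d-1) = a * (b * c ^ (d-1)) ^ n * x ^ (m * d) := by
  obtain ⟨e, rfl⟩ := Nat.exists_eq_add_of_le hd
  rw [Nat.add_sub_cancel_left, mul_add m, pow_add, mul_one, mul_pow, mul_pow, ← pow_mul, ← pow_mul, ← pow_mul, mul_comm e n]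
  ring

lemma xi_transc (l : ℕ) (hl : 1 ≤ l) : Transcendental ℚ (∑' i, bc i * (1 / (l:ℝ)) ^ i) := by
  intro halg
  set ξ : ℝ := ∑' i, bc i * (1 / (l:ℝ)) ^ i with hξ
  obtain ⟨d, hd⟩ : ∃ d, (minpoly ℚ ξ).natDegree = d := ⟨_, rfl⟩
  have hd1 : 1 ≤ d := hd ▸ minpoly.natDegree_pos halg.isIntegral
  obtain ⟨c, hc, hliou⟩ := liouville_lower ξ halg d hd
  obtain ⟨K, hK, hsie⟩ := siegel_aux d hd1
  have hl' : (1:ℝ) ≤ l := by exact_mod_cast hl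
  have hd' : (1:ℝ) ≤ d := by exact_mod_cast hd1
  obtain ⟨x, hx⟩ : ∃ x : ℝ, x = 2 * d * Real.exp 2 := ⟨_, rfl⟩
  have hx1 : 1 ≤ x := by
    have := Real.one_le_exp (by norm_num : (0:ℝ) ≤ 2)
    rw [hx]; nlinarith
  have he1 : 1 ≤ Real.exp 1 := Real.one_le_exp (by norm_num)
  set c0 : ℕ := (d+1)*d+d with hc0
  set C1 : ℝ := 3 * 5 * K * l ^ 2 with hC1
  set D0 : ℝ := (d+1) * Real.exp x with hD0
  set C2 : ℝ := l ^ 2 * 2 * K * x ^ (d+1) * Real.exp 1 with hC2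
  have hC11 : 1 ≤ C1 := by
    have : (1:ℝ) ≤ l ^ 2 := one_le_pow₀ hl'
    rw [hC1]; nlinarith
  have hC21 : 1 ≤ C2 := by
    have h1 : (1:ℝ) ≤ l ^ 2 := one_le_pow₀ hl'
    have h2 : (1:ℝ) ≤ x ^ (d+1) := one_le_pow₀ hx1
    rw [hC2]
    exact one_le_mul_of_one_le_of_one_le (one_le_mul_of_one_le_of_one_le
      (one_le_mul_of_one_le_of_one_le (by linarith) hK) h2) he1
  set C3 : ℝ := C2 * C1 ^ (d-1) * 2 ^ (c0 * d) with hC3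
  have hC31 : 1 ≤ C3 := one_le_mul_of_one_le_of_one_le (one_le_mul_of_one_le_of_one_le hC21 (one_le_pow₀ hC11))
    (one_le_pow₀ (by norm_num))
  obtain ⟨u, hu, hcontra⟩ := asym c D0 (C3 ^ (d+2)) hc (one_le_pow₀ hC31) (4 * d + 1 + c0)
  obtain ⟨n, hn⟩ : ∃ n, n = (d+2) * u := ⟨_, rfl⟩
  have hn3 : 3 * u ≤ n := by rw [hn]; exact Nat.mul_le_mul_right u (by omega)
  obtain ⟨E, hE⟩ : ∃ E, E + u = (d+1) * n := by
    refine ⟨(d+1) * n - u, Nat.sub_add_cancel ?_⟩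
    calc u ≤ n := by omega
      _ ≤ (d+1) * n := Nat.le_mul_of_pos_left _ (by omega)
  obtain ⟨t, ⟨k0, hk0, j0, hj0, htne⟩, htK, htE⟩ := hsie u (by omega) n E hn hE
  have hPz : ∀ k, d < k → Pint n d t k = 0 := by
    intro k hk
    simp [Pint, show ¬ k ≤ d by omega]
  have hz : ∀ k, d < k → Preal n d t k = 0 := by
    intro k hk
    simp [Preal, hPz k hk]
  have hne : Preal n d t ≠ 0 := by
    intro h
    have h1 := congrArg (fun p => Polynomial.coeff p j0) (congrFun h k0)
    simp only [Preal, Polynomial.coeff_map, Pint_coeff, hk0, hj0, true_and, if_true, Pi.zero_apply, Polynomial.coeff_zero,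
      eq_intCast, Int.cast_eq_zero, mul_eq_zero] at h1
    rcases h1 with h1 | h1
    · have := Nat.div_pos (Nat.factorial_le hj0.le) (Nat.factorial_pos j0)
      have h2 : n.factorial / j0.factorial = 0 := by exact_mod_cast h1
      omega
    · exact htne h1
  -- nonvanishing
  obtain ⟨s, hs, hsne⟩ : ∃ s < u + c0 + 1, ∑ k ∈ Finset.range (d+1), (Dop^[s] (Preal n d t) k).eval (1 / (l:ℝ)) * ξ ^ k ≠ 0 := by
    by_contra hcon
    push Not at hcon
    have := zero_estimate (1 / (l:ℝ)) ξ (by positivity) fser fser_isSol (Preal n d t) d n E (u + c0 + 1) hz hne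
      (fun k => (Polynomial.natDegree_map_le).trans (Pint_natDegree n d t k)) ?_ hcon
    · have e : (d+1) * (n + d) + d = (d+1) * n + c0 := by rw [hc0]; ring
      omega
    · rw [PowerSeries.X_pow_dvd_iff]
      intro m hm
      rw [coeff_Ssum_Preal, htE m hm, mul_zero]
  have hup := upper d hd1 n E s K hK t htK htE (1 / (l:ℝ)) (by positivity) (by rw [div_le_one (by positivity)]; exact hl')
  rw [← hξ, ← hx] at hup
  set v := ∑ k ∈ Finset.range (d+1), (Dop^[s] (Preal n d t) k).eval (1 / (l:ℝ)) * ξ ^ k with hv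
  have hsn : s ≤ n := by omega
  have hsn' : (s:ℝ) ≤ n := by exact_mod_cast hsn
  have hn1 : (1:ℝ) ≤ n := by exact_mod_cast (by omega : 1 ≤ n)
  have hnfac : (n.factorial : ℝ) ≤ n ^ n := by exact_mod_cast Nat.factorial_le_pow n
  have hsfac : (s.factorial : ℝ) ≤ n ^ s := by
    have : (s.factorial : ℝ) ≤ s ^ s := by exact_mod_cast Nat.factorial_le_pow s
    exact this.trans (by gcongr)
  have hn2 : (n:ℝ) ≤ 2 ^ n := by exact_mod_cast Nat.lt_two_pow_self.le
  -- integers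
  have hheight := height (Pint n d t) d n n _ (Pint_natDegree n d t) hPz (Pint_height n d t K hK htK) s hsn
  have hq : ∀ k, ∃ q : ℤ, (q : ℝ) = l ^ (n+s) * ((Dop^[s] (Pint n d t) k).map (Int.castRingHom ℝ)).eval (1 / (l:ℝ)) ∧
      |(q:ℝ)| ≤ ((n+s:ℕ)+1) * ((2 * (n + n) + 4 * d + 1) ^ s * (n.factorial * K ^ n) * l ^ (n+s)) := fun k =>
    clear_den _ (n+s) l hl (Dop_natDegree _ n (Pint_natDegree n d t) s k) _ (hheight k)
  choose q hq1 hq2 using hq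
  have hqv : ∑ k ∈ Finset.range (d+1), (q k : ℝ) * ξ ^ k = l ^ (n+s) * v := by
    rw [hv, Finset.mul_sum]
    refine Finset.sum_congr rfl fun k _ => ?_
    rw [hq1, show Preal n d t = fun k => (Pint n d t k).map (Int.castRingHom ℝ) from rfl, Dop_map]
    ring
  have hlN : (l:ℝ) ^ (n+s) ≤ (l ^ 2) ^ n := by
    rw [← pow_mul]
    exact pow_le_pow_right₀ hl' (by omega)
  have hqH : ∀ k ≤ d, |(q k : ℝ)| ≤ C1 ^ n * n ^ (n+s) := by
    intro k _
    refine (hq2 k).trans ?_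
    have h1 : (((n+s:ℕ):ℝ)+1) ≤ 3 ^ n := by
      have : 1 + (n:ℝ) * 2 ≤ (1 + 2) ^ n := one_add_mul_le_pow (by norm_num) n
      push_cast
      norm_num at this
      linarith
    have h2 : ((2 * ((n:ℝ) + n) + 4 * d + 1)) ^ s ≤ 5 ^ n * n ^ s := by
      have : 4 * (d:ℝ) + 1 ≤ n := by exact_mod_cast (by omega : 4 * d + 1 ≤ n)
      calc _ ≤ (5 * (n:ℝ)) ^ s := by gcongr; linarith
        _ = 5 ^ s * n ^ s := mul_pow _ _ _
        _ ≤ _ := by gcongr; norm_num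
    calc _ ≤ (3:ℝ) ^ n * ((5 ^ n * n ^ s) * (n ^ n * K ^ n) * (l ^ 2) ^ n) := by gcongr
      _ = _ := by rw [hC1]; simp only [mul_pow, pow_add]; ring
  have hfin := hliou q (C1 ^ n * n ^ (n+s)) (one_le_mul_of_one_le_of_one_le (one_le_pow₀ hC11) (one_le_pow₀ hn1)) hqH
    (by rw [hqv]; exact mul_ne_zero (by positivity) hsne)
  rw [hqv, abs_mul, abs_of_nonneg (by positivity : (0:ℝ) ≤ (l:ℝ) ^ (n+s))] at hfin
  have hEfac : (n:ℝ) ^ E ≤ Real.exp 1 ^ n * E.factorial := by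
    have := Real.pow_div_factorial_le_exp (n:ℝ) (by positivity) E
    rw [div_le_iff₀ (by positivity)] at this
    rwa [← Real.exp_nat_mul, mul_one]
  have hxE : x ^ E ≤ (x ^ (d+1)) ^ n := by
    rw [← pow_mul]
    exact pow_le_pow_right₀ hx1 (by omega)
  have hW : (l:ℝ) ^ (n+s) * |v| * n ^ E ≤ D0 * C2 ^ n * n ^ (n+s) := by
    calc (l:ℝ) ^ (n+s) * |v| * n ^ E ≤ (l ^ 2) ^ n * ((n:ℝ) ^ n * n ^ s * ((d+1) * 2 ^ n * K ^ n) * ((x ^ (d+1)) ^ n / E.factorial) * Real.exp x)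
          * (Real.exp 1 ^ n * E.factorial) := by
          have : |v| ≤ ((n:ℝ) ^ n * n ^ s * ((d+1) * 2 ^ n * K ^ n) * ((x ^ (d+1)) ^ n / E.factorial) * Real.exp x) := by
            refine hup.trans ?_
            gcongr
          gcongr
      _ = _ := by
          have : (E.factorial : ℝ) ≠ 0 := by positivity
          rw [hD0, hC2, mul_pow, mul_pow, mul_pow, mul_pow, pow_add (n:ℝ) n s]
          field_simp
  have hexp : (n+s)*d + u ≤ E + c0 * d := by
    have h1 : s * d ≤ (u + c0) * d := Nat.mul_le_mul_right d (by omega)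
    have h2 : (d+2) * u = d * u + 2 * u := by ring
    nlinarith
  have hmain : c * (n:ℝ) ^ E ≤ D0 * (C2 * C1 ^ (d-1)) ^ n * n ^ ((n+s)*d) := by
    calc c * (n:ℝ) ^ E ≤ ((l:ℝ) ^ (n+s) * |v| * (C1 ^ n * n ^ (n+s)) ^ (d-1)) * n ^ E := by gcongr
      _ = ((l:ℝ) ^ (n+s) * |v| * n ^ E) * (C1 ^ n * n ^ (n+s)) ^ (d-1) := by ring
      _ ≤ (D0 * C2 ^ n * n ^ (n+s)) * (C1 ^ n * n ^ (n+s)) ^ (d-1) := by gcongr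
      _ = _ := by
        exact pow_shuffle D0 C2 C1 n (n+s) n d hd1
  have hmain2 : c * (n:ℝ) ^ u ≤ D0 * C3 ^ n := by
    have hpos : (0:ℝ) < n ^ ((n+s)*d) := by positivity
    refine le_of_mul_le_mul_right ?_ hpos
    calc c * (n:ℝ) ^ u * n ^ ((n+s)*d) = c * n ^ ((n+s)*d + u) := by rw [pow_add]; ring
      _ ≤ c * n ^ (E + c0 * d) := by gcongr
      _ = c * n ^ E * n ^ (c0 * d) := by rw [pow_add]; ring
      _ ≤ (D0 * (C2 * C1 ^ (d-1)) ^ n * n ^ ((n+s)*d)) * (2 ^ n) ^ (c0 * d) := by gcongr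
      _ = _ := by
        rw [hC3, mul_pow _ ((2:ℝ) ^ (c0 * d)) n, ← pow_mul, ← pow_mul, mul_comm n (c0 * d)]
        ring
  have hun : (u:ℝ) ≤ n := by exact_mod_cast (by omega : u ≤ n)
  have : c * (u:ℝ) ^ u ≤ D0 * (C3 ^ (d+2)) ^ u := by
    rw [← pow_mul, ← hn]
    refine le_trans ?_ hmain2
    gcongr
  linarith

theorem transcendental_error_sum_exp :
    (∀ l : ℕ, 2 ≤ l →
      Transcendental ℚ
        ((2 * Real.exp (1 / l) / Real.sqrt l) *
          ∫ t in (0:ℝ)..(1 / Real.sqrt l), Real.exp (-t ^ 2))) ∧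
    Transcendental ℚ (Real.exp 1 * ∫ t in (0:ℝ)..1, Real.exp (-t ^ 2)) := by
  constructor
  · intro l hl halg
    refine xi_transc l (by omega) ?_
    have hl0 : (0:ℝ) < l := by exact_mod_cast (by omega : 0 < l)
    have h := fval (1 / Real.sqrt l) (by positivity)
    have hsq : (1 / Real.sqrt (l:ℝ)) ^ 2 = 1 / l := by
      rw [div_pow, Real.sq_sqrt hl0.le, one_pow]
    rw [hsq] at h
    have e : ∑' i, bc i * (1 / (l:ℝ)) ^ i = algebraMap ℚ ℝ ((l:ℚ) / 2) *
        ((2 * Real.exp (1 / l) / Real.sqrt l) * ∫ t in (0:ℝ)..(1 / Real.sqrt l), Real.exp (-t ^ 2)) := by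
      have h2 : (2 * Real.exp (1 / l) / Real.sqrt l) * ∫ t in (0:ℝ)..(1 / Real.sqrt l), Real.exp (-t ^ 2)
          = 2 / Real.sqrt l * (Real.exp (1 / l) * ∫ t in (0:ℝ)..(1 / Real.sqrt l), Real.exp (-t ^ 2)) := by ring
      rw [h2, ← h]
      have h3 : 2 / Real.sqrt l * (1 / Real.sqrt l * ∑' i, bc i * (1 / (l:ℝ)) ^ i)
        = 2 * (1 / Real.sqrt (l:ℝ)) ^ 2 * ∑' i, bc i * (1 / (l:ℝ)) ^ i := by ring
      rw [h3, hsq]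
      simp only [eq_ratCast]
      push_cast
      field_simp
    rw [e]
    exact (isAlgebraic_algebraMap _).mul halg
  · have h := fval 1 (by norm_num)
    have h1 := xi_transc 1 le_rfl
    norm_num at h h1
    rw [← h]
    exact h1
end

section
/- The real number (√7/49)·log((3−√7)/(3+√7)) − 3π/2 − 4/7 is transcendental (over ℚ). -/
open Real

open Polynomial in
/-- The operator `β d/dX + c` on polynomials. -/
noncomputable def bkOp {R : Type*} [CommRing R] (β c : R) : Module.End R R[X] :=
  β • (Polynomial.derivative : R[X] →ₗ[R] R[X]) + c • (1 : Module.End R R[X])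

open Polynomial in
theorem bkOp_apply {R : Type*} [CommRing R] (β c : R) (q : R[X]) :
    bkOp β c q = β • derivative q + c • q := rfl

open Polynomial in
theorem bkOp_coeff {R : Type*} [CommRing R] (β c : R) (q : R[X]) (n : ℕ) :
    (bkOp β c q).coeff n = β * (q.coeff (n + 1) * (n + 1)) + c * q.coeff n := by
  simp [bkOp_apply, coeff_derivative]

open Polynomial in
theorem bkOp_natDegree {R : Type*} [CommRing R] (β c : R) {q : R[X]} {d : ℕ}
    (h : q.natDegree ≤ d) : (bkOp β c q).natDegree ≤ d := by
  rw [natDegree_le_iff_coeff_eq_zero] at h ⊢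
  intro n hn
  rw [bkOp_coeff, h n hn, h (n + 1) (by omega)]
  simp

open Polynomial in
theorem bkOp_pow_natDegree {R : Type*} [CommRing R] (β c : R) {q : R[X]} {d : ℕ}
    (h : q.natDegree ≤ d) (k : ℕ) : (((bkOp β c) ^ k) q).natDegree ≤ d := by
  induction k with
  | zero => simpa using h
  | succ k ih => rw [pow_succ', Module.End.mul_apply]; exact bkOp_natDegree _ _ ih

open Polynomial in
theorem bkOp_pow_coeff {R : Type*} [CommRing R] (β c : R) {q : R[X]} {d : ℕ}
    (h : q.natDegree ≤ d) (k : ℕ) :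
    (((bkOp β c) ^ k) q).coeff d = c ^ k * q.coeff d := by
  induction k with
  | zero => simp
  | succ k ih =>
    rw [pow_succ', Module.End.mul_apply, bkOp_coeff, ih]
    have := (natDegree_le_iff_coeff_eq_zero.1 (bkOp_pow_natDegree β c h k)) (d + 1) (by omega)
    rw [this]; ring

open Polynomial in
theorem bkOp_aeval_natDegree {R : Type*} [CommRing R] (β c : R) {q : R[X]} {d : ℕ}
    (h : q.natDegree ≤ d) (f : R[X]) : ((aeval (bkOp β c) f) q).natDegree ≤ d := by
  rw [aeval_eq_sum_range, LinearMap.sum_apply]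
  refine natDegree_sum_le_of_forall_le _ _ fun i _ => ?_
  rw [LinearMap.smul_apply]
  exact (natDegree_smul_le _ _).trans (bkOp_pow_natDegree _ _ h _)

open Polynomial in
theorem bkOp_aeval_coeff {R : Type*} [CommRing R] (β c : R) {q : R[X]} {d : ℕ}
    (h : q.natDegree ≤ d) (f : R[X]) :
    ((aeval (bkOp β c) f) q).coeff d = f.eval c * q.coeff d := by
  rw [aeval_eq_sum_range, LinearMap.sum_apply, finsetSum_coeff, eval_eq_sum_range,
    Finset.sum_mul]
  refine Finset.sum_congr rfl fun i _ => ?_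
  rw [LinearMap.smul_apply, coeff_smul, bkOp_pow_coeff β c h, smul_eq_mul, mul_assoc]

open Polynomial in
theorem bk_coeff_prod {R ι : Type*} [CommRing R] (s : Finset ι) (f : ι → R[X]) (d : ι → ℕ)
    (h : ∀ i ∈ s, (f i).natDegree ≤ d i) :
    (∏ i ∈ s, f i).natDegree ≤ ∑ i ∈ s, d i ∧
    (∏ i ∈ s, f i).coeff (∑ i ∈ s, d i) = ∏ i ∈ s, (f i).coeff (d i) := by
  classical
  induction s using Finset.induction_on with
  | empty => simp
  | insert a s ha ih =>
    obtain ⟨h1, h2⟩ := ih fun i hi => h i (Finset.mem_insert_of_mem hi)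
    have h3 := h a (Finset.mem_insert_self _ _)
    rw [Finset.prod_insert ha, Finset.sum_insert ha, Finset.prod_insert ha]
    refine ⟨natDegree_mul_le.trans (by omega), ?_⟩
    rw [coeff_mul_add_eq_of_natDegree_le h3 h1, h2]

open Polynomial in
theorem bk_det {R ι : Type*} [CommRing R] [Fintype ι] [DecidableEq ι]
    (M : Matrix ι ι R[X]) (d : ι → ℕ) (h : ∀ i j, (M i j).natDegree ≤ d j) :
    M.det.natDegree ≤ ∑ j, d j ∧
    M.det.coeff (∑ j, d j) = (Matrix.of fun i j => (M i j).coeff (d j)).det := by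
  rw [Matrix.det_apply, Matrix.det_apply]
  have key := fun σ : Equiv.Perm ι =>
    bk_coeff_prod Finset.univ (fun i => M (σ i) i) d (fun i _ => h _ _)
  refine ⟨natDegree_sum_le_of_forall_le _ _ fun σ _ => ?_, ?_⟩
  · exact (natDegree_smul_le _ _).trans (key σ).1
  · rw [finsetSum_coeff]
    refine Finset.sum_congr rfl fun σ _ => ?_
    rw [coeff_smul, (key σ).2]
    rfl

/-- Index set of the frequencies. -/
abbrev BkI (L : ℕ) := Fin L × Fin L

open Polynomial in
/-- The operator `∂₁` on families of polynomials. -/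
noncomputable def bkD1 {R : Type*} [CommRing R] (L : ℕ) (β : R) : Module.End R (BkI L → R[X]) :=
  LinearMap.pi fun i => (bkOp β ((i.1 : ℕ) : R)) ∘ₗ LinearMap.proj i

open Polynomial in
/-- The operator `∂₂` on families of polynomials. -/
noncomputable def bkD2 {R : Type*} [CommRing R] (L : ℕ) (β : R) : Module.End R (BkI L → R[X]) :=
  LinearMap.pi fun i => (bkOp β ((i.2 : ℕ) : R)) ∘ₗ LinearMap.proj i

open Polynomial in
theorem bkD1_pow {R : Type*} [CommRing R] (L : ℕ) (β : R) (k : ℕ) (q : BkI L → R[X]) (i) :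
    ((bkD1 L β) ^ k) q i = ((bkOp β ((i.1 : ℕ) : R)) ^ k) (q i) := by
  induction k with
  | zero => simp
  | succ k ih => rw [pow_succ', pow_succ', Module.End.mul_apply, Module.End.mul_apply, ← ih]; rfl

open Polynomial in
theorem bkD2_pow {R : Type*} [CommRing R] (L : ℕ) (β : R) (k : ℕ) (q : BkI L → R[X]) (i) :
    ((bkD2 L β) ^ k) q i = ((bkOp β ((i.2 : ℕ) : R)) ^ k) (q i) := by
  induction k with
  | zero => simp
  | succ k ih => rw [pow_succ', pow_succ', Module.End.mul_apply, Module.End.mul_apply, ← ih]; rfl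

theorem bkOp_comm {R : Type*} [CommRing R] (β c β' c' : R) :
    Commute (bkOp β c) (bkOp β' c') := by
  refine LinearMap.ext fun q => ?_
  simp only [Module.End.mul_apply, bkOp_apply, map_add, Polynomial.derivative_smul,
    smul_smul]
  rw [mul_comm β β', mul_comm c c', mul_comm β c', mul_comm c β']
  abel

theorem bkD_comm {R : Type*} [CommRing R] (L : ℕ) (β β' : R) :
    Commute (bkD1 L β) (bkD2 L β') := by
  refine LinearMap.ext fun q => funext fun i => ?_
  exact LinearMap.congr_fun (bkOp_comm β ((i.1 : ℕ) : R) β' ((i.2 : ℕ) : R)) (q i)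

open Polynomial in
/-- The value of the auxiliary function at `s`, in the ring `R`. -/
noncomputable def bkV {R : Type*} [CommRing R] (L : ℕ) (δ a₁ a₂ : R) (s : ℕ) :
    (BkI L → R[X]) →ₗ[R] R :=
  ∑ i : BkI L, (a₁ ^ ((i.1 : ℕ) * s) * a₂ ^ ((i.2 : ℕ) * s)) •
    ((Polynomial.leval ((s : R) * δ)) ∘ₗ LinearMap.proj i)

open Polynomial in
theorem bkV_apply {R : Type*} [CommRing R] (L : ℕ) (δ a₁ a₂ : R) (s : ℕ) (q : BkI L → R[X]) :
    bkV L δ a₁ a₂ s q = ∑ i : BkI L, (a₁ ^ ((i.1 : ℕ) * s) * a₂ ^ ((i.2 : ℕ) * s)) *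
      (q i).eval ((s : R) * δ) := by
  simp [bkV]

open Polynomial in
/-- Zero estimate. -/
theorem bk_zero_estimate {R : Type*} [CommRing R] [IsDomain R] [CharZero R] (L : ℕ)
    (b₁ b₂ δ a₁ a₂ : R) (hδ : δ ≠ 0) (ha₁ : a₁ ≠ 0) (ha₂ : a₂ ≠ 0)
    (p : BkI L → R[X]) (hdeg : ∀ i, (p i).natDegree < L)
    (hv : ∀ k < L, ∀ l < L, ∀ s, 1 ≤ s → s ≤ L ^ 3 →
      bkV L δ a₁ a₂ s (((bkD1 L b₁) ^ k) (((bkD2 L b₂) ^ l) p)) = 0) : p = 0 := by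
  classical
  by_contra hp
  have hL : 0 < L := by
    rcases Nat.eq_zero_or_pos L with h | h
    · subst h
      exact absurd (_root_.funext fun i : BkI 0 => i.1.elim0) hp
    · exact h
  let Λ := {i : BkI L // p i ≠ 0}
  obtain ⟨i₀, hi₀⟩ : ∃ i, p i ≠ 0 := by
    by_contra h; push Not at h; exact hp (_root_.funext h)
  let f : Fin L → R[X] := fun m => ∏ a ∈ Finset.univ.erase m, (X - C ((a : ℕ) : R))
  have hfdeg : ∀ m, (f m).natDegree < L := by
    intro m
    have : (f m).natDegree ≤ ∑ a ∈ Finset.univ.erase m, 1 := by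
      refine (natDegree_prod_le _ _).trans (Finset.sum_le_sum fun a _ => ?_)
      exact natDegree_X_sub_C_le _
    simp at this
    omega
  have hf0 : ∀ m n : Fin L, m ≠ n → (f m).eval ((n : ℕ) : R) = 0 := by
    intro m n h
    simp only [f, eval_prod]
    exact Finset.prod_eq_zero (i := n) (by simp [h.symm]) (by simp)
  have hf1 : ∀ m : Fin L, (f m).eval ((m : ℕ) : R) ≠ 0 := by
    intro m
    simp only [f, eval_prod]
    refine Finset.prod_ne_zero_iff.2 fun a ha => ?_
    have : a ≠ m := (Finset.mem_erase.1 ha).1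
    simp only [eval_sub, eval_X, eval_C, ne_eq, sub_eq_zero, Nat.cast_inj]
    intro h; exact this (Fin.ext h.symm)
  let E : BkI L → BkI L → R[X] := fun μ i =>
    (aeval (bkOp b₁ ((i.1 : ℕ) : R)) (f μ.1)) ((aeval (bkOp b₂ ((i.2 : ℕ) : R)) (f μ.2)) (p i))
  have hE : ∀ μ i, E μ i = ∑ k ∈ Finset.range L, ∑ l ∈ Finset.range L,
      ((f μ.1).coeff k * (f μ.2).coeff l) •
        (((bkD1 L b₁) ^ k) (((bkD2 L b₂) ^ l) p)) i := by
    intro μ i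
    simp only [E]
    rw [aeval_eq_sum_range' (hfdeg _), aeval_eq_sum_range' (hfdeg _), LinearMap.sum_apply]
    refine Finset.sum_congr rfl fun k _ => ?_
    rw [LinearMap.smul_apply, LinearMap.sum_apply, map_sum, Finset.smul_sum]
    refine Finset.sum_congr rfl fun l _ => ?_
    rw [LinearMap.smul_apply, map_smul, smul_smul, bkD1_pow, bkD2_pow]
  have hEV : ∀ μ s, 1 ≤ s → s ≤ L ^ 3 → bkV L δ a₁ a₂ s (E μ) = 0 := by
    intro μ s h1 h2
    have : E μ = ∑ k ∈ Finset.range L, ∑ l ∈ Finset.range L,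
      ((f μ.1).coeff k * (f μ.2).coeff l) •
        (((bkD1 L b₁) ^ k) (((bkD2 L b₂) ^ l) p)) := by
      refine _root_.funext fun i => ?_
      rw [hE]
      simp [Finset.sum_apply]
    rw [this, map_sum]
    refine Finset.sum_eq_zero fun k hk => ?_
    rw [map_sum]
    refine Finset.sum_eq_zero fun l hl => ?_
    rw [map_smul, hv k (Finset.mem_range.1 hk) l (Finset.mem_range.1 hl) s h1 h2, smul_zero]
  let M : Matrix Λ Λ R[X] := Matrix.of fun μ i => E μ.1 i.1
  let d : Λ → ℕ := fun i => (p i.1).natDegree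
  have hMd : ∀ i j, (M i j).natDegree ≤ d j := by
    intro i j
    exact bkOp_aeval_natDegree _ _ (bkOp_aeval_natDegree _ _ le_rfl _) _
  obtain ⟨hD1, hD2⟩ := bk_det M d hMd
  have hcoef : (Matrix.of fun i j => (M i j).coeff (d j)) = Matrix.diagonal
      (fun i : Λ => (f i.1.1).eval ((i.1.1 : ℕ) : R) * ((f i.1.2).eval ((i.1.2 : ℕ) : R) *
        (p i.1).leadingCoeff)) := by
    ext i j
    have : (M i j).coeff (d j) = (f i.1.1).eval ((j.1.1 : ℕ) : R) *
        ((f i.1.2).eval ((j.1.2 : ℕ) : R) * (p j.1).leadingCoeff) := by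
      change (E i.1 j.1).coeff (p j.1).natDegree = _
      simp only [E]
      rw [bkOp_aeval_coeff _ _ (bkOp_aeval_natDegree _ _ le_rfl _),
        bkOp_aeval_coeff _ _ le_rfl]
      rfl
    rw [Matrix.of_apply, this]
    by_cases hij : i = j
    · subst hij; simp
    · rw [Matrix.diagonal_apply_ne _ hij]
      by_cases h1 : i.1.1 = j.1.1
      · have h2 : i.1.2 ≠ j.1.2 := fun h2 => hij (Subtype.ext (Prod.ext h1 h2))
        rw [hf0 _ _ h2]; simp
      · rw [hf0 _ _ h1]; simp
  have hne : M.det ≠ 0 := by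
    intro h0
    rw [h0, hcoef, Matrix.det_diagonal, coeff_zero] at hD2
    refine (Finset.prod_ne_zero_iff.2 fun i _ => ?_) hD2.symm
    exact mul_ne_zero (hf1 _) (mul_ne_zero (hf1 _) (leadingCoeff_ne_zero.2 i.2))
  apply hne
  refine eq_zero_of_natDegree_lt_card_of_eval_eq_zero (ι := Fin (L ^ 3)) _
    (f := fun s => (((s : ℕ) + 1 : ℕ) : R) * δ) ?_ ?_ ?_
  · intro s t hst
    have := mul_right_cancel₀ hδ hst
    have := Nat.cast_injective this
    exact Fin.ext (by omega)
  · intro s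
    set x := (((s : ℕ) + 1 : ℕ) : R) * δ with hx
    have : (M.det).eval x = ((evalRingHom x).mapMatrix M).det := by
      rw [← RingHom.map_det]; rfl
    rw [this, ← Matrix.exists_mulVec_eq_zero_iff]
    refine ⟨fun i : Λ => a₁ ^ ((i.1.1 : ℕ) * ((s : ℕ) + 1)) * a₂ ^ ((i.1.2 : ℕ) * ((s : ℕ) + 1)),
      ?_, ?_⟩
    · intro h
      have := congrFun h ⟨i₀, hi₀⟩
      exact mul_ne_zero (pow_ne_zero _ ha₁) (pow_ne_zero _ ha₂) this
    · refine _root_.funext fun μ => ?_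
      have h3 := hEV μ.1 ((s : ℕ) + 1) (by omega) (by have := s.2; omega)
      rw [bkV_apply] at h3
      simp only [Matrix.mulVec, dotProduct, Pi.zero_apply]
      rw [← h3, ← Finset.sum_subset (Finset.subset_univ (Finset.univ.filter fun i => p i ≠ 0))]
      · rw [Finset.sum_subtype (p := fun i => p i ≠ 0) (Finset.univ.filter fun i => p i ≠ 0)
          (by simp)]
        refine Finset.sum_congr rfl fun i _ => ?_
        rw [mul_comm]; rfl
      · intro i _ hi
        have : p i = 0 := by simpa using hi
        simp [E, this]
  · rw [Fintype.card_fin]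
    refine hD1.trans_lt ?_
    have h1 : ∑ j : Λ, d j ≤ ∑ j : Λ, (L - 1) :=
      Finset.sum_le_sum fun j _ => by have := hdeg j.1; simp only [d]; omega
    have h2 : Fintype.card Λ ≤ L * L := by
      refine (Fintype.card_subtype_le _).trans ?_
      simp
    rw [Finset.sum_const, smul_eq_mul, Finset.card_univ] at h1
    calc _ ≤ _ := h1
      _ ≤ (L * L) * (L - 1) := Nat.mul_le_mul_right _ h2
      _ < (L * L) * L := Nat.mul_lt_mul_of_pos_left (by omega) (by positivity)
      _ = L ^ 3 := by ring
open Topology in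
theorem bk_factor_one (g : ℂ → ℂ) (hg : Differentiable ℂ g) (a : ℂ) (t : ℕ)
    (h : (t : ℕ∞) ≤ analyticOrderAt g a) :
    ∃ h : ℂ → ℂ, Differentiable ℂ h ∧ ∀ z, g z = (z - a) ^ t * h z := by
  obtain ⟨g₀, hg₀, he⟩ := (natCast_le_analyticOrderAt (hg.analyticAt a)).1 h
  refine ⟨Function.update (fun z => g z / (z - a) ^ t) a (g₀ a), ?_, ?_⟩
  · intro z
    by_cases hz : z = a
    · subst hz
      refine hg₀.differentiableAt.congr_of_eventuallyEq ?_
      filter_upwards [he] with w hw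
      by_cases hwz : w = z
      · subst hwz; simp
      · rw [Function.update_of_ne hwz, hw, smul_eq_mul, mul_div_cancel_left₀]
        exact pow_ne_zero _ (sub_ne_zero.2 hwz)
    · have : DifferentiableAt ℂ (fun z => g z / (z - a) ^ t) z := by
        refine (hg z).div (by fun_prop) (pow_ne_zero _ (sub_ne_zero.2 hz))
      refine this.congr_of_eventuallyEq ?_
      filter_upwards [isOpen_ne.mem_nhds hz] with w hw
      rw [Function.update_of_ne hw]
  · intro z
    by_cases hz : z = a
    · subst hz
      have := he.self_of_nhds
      simpa using this
    · rw [Function.update_of_ne hz, mul_div_cancel₀]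
      exact pow_ne_zero _ (sub_ne_zero.2 hz)

theorem bk_factor (s : Finset ℂ) (t : ℕ) (g : ℂ → ℂ) (hg : Differentiable ℂ g)
    (h : ∀ a ∈ s, (t : ℕ∞) ≤ analyticOrderAt g a) :
    ∃ h : ℂ → ℂ, Differentiable ℂ h ∧ ∀ z, g z = (∏ a ∈ s, (z - a) ^ t) * h z := by
  classical
  induction s using Finset.induction_on generalizing g with
  | empty => exact ⟨g, hg, by simp⟩
  | insert a s ha ih =>
    obtain ⟨g₁, hg₁, he⟩ := bk_factor_one g hg a t (h a (Finset.mem_insert_self _ _))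
    obtain ⟨h₁, hh₁, he₁⟩ := ih g₁ hg₁ (by
      intro b hb
      have hba : b ≠ a := fun hh => ha (hh ▸ hb)
      have h1 := h b (Finset.mem_insert_of_mem hb)
      have h2 : g = (fun z => (z - a) ^ t) * g₁ := funext he
      have h3 : AnalyticAt ℂ (fun z : ℂ => (z - a) ^ t) b := by fun_prop
      rw [h2, analyticOrderAt_mul h3 (hg₁.analyticAt b), h3.analyticOrderAt_eq_zero.2
        (pow_ne_zero _ (sub_ne_zero.2 hba)), zero_add] at h1
      exact h1)
    refine ⟨h₁, hh₁, fun z => ?_⟩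
    rw [Finset.prod_insert ha, he, he₁, mul_assoc]

/-- Schwarz lemma. -/
theorem bk_schwarz (S S' t : ℕ) (hS : S ≤ S') (hS' : 1 ≤ S') (g : ℂ → ℂ)
    (hg : Differentiable ℂ g)
    (h : ∀ s : ℕ, 1 ≤ s → s ≤ S → ∀ i < t, iteratedDeriv i g (s : ℂ) = 0)
    (B : ℝ) (hB : ∀ z : ℂ, ‖z‖ ≤ 4 * S' → ‖g z‖ ≤ B) (s' : ℕ) (hs : s' ≤ S') :
    (3 : ℝ) ^ (t * S) * ‖g s'‖ ≤ B := by
  classical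
  let P : Finset ℂ := (Finset.Icc 1 S).image (fun n : ℕ => (n : ℂ))
  have hPcard : P.card = S := by
    rw [Finset.card_image_of_injective _ Nat.cast_injective]; simp
  obtain ⟨k, hk, he⟩ := bk_factor P t g hg (by
    intro a ha
    obtain ⟨n, hn, rfl⟩ := Finset.mem_image.1 ha
    rw [Finset.mem_Icc] at hn
    rw [natCast_le_analyticOrderAt_iff_iteratedDeriv_eq_zero (hg.analyticAt _)]
    exact h n hn.1 hn.2)
  have hSr : (1 : ℝ) ≤ S' := by exact_mod_cast hS'
  have hX : (0 : ℝ) < (3 * S') ^ (t * S) := by positivity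
  have hlow : ∀ z : ℂ, ‖z‖ = 4 * S' → (3 * (S' : ℝ)) ^ (t * S) ≤ ‖∏ a ∈ P, (z - a) ^ t‖ := by
    intro z hz
    rw [norm_prod, pow_mul]
    have : ((3 * (S' : ℝ)) ^ t) ^ S = ∏ a ∈ P, (3 * (S' : ℝ)) ^ t := by
      rw [Finset.prod_const, hPcard]
    rw [this]
    refine Finset.prod_le_prod (fun _ _ => by positivity) fun a ha => ?_
    obtain ⟨n, hn, rfl⟩ := Finset.mem_image.1 ha
    rw [Finset.mem_Icc] at hn
    rw [norm_pow]
    refine pow_le_pow_left₀ (by positivity) ?_ _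
    have h1 := norm_sub_norm_le z (n : ℂ)
    rw [hz, Complex.norm_natCast] at h1
    have : (n : ℝ) ≤ S' := by exact_mod_cast hn.2.trans hS
    linarith
  have hup : ‖∏ a ∈ P, ((s' : ℂ) - a) ^ t‖ ≤ (S' : ℝ) ^ (t * S) := by
    rw [norm_prod, pow_mul]
    have : ((S' : ℝ) ^ t) ^ S = ∏ a ∈ P, (S' : ℝ) ^ t := by
      rw [Finset.prod_const, hPcard]
    rw [this]
    refine Finset.prod_le_prod (fun _ _ => by positivity) fun a ha => ?_
    obtain ⟨n, hn, rfl⟩ := Finset.mem_image.1 ha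
    rw [Finset.mem_Icc] at hn
    rw [norm_pow]
    refine pow_le_pow_left₀ (by positivity) ?_ _
    have h2 : ((s' : ℂ) - n) = (((s' : ℝ) - n : ℝ) : ℂ) := by push_cast; rfl
    rw [h2, Complex.norm_real, Real.norm_eq_abs, abs_le]
    have : (n : ℝ) ≤ S' := by exact_mod_cast hn.2.trans hS
    have : (s' : ℝ) ≤ S' := by exact_mod_cast hs
    have : (0 : ℝ) ≤ n := by positivity
    have : (0 : ℝ) ≤ s' := by positivity
    constructor <;> linarith
  have hkb : ‖k s'‖ ≤ B / (3 * S') ^ (t * S) := by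
    refine Complex.norm_le_of_forall_mem_frontier_norm_le (U := Metric.ball (0 : ℂ) (4 * S'))
      Metric.isBounded_ball hk.diffContOnCl ?_ ?_
    · intro z hz
      rw [frontier_ball _ (by positivity)] at hz
      have hz' : ‖z‖ = 4 * S' := by simpa using hz
      rw [le_div_iff₀ hX]
      have h1 := hB z hz'.le
      rw [he, norm_mul] at h1
      have h2 := mul_le_mul_of_nonneg_right (hlow z hz') (norm_nonneg (k z))
      linarith
    · apply subset_closure
      rw [Metric.mem_ball, dist_zero_right, Complex.norm_natCast]
      have : (s' : ℝ) ≤ S' := by exact_mod_cast hs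
      linarith
  rw [he, norm_mul]
  rw [le_div_iff₀ hX, mul_pow] at hkb
  calc (3 : ℝ) ^ (t * S) * (‖∏ a ∈ P, ((s' : ℂ) - a) ^ t‖ * ‖k s'‖)
      ≤ (3 : ℝ) ^ (t * S) * ((S' : ℝ) ^ (t * S) * ‖k s'‖) := by gcongr
    _ ≤ B := by linarith

open Polynomial in
/-- The auxiliary entire function attached to a family of polynomials. -/
noncomputable def bkG (L : ℕ) (δ ℓ₁ ℓ₂ : ℂ) (q : BkI L → ℂ[X]) (z : ℂ) : ℂ :=
  ∑ i : BkI L, (q i).eval (δ * z) * Complex.exp (((i.1 : ℕ) * ℓ₁ + (i.2 : ℕ) * ℓ₂) * z)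

open Polynomial in
theorem bkG_hasDerivAt (L : ℕ) (δ ℓ₁ ℓ₂ b₁ b₂ : ℂ) (hδ : b₁ * ℓ₁ + b₂ * ℓ₂ = δ)
    (q : BkI L → ℂ[X]) (z : ℂ) :
    HasDerivAt (bkG L δ ℓ₁ ℓ₂ q)
      (ℓ₁ * bkG L δ ℓ₁ ℓ₂ (bkD1 L b₁ q) z + ℓ₂ * bkG L δ ℓ₁ ℓ₂ (bkD2 L b₂ q) z) z := by
  have key : ∀ i : BkI L, HasDerivAt
      (fun z => (q i).eval (δ * z) * Complex.exp (((i.1 : ℕ) * ℓ₁ + (i.2 : ℕ) * ℓ₂) * z))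
      (ℓ₁ * ((bkD1 L b₁ q i).eval (δ * z) *
          Complex.exp (((i.1 : ℕ) * ℓ₁ + (i.2 : ℕ) * ℓ₂) * z)) +
        ℓ₂ * ((bkD2 L b₂ q i).eval (δ * z) *
          Complex.exp (((i.1 : ℕ) * ℓ₁ + (i.2 : ℕ) * ℓ₂) * z))) z := by
    intro i
    have h1 : HasDerivAt (fun z => (q i).eval (δ * z)) ((derivative (q i)).eval (δ * z) * (δ * 1)) z :=
      ((q i).hasDerivAt (δ * z)).comp z ((hasDerivAt_id z).const_mul δ)
    have h2 := (((hasDerivAt_id z).const_mul ((i.1 : ℕ) * ℓ₁ + (i.2 : ℕ) * ℓ₂))).cexp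
    refine (h1.mul h2).congr_deriv ?_
    have e1 : bkD1 L b₁ q i = bkOp b₁ ((i.1 : ℕ) : ℂ) (q i) := rfl
    have e2 : bkD2 L b₂ q i = bkOp b₂ ((i.2 : ℕ) : ℂ) (q i) := rfl
    rw [e1, e2, bkOp_apply, bkOp_apply]
    simp only [eval_add, eval_smul, smul_eq_mul, id]
    rw [← hδ]
    ring
  have := HasDerivAt.fun_sum (u := Finset.univ) fun i _ => key i
  refine this.congr_deriv ?_
  rw [Finset.sum_add_distrib, bkG, bkG, Finset.mul_sum, Finset.mul_sum]

open Polynomial in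
theorem bkG_differentiable (L : ℕ) (δ ℓ₁ ℓ₂ : ℂ) (q : BkI L → ℂ[X]) :
    Differentiable ℂ (bkG L δ ℓ₁ ℓ₂ q) := by
  unfold bkG
  refine Differentiable.fun_sum fun i _ => ?_
  have : Differentiable ℂ fun z => (q i).eval (δ * z) :=
    (q i).differentiable.comp (by fun_prop)
  fun_prop

open Polynomial in
theorem bkG_iteratedDeriv (L : ℕ) (δ ℓ₁ ℓ₂ b₁ b₂ : ℂ) (hδ : b₁ * ℓ₁ + b₂ * ℓ₂ = δ)
    (q : BkI L → ℂ[X]) (T : ℕ) (s : ℂ)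
    (h : ∀ k < T, ∀ l < T, bkG L δ ℓ₁ ℓ₂ (((bkD1 L b₁) ^ k) (((bkD2 L b₂) ^ l) q)) s = 0)
    (n k l : ℕ) (hk : k + n < T) (hl : l + n < T) :
    iteratedDeriv n (bkG L δ ℓ₁ ℓ₂ (((bkD1 L b₁) ^ k) (((bkD2 L b₂) ^ l) q))) s = 0 := by
  induction n generalizing k l with
  | zero => simpa using h k (by omega) l (by omega)
  | succ n ih =>
    rw [iteratedDeriv_succ']
    have e : deriv (bkG L δ ℓ₁ ℓ₂ (((bkD1 L b₁) ^ k) (((bkD2 L b₂) ^ l) q))) =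
        fun z => ℓ₁ * bkG L δ ℓ₁ ℓ₂ (((bkD1 L b₁) ^ (k + 1)) (((bkD2 L b₂) ^ l) q)) z +
          ℓ₂ * bkG L δ ℓ₁ ℓ₂ (((bkD1 L b₁) ^ k) (((bkD2 L b₂) ^ (l + 1)) q)) z := by
      funext z
      rw [(bkG_hasDerivAt L δ ℓ₁ ℓ₂ b₁ b₂ hδ _ z).deriv]
      congr 3
      · rw [pow_succ', Module.End.mul_apply]
      · rw [← Module.End.mul_apply, ((bkD_comm L b₁ b₂).pow_left k).symm.eq, Module.End.mul_apply,
          pow_succ' _ l, Module.End.mul_apply]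
    have hc : ∀ q, ContDiff ℂ (n : WithTop ℕ∞) (bkG L δ ℓ₁ ℓ₂ q) :=
      fun q => (bkG_differentiable L δ ℓ₁ ℓ₂ q).contDiff
    rw [e, iteratedDeriv_fun_add (contDiff_const.mul (hc _)).contDiffAt
      (contDiff_const.mul (hc _)).contDiffAt, iteratedDeriv_const_mul_field,
      iteratedDeriv_const_mul_field, ih (k + 1) l (by omega) (by omega),
      ih k (l + 1) (by omega) (by omega)]
    simp
open Polynomial in
theorem bkOp_bound (N₀ L : ℕ) (b : ℂ) (hb : ‖b‖ ≤ N₀) (c : ℕ) (hc : c < L) (M : ℝ)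
    (q : ℂ[X]) (hq : q.natDegree < L) (hM : ∀ m, ‖q.coeff m‖ ≤ M) (m : ℕ) :
    ‖(bkOp b (c : ℂ) q).coeff m‖ ≤ ((N₀ + 1) * L) * M := by
  have hM0 : 0 ≤ M := (norm_nonneg _).trans (hM 0)
  have hcL : (c : ℝ) ≤ L := by exact_mod_cast hc.le
  rw [bkOp_coeff]
  have h1 : ‖q.coeff (m + 1) * ((m : ℂ) + 1)‖ ≤ M * L := by
    by_cases hm : m + 1 < L
    · rw [norm_mul]
      have : ‖(m : ℂ) + 1‖ ≤ L := by
        have : ((m : ℂ) + 1) = ((m + 1 : ℕ) : ℂ) := by push_cast; rfl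
        rw [this, Complex.norm_natCast]
        exact_mod_cast hm.le
      exact mul_le_mul (hM _) this (norm_nonneg _) hM0
    · rw [coeff_eq_zero_of_natDegree_lt (by omega)]
      simp; positivity
  have h2 : ‖b * (q.coeff (m + 1) * ((m : ℂ) + 1))‖ ≤ N₀ * (M * L) := by
    rw [norm_mul]
    exact mul_le_mul hb h1 (norm_nonneg _) (by positivity)
  have h3 : ‖(c : ℂ) * q.coeff m‖ ≤ L * M := by
    rw [norm_mul, Complex.norm_natCast]
    exact mul_le_mul hcL (hM _) (norm_nonneg _) (by positivity)
  calc _ ≤ _ := norm_add_le _ _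
    _ ≤ N₀ * (M * L) + L * M := add_le_add h2 h3
    _ = _ := by ring

open Polynomial in
theorem bkOp_pow_bound (N₀ L : ℕ) (b : ℂ) (hb : ‖b‖ ≤ N₀) (c : ℕ) (hc : c < L) (M : ℝ)
    (q : ℂ[X]) (hq : q.natDegree < L) (hM : ∀ m, ‖q.coeff m‖ ≤ M) (k m : ℕ) :
    ‖(((bkOp b (c : ℂ)) ^ k) q).coeff m‖ ≤ ((N₀ + 1) * L) ^ k * M := by
  induction k generalizing m with
  | zero => simpa using hM m
  | succ k ih =>
    rw [pow_succ', Module.End.mul_apply, pow_succ', mul_assoc]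
    refine bkOp_bound N₀ L b hb c hc _ _ ?_ ih m
    have := bkOp_pow_natDegree b (c : ℂ) (Nat.le_sub_one_of_lt hq) k
    omega

theorem bk_le_three_pow (n : ℕ) : (n : ℝ) ≤ 3 ^ n := by
  exact_mod_cast (Nat.lt_pow_self (by norm_num : 1 < 3)).le

theorem bk_succ_le_three_pow (n : ℕ) : (1 + n : ℝ) ≤ 3 ^ n := by
  have : n + 1 ≤ 3 ^ n := Nat.lt_pow_self (by norm_num : 1 < 3)
  have : ((n + 1 : ℕ) : ℝ) ≤ ((3 ^ n : ℕ) : ℝ) := by exact_mod_cast this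
  push_cast at this; linarith

open Polynomial in
theorem bk_eval_bound (L : ℕ) (M : ℝ) (q : ℂ[X]) (hq : q.natDegree < L)
    (hM : ∀ m, ‖q.coeff m‖ ≤ M) (x : ℂ) (Y : ℕ) (hx : ‖x‖ ≤ Y) :
    ‖q.eval x‖ ≤ L * M * 3 ^ (Y * L) := by
  have hM0 : 0 ≤ M := (norm_nonneg _).trans (hM 0)
  rw [eval_eq_sum_range' hq]
  refine (norm_sum_le _ _).trans ?_
  have : ∀ m ∈ Finset.range L, ‖q.coeff m * x ^ m‖ ≤ M * 3 ^ (Y * L) := by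
    intro m hm
    rw [norm_mul, norm_pow]
    refine mul_le_mul (hM m) ?_ (by positivity) hM0
    have h1 : (1 : ℝ) ≤ 3 ^ Y := one_le_pow₀ (by norm_num)
    calc ‖x‖ ^ m ≤ (3 ^ Y) ^ m :=
          pow_le_pow_left₀ (norm_nonneg _) (hx.trans (bk_le_three_pow Y)) _
      _ ≤ (3 ^ Y) ^ L := pow_le_pow_right₀ h1 (Finset.mem_range.1 hm).le
      _ = _ := by rw [pow_mul]
  refine (Finset.sum_le_sum this).trans ?_
  simp [mul_assoc]

open Polynomial in
theorem bk_bound (N₀ L S T : ℕ) (hL : 1 ≤ L) (hS : 1 ≤ S) (b₁ b₂ : ℂ) (hb₁ : ‖b₁‖ ≤ N₀)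
    (hb₂ : ‖b₂‖ ≤ N₀) (M : ℝ) (q : BkI L → ℂ[X]) (hq : ∀ i, (q i).natDegree < L)
    (hM : ∀ i m, ‖(q i).coeff m‖ ≤ M) (k l : ℕ) (hk : k < T) (hl : l < T)
    (x : ℂ) (hx : ‖x‖ ≤ 4 * N₀ * S) (w : BkI L → ℂ) (hw : ∀ i, ‖w i‖ ≤ 3 ^ (4 * N₀ * S * L)) :
    ‖∑ i, w i * ((((bkD1 L b₁) ^ k) (((bkD2 L b₂) ^ l) q)) i).eval x‖ ≤
      3 ^ ((8 * N₀ + 3) * (L * S)) * ((N₀ + 1) * L) ^ (2 * T) * M := by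
  have hLr : (1 : ℝ) ≤ L := by exact_mod_cast hL
  have hM0 : 0 ≤ M := (norm_nonneg _).trans (hM (⟨0, hL⟩, ⟨0, hL⟩) 0)
  set M' : ℝ := ((N₀ + 1) * L) ^ (2 * T) * M with hM'
  have hM'0 : 0 ≤ M' := by positivity
  have h1 : ∀ i, ‖((((bkD1 L b₁) ^ k) (((bkD2 L b₂) ^ l) q)) i).eval x‖ ≤
      L * M' * 3 ^ ((4 * N₀ * S) * L) := by
    intro i
    rw [bkD1_pow, bkD2_pow]
    have hd := bkOp_pow_natDegree b₂ ((i.2 : ℕ) : ℂ) (Nat.le_sub_one_of_lt (hq i)) l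
    have hd' := bkOp_pow_natDegree b₁ ((i.1 : ℕ) : ℂ) hd k
    refine bk_eval_bound L M' _ (by omega) ?_ x _ (by push_cast; exact hx)
    intro m
    refine (bkOp_pow_bound N₀ L b₁ hb₁ i.1 i.1.2 _ _ (by omega)
      (bkOp_pow_bound N₀ L b₂ hb₂ i.2 i.2.2 M _ (hq i) (hM i) l) k m).trans ?_
    rw [← mul_assoc, ← pow_add, hM']
    refine mul_le_mul_of_nonneg_right (pow_le_pow_right₀ ?_ (by omega)) hM0
    have : (0 : ℝ) ≤ N₀ := by positivity
    nlinarith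
  calc _ ≤ _ := norm_sum_le _ _
    _ ≤ ∑ i : BkI L, 3 ^ (4 * N₀ * S * L) * (L * M' * 3 ^ ((4 * N₀ * S) * L)) := by
        refine Finset.sum_le_sum fun i _ => ?_
        rw [norm_mul]
        exact mul_le_mul (hw i) (h1 i) (norm_nonneg _) (by positivity)
    _ = ((L : ℝ) * L * L) * 3 ^ (8 * N₀ * (L * S)) * M' := by
        rw [Finset.sum_const, Finset.card_univ, Fintype.card_prod, Fintype.card_fin, nsmul_eq_mul,
          show 8 * N₀ * (L * S) = 4 * N₀ * S * L + 4 * N₀ * S * L by ring, pow_add]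
        push_cast; ring
    _ ≤ (3 ^ (L * S) * 3 ^ (L * S) * 3 ^ (L * S)) * 3 ^ (8 * N₀ * (L * S)) * M' := by
        have : (L : ℝ) ≤ 3 ^ (L * S) := (bk_le_three_pow L).trans
          (pow_le_pow_right₀ (by norm_num) (Nat.le_mul_of_pos_right _ hS))
        gcongr
    _ = _ := by rw [hM']; ring

open Polynomial in
theorem bkOp_map {R : Type*} [CommRing R] (σ : R →+* ℂ) (b : R) (c k : ℕ) (q : R[X]) :
    (((bkOp b (c : R)) ^ k) q).map σ = ((bkOp (σ b) (c : ℂ)) ^ k) (q.map σ) := by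
  induction k with
  | zero => simp
  | succ k ih =>
    rw [pow_succ', pow_succ', Module.End.mul_apply, Module.End.mul_apply, ← ih]
    simp [bkOp_apply, smul_eq_C_mul, derivative_map]

open Polynomial in
theorem bkV_map {R : Type*} [CommRing R] (σ : R →+* ℂ) (L : ℕ) (δ a₁ a₂ b₁ b₂ : R) (s k l : ℕ)
    (q : BkI L → R[X]) :
    σ (bkV L δ a₁ a₂ s (((bkD1 L b₁) ^ k) (((bkD2 L b₂) ^ l) q))) =
      ∑ i : BkI L, ((σ a₁) ^ ((i.1 : ℕ) * s) * (σ a₂) ^ ((i.2 : ℕ) * s)) *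
        ((((bkD1 L (σ b₁)) ^ k) (((bkD2 L (σ b₂)) ^ l) (fun i => (q i).map σ))) i).eval
          ((s : ℂ) * σ δ) := by
  rw [bkV_apply, map_sum]
  refine Finset.sum_congr rfl fun i _ => ?_
  rw [bkD1_pow, bkD2_pow, bkD1_pow, bkD2_pow, ← bkOp_map, ← bkOp_map, map_mul, map_mul, map_pow,
    map_pow]
  congr 1
  have : (s : ℂ) * σ δ = σ ((s : R) * δ) := by simp
  rw [this, eval_map_apply]

open Polynomial in
theorem bkV_bound {R : Type*} [CommRing R] (σ : R →+* ℂ) (N₀ L S T : ℕ) (hL : 1 ≤ L) (hS : 1 ≤ S)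
    (δ a₁ a₂ b₁ b₂ : R) (hb₁ : ‖σ b₁‖ ≤ N₀) (hb₂ : ‖σ b₂‖ ≤ N₀) (ha₁ : ‖σ a₁‖ ≤ N₀)
    (ha₂ : ‖σ a₂‖ ≤ N₀) (hδ : ‖σ δ‖ ≤ N₀)
    (M : ℝ) (q : BkI L → R[X]) (hq : ∀ i, (q i).natDegree < L)
    (hM : ∀ i m, ‖σ ((q i).coeff m)‖ ≤ M) (k l : ℕ) (hk : k < T) (hl : l < T)
    (s : ℕ) (hs : s ≤ S) :
    ‖σ (bkV L δ a₁ a₂ s (((bkD1 L b₁) ^ k) (((bkD2 L b₂) ^ l) q)))‖ ≤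
      3 ^ ((8 * N₀ + 3) * (L * S)) * ((N₀ + 1) * L) ^ (2 * T) * M := by
  rw [bkV_map]
  have hsS : (s : ℝ) ≤ S := by exact_mod_cast hs
  refine bk_bound N₀ L S T hL hS (σ b₁) (σ b₂) hb₁ hb₂ M _ ?_ ?_ k l hk hl _ ?_ _ ?_
  · intro i; exact natDegree_map_le.trans_lt (hq i)
  · intro i m; rw [coeff_map]; exact hM i m
  · rw [norm_mul, Complex.norm_natCast]
    have h0 : (0 : ℝ) ≤ N₀ := by positivity
    have h1 : (0 : ℝ) ≤ S := by positivity
    calc (s : ℝ) * ‖σ δ‖ ≤ S * N₀ := mul_le_mul hsS hδ (norm_nonneg _) h1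
      _ ≤ 4 * N₀ * S := by nlinarith [mul_nonneg h0 h1]
  · intro i
    have key : ∀ (a : R), ‖σ a‖ ≤ N₀ → ∀ j : Fin L, ‖(σ a) ^ ((j : ℕ) * s)‖ ≤
        3 ^ (2 * N₀ * S * L) := by
      intro a ha j
      rw [norm_pow]
      calc ‖σ a‖ ^ ((j : ℕ) * s) ≤ (3 ^ N₀) ^ ((j : ℕ) * s) :=
            pow_le_pow_left₀ (norm_nonneg _) (ha.trans (bk_le_three_pow _)) _
        _ = 3 ^ (N₀ * ((j : ℕ) * s)) := by rw [← pow_mul]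
        _ ≤ 3 ^ (2 * N₀ * S * L) := by
            refine pow_le_pow_right₀ (by norm_num) ?_
            have : (j : ℕ) * s ≤ L * S := Nat.mul_le_mul j.2.le hs
            calc N₀ * ((j : ℕ) * s) ≤ N₀ * (L * S) := Nat.mul_le_mul_left N₀ this
              _ ≤ 2 * (N₀ * (L * S)) := by omega
              _ = 2 * N₀ * S * L := by ring
    rw [norm_mul, show 4 * N₀ * S * L = 2 * N₀ * S * L + 2 * N₀ * S * L by ring, pow_add]
    exact mul_le_mul (key a₁ ha₁ i.1) (key a₂ ha₂ i.2) (norm_nonneg _) (by positivity)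

open Polynomial in
theorem bkG_bound (N₀ L S T : ℕ) (hL : 1 ≤ L) (hS : 1 ≤ S)
    (δ ℓ₁ ℓ₂ b₁ b₂ : ℂ) (hb₁ : ‖b₁‖ ≤ N₀) (hb₂ : ‖b₂‖ ≤ N₀) (hℓ : ‖ℓ₁‖ + ‖ℓ₂‖ ≤ N₀)
    (hδ : ‖δ‖ ≤ N₀)
    (M : ℝ) (q : BkI L → ℂ[X]) (hq : ∀ i, (q i).natDegree < L)
    (hM : ∀ i m, ‖(q i).coeff m‖ ≤ M) (k l : ℕ) (hk : k < T) (hl : l < T)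
    (z : ℂ) (hz : ‖z‖ ≤ 4 * S) :
    ‖bkG L δ ℓ₁ ℓ₂ (((bkD1 L b₁) ^ k) (((bkD2 L b₂) ^ l) q)) z‖ ≤
      3 ^ ((8 * N₀ + 3) * (L * S)) * ((N₀ + 1) * L) ^ (2 * T) * M := by
  unfold bkG
  have h0 : (0 : ℝ) ≤ N₀ := by positivity
  rw [Finset.sum_congr rfl fun i _ => mul_comm _ _]
  refine bk_bound N₀ L S T hL hS b₁ b₂ hb₁ hb₂ M q hq hM k l hk hl _ ?_ _ ?_
  · rw [norm_mul]
    calc ‖δ‖ * ‖z‖ ≤ N₀ * (4 * S) := mul_le_mul hδ hz (norm_nonneg _) h0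
      _ = _ := by ring
  · intro i
    refine (Complex.norm_exp_le_exp_norm _).trans ?_
    have h1 : ‖((i.1 : ℕ) : ℂ) * ℓ₁ + ((i.2 : ℕ) : ℂ) * ℓ₂‖ ≤ L * N₀ := by
      refine (norm_add_le _ _).trans ?_
      rw [norm_mul, norm_mul, Complex.norm_natCast, Complex.norm_natCast]
      have e1 : ((i.1 : ℕ) : ℝ) ≤ L := by exact_mod_cast i.1.2.le
      have e2 : ((i.2 : ℕ) : ℝ) ≤ L := by exact_mod_cast i.2.2.le
      have hL0 : (0 : ℝ) ≤ L := by positivity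
      nlinarith [mul_le_mul_of_nonneg_right e1 (norm_nonneg ℓ₁),
        mul_le_mul_of_nonneg_right e2 (norm_nonneg ℓ₂), mul_le_mul_of_nonneg_left hℓ hL0]
    have h2 : ‖(((i.1 : ℕ) : ℂ) * ℓ₁ + ((i.2 : ℕ) : ℂ) * ℓ₂) * z‖ ≤ ((4 * N₀ * S * L : ℕ) : ℝ) := by
      rw [norm_mul]
      calc _ ≤ (L * N₀ : ℝ) * (4 * S) := mul_le_mul h1 hz (norm_nonneg _) (by positivity)
        _ = _ := by push_cast; ring
    calc Real.exp _ ≤ Real.exp ((4 * N₀ * S * L : ℕ) : ℝ) := Real.exp_le_exp.2 h2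
      _ = Real.exp 1 ^ (4 * N₀ * S * L) := by rw [← Real.exp_nat_mul]; simp
      _ ≤ 3 ^ (4 * N₀ * S * L) := pow_le_pow_left₀ (Real.exp_pos _).le Real.exp_one_lt_three.le _

theorem bk_siegel (K : Type) [Field K] [NumberField K] : ∃ N₁ : ℕ, 1 ≤ N₁ ∧
    ∀ (α β : Type) [Fintype α] [Fintype β] (a : Matrix α β (NumberField.RingOfIntegers K))
      (A : ℝ), 1 ≤ A → 0 < Fintype.card α → 2 * Fintype.card α ≤ Fintype.card β →
      (∀ k l, NumberField.house ((a k l : NumberField.RingOfIntegers K) : K) ≤ A) →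
      ∃ ξ : β → NumberField.RingOfIntegers K, ξ ≠ 0 ∧ a.mulVec ξ = 0 ∧
        ∀ l, NumberField.house ((ξ l : NumberField.RingOfIntegers K) : K) ≤
          N₁ * (Fintype.card β : ℝ) * A := by
  classical
  have base : ∃ c : ℝ, ∀ (α β : Type) [Fintype α] [Fintype β]
      (a : Matrix α β (NumberField.RingOfIntegers K)) (A : ℝ), a ≠ 0 →
      0 < Fintype.card α → Fintype.card α < Fintype.card β →
      (∀ k l, NumberField.house ((a k l : NumberField.RingOfIntegers K) : K) ≤ A) →
      ∃ ξ : β → NumberField.RingOfIntegers K, ξ ≠ 0 ∧ a.mulVec ξ = 0 ∧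
        ∀ l, NumberField.house ((ξ l : NumberField.RingOfIntegers K) : K) ≤
          c * (c * (Fintype.card β : ℝ) * A) ^
            ((Fintype.card α : ℝ) / ((Fintype.card β : ℝ) - (Fintype.card α : ℝ))) :=
    ⟨_, fun α β _ _ a A ha hp hpq hA =>
      NumberField.house.exists_ne_zero_int_vec_house_le K a ha hp hpq rfl hA rfl⟩
  obtain ⟨c, hc⟩ := base
  obtain ⟨N, hN⟩ := exists_nat_ge (max 1 |c|)
  have hN1 : (1 : ℝ) ≤ N := (le_max_left _ _).trans hN
  have hNc : |c| ≤ N := (le_max_right _ _).trans hN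
  have hN1' : 1 ≤ N := by exact_mod_cast hN1
  refine ⟨N * N, Nat.one_le_iff_ne_zero.2 (by positivity), ?_⟩
  intro α β _ _ a A hA hp hpq habs
  have hq1 : (1 : ℝ) ≤ Fintype.card β := by
    have : 1 ≤ Fintype.card β := by omega
    exact_mod_cast this
  have hp1 : (1 : ℝ) ≤ Fintype.card α := by exact_mod_cast hp
  have hpq' : 2 * (Fintype.card α : ℝ) ≤ Fintype.card β := by exact_mod_cast hpq
  have hbig : (1 : ℝ) ≤ N * (Fintype.card β : ℝ) * A :=
    one_le_mul_of_one_le_of_one_le (one_le_mul_of_one_le_of_one_le hN1 hq1) hA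
  by_cases ha : a = 0
  · subst ha
    have : Nonempty β := Fintype.card_pos_iff.1 (by omega)
    refine ⟨1, one_ne_zero, by simp, fun l => ?_⟩
    have : NumberField.house (((1 : β → NumberField.RingOfIntegers K) l :
        NumberField.RingOfIntegers K) : K) = 1 := by
      simpa using NumberField.house_intCast (K := K) 1
    rw [this]
    push_cast
    nlinarith
  · obtain ⟨ξ, h1, h2, h3⟩ := hc α β a A ha hp (by omega) habs
    refine ⟨ξ, h1, h2, fun l => (h3 l).trans ?_⟩
    set e := (Fintype.card α : ℝ) / ((Fintype.card β : ℝ) - (Fintype.card α : ℝ)) with he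
    have he0 : 0 ≤ e := div_nonneg (by linarith) (by linarith)
    have he1 : e ≤ 1 := by rw [he, div_le_one (by linarith)]; linarith
    have h4 : |(c * (Fintype.card β : ℝ) * A) ^ e| ≤ N * (Fintype.card β : ℝ) * A := by
      refine (Real.abs_rpow_le_abs_rpow _ _).trans ?_
      have : |c * (Fintype.card β : ℝ) * A| ≤ N * (Fintype.card β : ℝ) * A := by
        rw [abs_mul, abs_mul, abs_of_nonneg (by linarith : (0 : ℝ) ≤ Fintype.card β),
          abs_of_nonneg (by linarith : (0 : ℝ) ≤ A)]
        gcongr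
      calc _ ≤ (N * (Fintype.card β : ℝ) * A) ^ e := Real.rpow_le_rpow (abs_nonneg _) this he0
        _ ≤ (N * (Fintype.card β : ℝ) * A) ^ (1 : ℝ) := Real.rpow_le_rpow_of_exponent_le hbig he1
        _ = _ := Real.rpow_one _
    calc _ ≤ _ := le_abs_self _
      _ = |c| * |(c * (Fintype.card β : ℝ) * A) ^ e| := abs_mul _ _
      _ ≤ N * (N * (Fintype.card β : ℝ) * A) :=
          mul_le_mul hNc h4 (abs_nonneg _) (by positivity)
      _ = _ := by push_cast; ring
theorem bk_house_le {K : Type} [Field K] [NumberField K] (x : K) (A : ℝ) (hA : 0 ≤ A)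
    (h : ∀ σ : K →+* ℂ, ‖σ x‖ ≤ A) : NumberField.house x ≤ A := by
  rw [NumberField.house, pi_norm_le_iff_of_nonneg hA]
  intro σ
  simpa using h σ

theorem bk_liouville {K : Type} [Field K] [NumberField K] (φ : K →+* ℂ)
    (v : NumberField.RingOfIntegers K) (hv : v ≠ 0) (B X : ℝ) (hX : 0 ≤ X)
    (hB : NumberField.house (v : K) ≤ B) (h : X * ‖φ v‖ ≤ B) :
    X ≤ B ^ Module.finrank ℚ K := by
  have hB0 : 0 ≤ B := (NumberField.house_nonneg _).trans hB
  have h1 : (1 : ℝ) ≤ ‖Algebra.norm ℚ (v : K)‖ := by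
    rw [← Algebra.coe_norm_int, ← Rat.norm_cast_real]
    have : Algebra.norm ℤ v ≠ 0 := Algebra.norm_ne_zero_iff.2 hv
    have h2 : (1 : ℝ) ≤ |((Algebra.norm ℤ v : ℤ) : ℝ)| := by
      exact_mod_cast Int.one_le_abs this
    simpa using h2
  have h2 := NumberField.norm_norm_le_norm_mul_house_pow (v : K) φ
  have hn : 0 < Module.finrank ℚ K := Module.finrank_pos
  calc X = X * 1 := by ring
    _ ≤ X * (‖φ v‖ * NumberField.house (v : K) ^ (Module.finrank ℚ K - 1)) :=
        mul_le_mul_of_nonneg_left (h1.trans h2) hX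
    _ = (X * ‖φ v‖) * NumberField.house (v : K) ^ (Module.finrank ℚ K - 1) := by ring
    _ ≤ B * B ^ (Module.finrank ℚ K - 1) :=
        mul_le_mul h (pow_le_pow_left₀ (NumberField.house_nonneg _) hB _)
          (pow_nonneg (NumberField.house_nonneg _) _) hB0
    _ = B ^ (Module.finrank ℚ K) := by
        rw [← pow_succ']; congr 1; omega

open Polynomial NumberField in
theorem bk_step {K : Type} [Field K] [NumberField K] (φ : K →+* ℂ)
    (a₁ a₂ b₁ b₂ δ : 𝓞 K) (ℓ₁ ℓ₂ : ℂ)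
    (h₁ : Complex.exp ℓ₁ = φ a₁) (h₂ : Complex.exp ℓ₂ = φ a₂)
    (hδ : φ b₁ * ℓ₁ + φ b₂ * ℓ₂ = φ δ) (N₀ : ℕ)
    (hN : ∀ x ∈ ({a₁, a₂, b₁, b₂, δ} : Set (𝓞 K)), house (x : K) ≤ N₀)
    (hℓ : ‖ℓ₁‖ + ‖ℓ₂‖ ≤ N₀) (L S S' T t : ℕ) (hL : 1 ≤ L) (hS' : 1 ≤ S') (hSS : S ≤ S')
    (p : BkI L → (𝓞 K)[X]) (hdeg : ∀ i, (p i).natDegree < L) (H : ℝ)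
    (hH : ∀ i m, house ((p i).coeff m : K) ≤ H)
    (hbig : (3 ^ ((8 * N₀ + 3) * (L * S')) * (((N₀ : ℝ) + 1) * L) ^ (2 * T) * H) ^
      Module.finrank ℚ K < 3 ^ (t * S))
    (T₁ : ℕ) (hT : T₁ + t ≤ T)
    (hv : ∀ k < T₁ + t, ∀ l < T₁ + t, ∀ s, 1 ≤ s → s ≤ S →
      bkV L δ a₁ a₂ s (((bkD1 L b₁) ^ k) (((bkD2 L b₂) ^ l) p)) = 0) :
    ∀ k < T₁, ∀ l < T₁, ∀ s, 1 ≤ s → s ≤ S' →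
      bkV L δ a₁ a₂ s (((bkD1 L b₁) ^ k) (((bkD2 L b₂) ^ l) p)) = 0 := by
  intro k hk l hl s hs1 hs2
  by_contra hne
  have hH0 : 0 ≤ H := (house_nonneg _).trans (hH (⟨0, hL⟩, ⟨0, hL⟩) 0)
  set B : ℝ := 3 ^ ((8 * N₀ + 3) * (L * S')) * (((N₀ : ℝ) + 1) * L) ^ (2 * T) * H with hBdef
  have hB0 : 0 ≤ B := by positivity
  have hNσ : ∀ σ : K →+* ℂ, ∀ x ∈ ({a₁, a₂, b₁, b₂, δ} : Set (𝓞 K)), ‖σ x‖ ≤ N₀ :=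
    fun σ x hx => (norm_embedding_le_house (x : K) σ).trans (hN x hx)
  set v := bkV L δ a₁ a₂ s (((bkD1 L b₁) ^ k) (((bkD2 L b₂) ^ l) p)) with hvdef
  have hhouse : house (v : K) ≤ B := by
    refine bk_house_le _ _ hB0 fun σ => ?_
    exact bkV_bound (σ.comp (algebraMap (𝓞 K) K)) N₀ L S' T hL hS' δ a₁ a₂ b₁ b₂
      (hNσ σ _ (by simp)) (hNσ σ _ (by simp)) (hNσ σ _ (by simp)) (hNσ σ _ (by simp))
      (hNσ σ _ (by simp)) H p hdeg
      (fun i m => (norm_embedding_le_house _ σ).trans (hH i m)) k l (by omega) (by omega) s hs2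
  let ρ : 𝓞 K →+* ℂ := φ.comp (algebraMap (𝓞 K) K)
  let q : BkI L → ℂ[X] := fun i => (p i).map ρ
  have hG : ∀ k l s : ℕ, ρ (bkV L δ a₁ a₂ s (((bkD1 L b₁) ^ k) (((bkD2 L b₂) ^ l) p))) =
      bkG L (ρ δ) ℓ₁ ℓ₂ (((bkD1 L (ρ b₁)) ^ k) (((bkD2 L (ρ b₂)) ^ l) q)) (s : ℂ) := by
    intro k l s
    rw [bkV_map, bkG]
    refine Finset.sum_congr rfl fun i _ => ?_
    rw [mul_comm, mul_comm (ρ δ)]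
    congr 1
    have e1 : ρ a₁ = Complex.exp ℓ₁ := h₁.symm
    have e2 : ρ a₂ = Complex.exp ℓ₂ := h₂.symm
    rw [e1, e2, ← Complex.exp_nat_mul, ← Complex.exp_nat_mul, ← Complex.exp_add]
    congr 1
    push_cast
    ring
  have hsch := bk_schwarz S S' t hSS hS'
    (bkG L (ρ δ) ℓ₁ ℓ₂ (((bkD1 L (ρ b₁)) ^ k) (((bkD2 L (ρ b₂)) ^ l) q)))
    (bkG_differentiable _ _ _ _ _) (by
      intro s hs1 hs2 i hi
      refine bkG_iteratedDeriv L (ρ δ) ℓ₁ ℓ₂ (ρ b₁) (ρ b₂) hδ q (T₁ + t) s ?_ i k l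
        (by omega) (by omega)
      intro k' hk' l' hl'
      rw [← hG, hv k' hk' l' hl' s hs1 hs2, map_zero]) B (by
      intro z hz
      exact bkG_bound N₀ L S' T hL hS' (ρ δ) ℓ₁ ℓ₂ (ρ b₁) (ρ b₂) (hNσ φ _ (by simp))
        (hNσ φ _ (by simp)) hℓ (hNσ φ _ (by simp)) H q
        (fun i => natDegree_map_le.trans_lt (hdeg i))
        (fun i m => by
          simp only [q, coeff_map]
          exact (norm_embedding_le_house _ φ).trans (hH i m)) k l (by omega) (by omega) z hz)
      s hs2
  rw [← hG] at hsch
  have := bk_liouville φ v hne B (3 ^ (t * S)) (by positivity) hhouse hsch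
  linarith

theorem bk_exists_Q (N₀ N₃ : ℕ) : ∃ Q : ℕ, N₃ < Q ∧ 33 ≤ Q ∧ (N₀ + 1) * Q ^ 8 ≤ 3 ^ Q := by
  have h := tendsto_pow_const_div_const_pow_of_one_lt 8 (by norm_num : (1 : ℝ) < 3)
  have h1 : ∀ᶠ Q : ℕ in Filter.atTop, (Q : ℝ) ^ 8 / 3 ^ Q < 1 / (N₀ + 1) :=
    h.eventually_lt_const (by positivity)
  obtain ⟨Q, hQ, hQ1⟩ := (h1.and (Filter.eventually_ge_atTop (max (N₃ + 1) 33))).exists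
  refine ⟨Q, (le_max_left _ _).trans hQ1, (le_max_right _ _).trans hQ1, ?_⟩
  rw [div_lt_div_iff₀ (by positivity) (by positivity)] at hQ
  have : ((N₀ : ℝ) + 1) * (Q : ℝ) ^ 8 ≤ 3 ^ Q := by linarith
  exact_mod_cast this

open Polynomial NumberField in
/-- Baker's theorem (inhomogeneous, two logarithms, integral data). -/
theorem bk_main {K : Type} [Field K] [NumberField K] (φ : K →+* ℂ)
    (a₁ a₂ b₁ b₂ δ : 𝓞 K) (ℓ₁ ℓ₂ : ℂ)
    (h₁ : Complex.exp ℓ₁ = φ a₁) (h₂ : Complex.exp ℓ₂ = φ a₂)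
    (hδ : φ b₁ * ℓ₁ + φ b₂ * ℓ₂ = φ δ) : δ = 0 := by
  by_contra hδ0
  have ha₁ : a₁ ≠ 0 := by rintro rfl; simp at h₁
  have ha₂ : a₂ ≠ 0 := by rintro rfl; simp at h₂
  obtain ⟨N₀, hN₀⟩ := exists_nat_ge (house (a₁ : K) + house (a₂ : K) + house (b₁ : K) +
    house (b₂ : K) + house (δ : K) + (‖ℓ₁‖ + ‖ℓ₂‖))
  have hnn := fun x : K => house_nonneg x
  have hN : ∀ x ∈ ({a₁, a₂, b₁, b₂, δ} : Set (𝓞 K)), house (x : K) ≤ N₀ := by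
    have := hnn a₁; have := hnn a₂; have := hnn b₁; have := hnn b₂; have := hnn δ
    have := norm_nonneg ℓ₁; have := norm_nonneg ℓ₂
    rintro x (rfl | rfl | rfl | rfl | rfl) <;> linarith
  have hℓ : ‖ℓ₁‖ + ‖ℓ₂‖ ≤ N₀ := by
    have := hnn a₁; have := hnn a₂; have := hnn b₁; have := hnn b₂; have := hnn δ
    linarith
  have hNσ : ∀ σ : K →+* ℂ, ∀ x ∈ ({a₁, a₂, b₁, b₂, δ} : Set (𝓞 K)), ‖σ x‖ ≤ N₀ :=
    fun σ x hx => (norm_embedding_le_house (x : K) σ).trans (hN x hx)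
  obtain ⟨N₁, hN₁, hSiegel⟩ := bk_siegel K
  set n := Module.finrank ℚ K with hn
  set N₂ : ℕ := 16 * N₀ + 9 + N₁ + 92 with hN₂
  obtain ⟨Q, hQ1, hQ2, hQ3⟩ := bk_exists_Q N₀ (n * N₂)
  set L : ℕ := Q ^ 8 with hLdef
  set T : ℕ := 23 * Q ^ 10 with hTdef
  have hQpos : 0 < Q := by omega
  have hL : 1 ≤ L := Nat.one_le_pow _ _ hQpos
  have hS0 : 1 ≤ Q ^ 2 := Nat.one_le_pow _ _ hQpos
  have hLr : (1 : ℝ) ≤ L := by exact_mod_cast hL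
  have hNL1 : (1 : ℝ) ≤ ((N₀ : ℝ) + 1) * L := by
    have : (0 : ℝ) ≤ N₀ := by positivity
    nlinarith
  set A : ℝ := 3 ^ ((8 * N₀ + 3) * (L * Q ^ 2)) * (((N₀ : ℝ) + 1) * L) ^ (2 * T) with hA
  have hA1 : 1 ≤ A := one_le_mul_of_one_le_of_one_le (one_le_pow₀ (by norm_num))
    (one_le_pow₀ hNL1)
  -- the linear system
  let a : Matrix (Fin T × Fin T × Fin (Q ^ 2)) (BkI L × Fin L) (𝓞 K) := fun r c =>
    bkV L δ a₁ a₂ ((r.2.2 : ℕ) + 1) (((bkD1 L b₁) ^ (r.1 : ℕ)) (((bkD2 L b₂) ^ (r.2.1 : ℕ))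
      (Pi.single c.1 (X ^ (c.2 : ℕ)))))
  have haA : ∀ r c, house ((a r c : 𝓞 K) : K) ≤ A := by
    intro r c
    refine bk_house_le _ _ (by linarith) fun σ => ?_
    have := bkV_bound (σ.comp (algebraMap (𝓞 K) K)) N₀ L (Q ^ 2) T hL hS0 δ a₁ a₂ b₁ b₂
      (hNσ σ _ (by simp)) (hNσ σ _ (by simp)) (hNσ σ _ (by simp)) (hNσ σ _ (by simp))
      (hNσ σ _ (by simp)) 1 (Pi.single c.1 (X ^ (c.2 : ℕ))) (by
        intro i
        by_cases hi : i = c.1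
        · subst hi; rw [Pi.single_eq_same, natDegree_X_pow]; exact c.2.2
        · rw [Pi.single_eq_of_ne hi, natDegree_zero]; exact hL) (by
        intro i m
        by_cases hi : i = c.1
        · subst hi; rw [Pi.single_eq_same, coeff_X_pow]; split_ifs <;> simp
        · rw [Pi.single_eq_of_ne hi]; simp) r.1 r.2.1 r.1.2 r.2.1.2 ((r.2.2 : ℕ) + 1)
      (by have := r.2.2.2; omega)
    rw [mul_one] at this
    exact this
  have hcard1 : Fintype.card (Fin T × Fin T × Fin (Q ^ 2)) = 529 * Q ^ 22 := by
    simp only [Fintype.card_prod, Fintype.card_fin, hTdef]; ring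
  have hcard2 : Fintype.card (BkI L × Fin L) = Q ^ 24 := by
    simp only [Fintype.card_prod, Fintype.card_fin, hLdef]; ring
  obtain ⟨ξ, hξ0, hξ1, hξ2⟩ := hSiegel _ _ a A hA1 (by rw [hcard1]; positivity) (by
    rw [hcard1, hcard2]
    have : 1058 ≤ Q ^ 2 := by nlinarith
    calc 2 * (529 * Q ^ 22) = 1058 * Q ^ 22 := by ring
      _ ≤ Q ^ 2 * Q ^ 22 := Nat.mul_le_mul_right _ this
      _ = Q ^ 24 := by ring) haA
  let p : BkI L → (𝓞 K)[X] := fun i => ∑ m : Fin L, C (ξ (i, m)) * X ^ (m : ℕ)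
  have hpsum : p = ∑ c : BkI L × Fin L, ξ c •
      (Pi.single c.1 (X ^ (c.2 : ℕ)) : BkI L → (𝓞 K)[X]) := by
    refine _root_.funext fun i => ?_
    rw [Finset.sum_apply, Fintype.sum_prod_type, Finset.sum_eq_single i]
    · simp [p, smul_eq_C_mul]
    · intro j _ hj
      refine Finset.sum_eq_zero fun m _ => ?_
      simp [Pi.single_eq_of_ne hj.symm]
    · simp
  have hcoef : ∀ i m, (p i).coeff m = if h : m < L then ξ (i, ⟨m, h⟩) else 0 := by
    intro i m
    simp only [p, finsetSum_coeff, coeff_C_mul, coeff_X_pow]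
    split_ifs with h
    · rw [Finset.sum_eq_single ⟨m, h⟩]
      · simp
      · intro j _ hj
        have : m ≠ j := fun hh => hj (Fin.ext hh.symm)
        simp [this]
      · simp
    · refine Finset.sum_eq_zero fun j _ => ?_
      have : m ≠ j := fun hh => h (hh ▸ j.2)
      simp [this]
  have hdeg : ∀ i, (p i).natDegree < L := by
    intro i
    have : (p i).natDegree ≤ L - 1 := by
      rw [natDegree_le_iff_coeff_eq_zero]
      intro m hm
      rw [hcoef, dif_neg (by omega)]
    omega
  have hp0 : p ≠ 0 := by
    intro h
    apply hξ0
    refine _root_.funext fun c => ?_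
    have := hcoef c.1 c.2
    rw [h, dif_pos c.2.2] at this
    simpa using this.symm
  set H : ℝ := N₁ * ((Q ^ 24 : ℕ) : ℝ) * A with hHdef
  have hH0 : 0 ≤ H := by positivity
  have hH : ∀ i m, house ((p i).coeff m : K) ≤ H := by
    intro i m
    rw [hcoef]
    split_ifs with h
    · have := hξ2 (i, ⟨m, h⟩)
      rw [hcard2] at this
      exact this
    · have : house ((0 : 𝓞 K) : K) = 0 := by simp [house]
      rw [this]; exact hH0
  have hstart : ∀ k < T, ∀ l < T, ∀ s, 1 ≤ s → s ≤ Q ^ 2 →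
      bkV L δ a₁ a₂ s (((bkD1 L b₁) ^ k) (((bkD2 L b₂) ^ l) p)) = 0 := by
    intro k hk l hl s hs1 hs2
    have := congrFun hξ1 (⟨k, hk⟩, ⟨l, hl⟩, ⟨s - 1, by omega⟩)
    simp only [Matrix.mulVec, dotProduct, Pi.zero_apply, a] at this
    rw [← this, hpsum, map_sum, map_sum, map_sum]
    refine Finset.sum_congr rfl fun c _ => ?_
    rw [map_smul, map_smul, map_smul, smul_eq_mul, mul_comm, Nat.sub_add_cancel hs1]
  -- extrapolation
  have hB : ∀ j : ℕ, (3 ^ ((8 * N₀ + 3) * (L * Q ^ (3 + j))) * (((N₀ : ℝ) + 1) * L) ^ (2 * T) * H) ^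
      n < 3 ^ (Q ^ 10 * Q ^ (2 + j)) := by
    intro j
    have hNL : ((N₀ : ℝ) + 1) * L ≤ 3 ^ Q := by
      have : (((N₀ + 1) * Q ^ 8 : ℕ) : ℝ) ≤ ((3 ^ Q : ℕ) : ℝ) := by exact_mod_cast hQ3
      push_cast at this
      rw [hLdef]; push_cast; exact this
    have hNL2 : (((N₀ : ℝ) + 1) * L) ^ (2 * T) ≤ 3 ^ (46 * Q ^ (11 + j)) := by
      calc _ ≤ (3 ^ Q) ^ (2 * T) := pow_le_pow_left₀ (by positivity) hNL _
        _ = 3 ^ (46 * Q ^ 11) := by rw [← pow_mul, hTdef]; congr 1; ring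
        _ ≤ _ := by
          refine pow_le_pow_right₀ (by norm_num) (Nat.mul_le_mul_left _ ?_)
          exact Nat.pow_le_pow_right hQpos (by omega)
    have hLS : L * Q ^ (3 + j) = Q ^ (11 + j) := by rw [hLdef, ← pow_add]; congr 1; omega
    have hLS2 : L * Q ^ 2 ≤ Q ^ (11 + j) := by
      rw [hLdef, ← pow_add]; exact Nat.pow_le_pow_right hQpos (by omega)
    have hA2 : A ≤ 3 ^ ((8 * N₀ + 3) * Q ^ (11 + j)) * 3 ^ (46 * Q ^ (11 + j)) := by
      rw [hA]
      refine mul_le_mul (pow_le_pow_right₀ (by norm_num) (Nat.mul_le_mul_left _ hLS2)) hNL2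
        (by positivity) (by positivity)
    have hE1 : 1 ≤ Q ^ (11 + j) := Nat.one_le_pow _ _ hQpos
    have hN13 : (N₁ : ℝ) ≤ 3 ^ (N₁ * Q ^ (11 + j)) := (bk_le_three_pow N₁).trans
      (pow_le_pow_right₀ (by norm_num) (Nat.le_mul_of_pos_right _ hE1))
    have hQ24 : ((Q ^ 24 : ℕ) : ℝ) ≤ 3 ^ (3 * Q ^ (11 + j)) := by
      have e : Q ^ 24 = L ^ 3 := by rw [hLdef]; ring
      have hLE : L ≤ Q ^ (11 + j) := by
        rw [hLdef]; exact Nat.pow_le_pow_right hQpos (by omega)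
      rw [e, mul_comm 3, pow_mul]
      push_cast
      refine pow_le_pow_left₀ (by positivity) ((bk_le_three_pow L).trans ?_) _
      exact pow_le_pow_right₀ (by norm_num) hLE
    have htot : 3 ^ ((8 * N₀ + 3) * (L * Q ^ (3 + j))) * (((N₀ : ℝ) + 1) * L) ^ (2 * T) * H ≤
        3 ^ (N₂ * Q ^ (11 + j)) := by
      calc _ ≤ (3 : ℝ) ^ ((8 * N₀ + 3) * Q ^ (11 + j)) * 3 ^ (46 * Q ^ (11 + j)) *
            (3 ^ (N₁ * Q ^ (11 + j)) * 3 ^ (3 * Q ^ (11 + j)) *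
              (3 ^ ((8 * N₀ + 3) * Q ^ (11 + j)) * 3 ^ (46 * Q ^ (11 + j)))) := by
            rw [hLS, hHdef]
            gcongr
        _ = 3 ^ (N₂ * Q ^ (11 + j)) := by
            simp only [← pow_add]
            congr 1
            rw [hN₂]; ring
    calc _ ≤ ((3 : ℝ) ^ (N₂ * Q ^ (11 + j))) ^ n := pow_le_pow_left₀ (by positivity) htot _
      _ = 3 ^ (n * N₂ * Q ^ (11 + j)) := by rw [← pow_mul]; congr 1; ring
      _ < 3 ^ (Q ^ 10 * Q ^ (2 + j)) := by
          refine pow_lt_pow_right₀ (by norm_num) ?_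
          calc n * N₂ * Q ^ (11 + j) < Q * Q ^ (11 + j) := Nat.mul_lt_mul_of_pos_right hQ1 hE1
            _ = _ := by ring
  have hind : ∀ j : ℕ, j ≤ 22 → ∀ k < (23 - j) * Q ^ 10, ∀ l < (23 - j) * Q ^ 10, ∀ s, 1 ≤ s →
      s ≤ Q ^ (2 + j) → bkV L δ a₁ a₂ s (((bkD1 L b₁) ^ k) (((bkD2 L b₂) ^ l) p)) = 0 := by
    intro j
    induction j with
    | zero => intro _; exact hstart
    | succ j ih =>
      intro hj
      have e : (23 - (j + 1)) * Q ^ 10 + Q ^ 10 = (23 - j) * Q ^ 10 := by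
        have : 23 - j = (23 - (j + 1)) + 1 := by omega
        rw [this]; ring
      have := bk_step φ a₁ a₂ b₁ b₂ δ ℓ₁ ℓ₂ h₁ h₂ hδ N₀ hN hℓ L (Q ^ (2 + j)) (Q ^ (3 + j)) T
        (Q ^ 10) hL (Nat.one_le_pow _ _ hQpos) (Nat.pow_le_pow_right hQpos (by omega)) p hdeg H hH
        (hB j) ((23 - (j + 1)) * Q ^ 10) (by
          rw [e, hTdef]; exact Nat.mul_le_mul_right _ (by omega)) (by
          rw [e]; exact ih (by omega))
      rw [show 2 + (j + 1) = 3 + j by omega]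
      exact this
  refine hp0 (bk_zero_estimate L b₁ b₂ δ a₁ a₂ hδ0 ha₁ ha₂ p hdeg ?_)
  have hLT : L ≤ (23 - 22) * Q ^ 10 := by
    rw [hLdef]
    have := Nat.pow_le_pow_right hQpos (show 8 ≤ 10 by norm_num)
    omega
  intro k hk l hl s hs1 hs2
  refine hind 22 le_rfl k (by omega) l (by omega) s hs1 ?_
  have e : L ^ 3 = Q ^ (2 + 22) := by rw [hLdef]; ring
  omega
/-- Baker's theorem (inhomogeneous, two logarithms) for algebraic integers. -/
theorem bk_main' (a₁ a₂ b₁ b₂ δ ℓ₁ ℓ₂ : ℂ) (ha₁ : IsIntegral ℤ a₁) (ha₂ : IsIntegral ℤ a₂)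
    (hb₁ : IsIntegral ℤ b₁) (hb₂ : IsIntegral ℤ b₂) (hd : IsIntegral ℤ δ)
    (h₁ : Complex.exp ℓ₁ = a₁) (h₂ : Complex.exp ℓ₂ = a₂)
    (hδ : b₁ * ℓ₁ + b₂ * ℓ₂ = δ) : δ = 0 := by
  let s : Set ℂ := {a₁, a₂, b₁, b₂, δ}
  let K := IntermediateField.adjoin ℚ s
  have hs : ∀ x ∈ s, IsIntegral ℤ x := by
    rintro x (rfl | rfl | rfl | rfl | rfl) <;> assumption
  have hfs : Finite s := by
    have : s.Finite := by simp [s]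
    exact this
  have : FiniteDimensional ℚ K :=
    IntermediateField.finiteDimensional_adjoin fun x hx => (hs x hx).tower_top
  have : NumberField K := { to_charZero := inferInstance, to_finiteDimensional := this }
  have lift : ∀ x ∈ s, ∃ y : NumberField.RingOfIntegers K, ((y : K) : ℂ) = x := by
    intro x hx
    have hxK : x ∈ K := IntermediateField.subset_adjoin ℚ s hx
    have hi : IsIntegral ℤ (⟨x, hxK⟩ : K) := by
      have := hs x hx
      exact (isIntegral_algHom_iff (K.val.restrictScalars ℤ) K.val.injective).1 this
    exact ⟨⟨⟨x, hxK⟩, hi⟩, rfl⟩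
  obtain ⟨A₁, e1⟩ := lift a₁ (by simp [s])
  obtain ⟨A₂, e2⟩ := lift a₂ (by simp [s])
  obtain ⟨B₁, e3⟩ := lift b₁ (by simp [s])
  obtain ⟨B₂, e4⟩ := lift b₂ (by simp [s])
  obtain ⟨D, e5⟩ := lift δ (by simp [s])
  have := bk_main (K := K) (algebraMap K ℂ) A₁ A₂ B₁ B₂ D ℓ₁ ℓ₂ (h₁.trans e1.symm)
    (h₂.trans e2.symm) (by
      have h : ((B₁ : K) : ℂ) * ℓ₁ + ((B₂ : K) : ℂ) * ℓ₂ = ((D : K) : ℂ) := by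
        rw [e3, e4, e5]; exact hδ
      exact h)
  rw [← e5, this]
  simp

/-- **Transcendence of the error sum for `π`.**
The number `(√7/49) log((3−√7)/(3+√7)) − 3π/2 − 4/7` is transcendental over `ℚ`. -/
theorem transcendental_error_sum_pi :
    Transcendental ℚ
      (Real.sqrt 7 / 49 * Real.log ((3 - Real.sqrt 7) / (3 + Real.sqrt 7))
        - 3 * π / 2 - 4 / 7) := by
  intro halg
  set r : ℝ := Real.sqrt 7 with hr
  have hr2 : r * r = 7 := Real.mul_self_sqrt (by norm_num)
  have hr0 : 0 ≤ r := Real.sqrt_nonneg _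
  have hr3 : r < 3 := by nlinarith
  have hr25 : 7 / 3 < r := by nlinarith
  have hb : (3 - r) / (3 + r) = 8 - 3 * r := by
    rw [div_eq_iff (by positivity)]; nlinarith
  have hbpos : 0 < 8 - 3 * r := by rw [← hb]; exact div_pos (by linarith) (by linarith)
  rw [hb] at halg
  set lg : ℝ := Real.log (8 - 3 * r) with hlg
  have hlgneg : lg ≤ 0 := Real.log_nonpos hbpos.le (by linarith)
  -- the linear form times 49
  set D : ℝ := r * lg - 147 * π / 2 with hD
  have hDneg : D < 0 := by
    have := mul_nonneg hr0 (neg_nonneg.2 hlgneg)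
    have := Real.pi_pos
    rw [hD]; nlinarith
  have hDalg : IsAlgebraic ℚ D := by
    have e : D = ((49 : ℚ) : ℝ) * (r / 49 * lg - 3 * π / 2 - 4 / 7) + ((28 : ℚ) : ℝ) := by
      rw [hD]; push_cast; ring
    rw [e]
    exact ((isAlgebraic_algebraMap (49 : ℚ)).mul halg).add (isAlgebraic_algebraMap (28 : ℚ))
  have hDZ : IsAlgebraic ℤ D := (IsFractionRing.isAlgebraic_iff ℤ ℚ ℝ).2 hDalg
  obtain ⟨d, hd0, hdint⟩ := hDZ.exists_integral_multiple
  have hdC : IsIntegral ℤ (((d : ℝ) * D : ℝ) : ℂ) := by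
    have h := hdint.map (Complex.ofRealAm.restrictScalars ℤ)
    rw [zsmul_eq_mul] at h
    exact h
  have hrint : IsIntegral ℤ (r : ℂ) := by
    refine IsIntegral.of_pow (n := 2) (by norm_num) ?_
    have : (r : ℂ) ^ 2 = ((7 : ℤ) : ℂ) := by
      rw [sq, ← Complex.ofReal_mul, hr2]; simp
    rw [this]; exact isIntegral_algebraMap (R := ℤ) (x := 7)
  have hIint : IsIntegral ℤ Complex.I := by
    refine IsIntegral.of_pow (n := 4) (by norm_num) ?_
    rw [Complex.I_pow_four]; exact isIntegral_one
  have hZint : ∀ m : ℤ, IsIntegral ℤ (m : ℂ) := fun m => isIntegral_algebraMap (R := ℤ) (x := m)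
  have key := bk_main' (((8 : ℤ) : ℂ) - ((3 : ℤ) : ℂ) * (r : ℂ)) Complex.I ((d : ℂ) * r)
    ((d : ℂ) * (((147 : ℤ) : ℂ) * Complex.I)) (((d : ℝ) * D : ℝ) : ℂ) (lg : ℂ)
    ((π : ℂ) / 2 * Complex.I)
    ((hZint 8).sub ((hZint 3).mul hrint)) hIint ((hZint d).mul hrint)
    ((hZint d).mul ((hZint 147).mul hIint)) hdC
    (by
      rw [← Complex.ofReal_exp, hlg, Real.exp_log hbpos]; push_cast; ring)
    Complex.exp_pi_div_two_mul_I
    (by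
      rw [hD]; push_cast
      linear_combination ((d : ℂ) * 147 * (π : ℂ) / 2) * Complex.I_mul_I)
  have key2 : (d : ℝ) * D = 0 := by exact_mod_cast key
  rcases mul_eq_zero.1 key2 with h | h
  · exact hd0 (by exact_mod_cast h)
  · linarith
end
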